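/- arXiv:2012.05755 — 7 statements merged into one kernel-verified Lean document; each statement's English description precedes it below -/
import Mathlib

section
/- Let r:[0,1]→[0,∞) be absolutely continuous with r'(R)>0 a.e. and r(R)>0 for R∈(0,1]. Define u(ρ)=r(ρ^{1/3})³ for ρ∈(0,1]. Then u is absolutely continuous on compact subintervals of (0,1] with u'(ρ)=δ_r(ρ^{1/3}) for a.e. ρ∈(0,1), and for every measurable g:(0,∞)→[0,∞] one has ∫₀¹ g(u'(ρ)) dρ = 3∫₀¹ g(δ_r(R)) R² dR (equality in [0,∞]). -/
open MeasureTheory Real Set Filter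
open scoped ENNReal

/-- `δ_r(R) = r'(R) (r(R)/R)²`. -/
noncomputable def deltaR (r r' : ℝ → ℝ) (R : ℝ) : ℝ := r' R * (r R / R) ^ 2


lemma cbrt_cube {R : ℝ} (hR : 0 ≤ R) : (R ^ 3) ^ ((1:ℝ)/3) = R := by
  rw [← Real.rpow_natCast, ← Real.rpow_mul hR]; norm_num

lemma cube_cbrt {x : ℝ} (hx : 0 ≤ x) : (x ^ ((1:ℝ)/3)) ^ 3 = x := by
  rw [← Real.rpow_natCast, ← Real.rpow_mul hx]; norm_num

lemma cube_image {A B : ℝ} (hA : 0 ≤ A) : (fun R : ℝ => R ^ 3) '' Ioo A B = Ioo (A ^ 3) (B ^ 3) := by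
  ext y
  constructor
  · rintro ⟨R, ⟨h1, h2⟩, rfl⟩
    exact ⟨pow_lt_pow_left₀ h1 hA (by norm_num), pow_lt_pow_left₀ h2 (hA.trans h1.le) (by norm_num)⟩
  · rintro ⟨h1, h2⟩
    have hy : 0 ≤ y := (pow_nonneg hA 3).trans h1.le
    have hc := cube_cbrt hy
    have hc0 : 0 ≤ y ^ ((1:ℝ)/3) := Real.rpow_nonneg hy _
    refine ⟨y ^ ((1:ℝ)/3), ⟨?_, ?_⟩, hc⟩
    · rw [← hc] at h1
      exact lt_of_pow_lt_pow_left₀ 3 hc0 h1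
    · rw [← hc] at h2
      have hB : 0 ≤ B := by
        by_contra hB
        push Not at hB
        have : B ^ 3 < 0 := Odd.pow_neg (by decide) hB
        have := pow_nonneg hc0 3
        linarith
      exact lt_of_pow_lt_pow_left₀ 3 hB h2

lemma cube_inj {A B : ℝ} (hA : 0 ≤ A) : InjOn (fun R : ℝ => R ^ 3) (Ioo A B) := by
  intro x hx y hy h
  have := congrArg (fun t : ℝ => t ^ ((1:ℝ)/3)) h
  simpa only [cbrt_cube (hA.trans hx.1.le), cbrt_cube (hA.trans hy.1.le)] using this

lemma cube_deriv (s : Set ℝ) (x : ℝ) :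
    HasDerivWithinAt (fun R : ℝ => R ^ 3) (3 * x ^ 2) s x := by
  simpa using (hasDerivAt_pow 3 x).hasDerivWithinAt

theorem stmt3 (r r' : ℝ → ℝ)
    (hInt : IntervalIntegrable r' volume 0 1)
    (hFTC : ∀ x ∈ Icc (0:ℝ) 1, r x = r 0 + ∫ t in (0:ℝ)..x, r' t)
    (hr'pos : ∀ᵐ R ∂volume.restrict (Ioo (0:ℝ) 1), 0 < r' R)
    (hr0 : 0 ≤ r 0) (hrpos : ∀ R ∈ Ioc (0:ℝ) 1, 0 < r R) :
    -- `u(ρ) = r(ρ^{1/3})³` is absolutely continuous on compact subintervals of `(0,1]`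
    -- with `u' = δ_r(ρ^{1/3})` a.e., and the change of variables identity holds.
    (∀ a ∈ Ioc (0:ℝ) 1,
      IntervalIntegrable (fun t => deltaR r r' (t ^ ((1:ℝ)/3))) volume a 1 ∧
      ∀ x ∈ Icc a 1,
        r (x ^ ((1:ℝ)/3)) ^ 3 =
          r (a ^ ((1:ℝ)/3)) ^ 3 + ∫ t in a..x, deltaR r r' (t ^ ((1:ℝ)/3))) ∧
    (∀ᵐ ρ ∂volume.restrict (Ioo (0:ℝ) 1),
      HasDerivAt (fun σ => r (σ ^ ((1:ℝ)/3)) ^ 3) (deltaR r r' (ρ ^ ((1:ℝ)/3))) ρ) ∧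
    (∀ g : ℝ → ℝ≥0∞, Measurable g →
      (∫⁻ ρ in Ioo (0:ℝ) 1, g (deltaR r r' (ρ ^ ((1:ℝ)/3)))) =
        3 * ∫⁻ R in Ioo (0:ℝ) 1, g (deltaR r r' R) * ENNReal.ofReal (R ^ 2)) := by
  set F : ℝ → ℝ := fun x => r 0 + ∫ t in (0:ℝ)..x, r' t with hF
  have hderF : ∀ᵐ x, x ∈ Icc (0:ℝ) 1 → HasDerivAt F (r' x) x := by
    filter_upwards [hInt.ae_hasDerivAt_integral] with x hx hx1
    rw [uIcc_of_le zero_le_one] at hx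
    exact (hx hx1 0 (by simp)).const_add _
  have hFac0 : AbsolutelyContinuousOnInterval F 0 1 := by
    have h1 : AbsolutelyContinuousOnInterval (fun _ : ℝ => r 0) 0 1 :=
      ContDiffOn.absolutelyContinuousOnInterval contDiffOn_const
    exact h1.add (hInt.absolutelyContinuousOnInterval_intervalIntegral (by simp))
  have hF3 : AbsolutelyContinuousOnInterval (fun x => F x ^ 3) 0 1 := by
    have := (hFac0.mul hFac0).mul hFac0
    refine (congrArg (fun f => AbsolutelyContinuousOnInterval f 0 1) ?_).mp this
    funext x
    simp only [Pi.mul_apply]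
    ring
  have hd3 : ∀ᵐ x, x ∈ Icc (0:ℝ) 1 → deriv (fun x => F x ^ 3) x = 3 * F x ^ 2 * r' x := by
    filter_upwards [hderF] with x hx hx1
    simpa using ((hx hx1).fun_pow 3).deriv
  -- pointwise algebra after substitution
  have hpt : ∀ R ∈ Ioo (0:ℝ) 1, |3 * R ^ 2| • deltaR r r' ((R ^ 3) ^ ((1:ℝ)/3))
      = 3 * F R ^ 2 * r' R := by
    intro R hR
    have hR0 : R ≠ 0 := hR.1.ne'
    rw [cbrt_cube hR.1.le, abs_of_nonneg (by positivity), deltaR,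
      hFTC R ⟨hR.1.le, hR.2.le⟩, smul_eq_mul]
    change _ = 3 * (r 0 + ∫ t in (0:ℝ)..R, r' t) ^ 2 * r' R
    field_simp
  have hroot : ∀ x ∈ Ioc (0:ℝ) 1, x ^ ((1:ℝ)/3) ∈ Ioc (0:ℝ) 1 := fun x hx =>
    ⟨Real.rpow_pos_of_pos hx.1 _, Real.rpow_le_one hx.1.le hx.2 (by norm_num)⟩
  have hptae : ∀ A B : ℝ, 0 ≤ A → B ≤ 1 →
      (fun R => |3 * R ^ 2| • deltaR r r' ((R ^ 3) ^ ((1:ℝ)/3)))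
        =ᵐ[volume.restrict (Ioo A B)] deriv (fun x => F x ^ 3) := by
    intro A B hA hB
    rw [Filter.EventuallyEq, ae_restrict_iff' measurableSet_Ioo]
    filter_upwards [hd3] with x hx hxm
    have hx' : x ∈ Ioo (0:ℝ) 1 := ⟨hA.trans_lt hxm.1, hxm.2.trans_le hB⟩
    rw [hx ⟨hx'.1.le, hx'.2.le⟩, hpt x hx']
  refine ⟨?_, ?_, ?_⟩
  · intro a ha
    have hA := hroot a ha
    set A := a ^ ((1:ℝ)/3) with hAdef
    have hA3 : A ^ 3 = a := cube_cbrt ha.1.le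
    have hF3A : AbsolutelyContinuousOnInterval (fun x => F x ^ 3) A 1 :=
      hF3.mono (by rw [uIcc_of_le hA.2, uIcc_of_le zero_le_one]; exact Icc_subset_Icc_left hA.1.le)
    constructor
    · have h1 := hF3A.intervalIntegrable_deriv
      rw [intervalIntegrable_iff_integrableOn_Ioo_of_le hA.2] at h1
      rw [intervalIntegrable_iff_integrableOn_Ioo_of_le ha.2]
      have h2 : Ioo a 1 = (fun R : ℝ => R ^ 3) '' Ioo A 1 := by
        rw [cube_image hA.1.le, hA3, one_pow]
      rw [h2, integrableOn_image_iff_integrableOn_abs_deriv_smul measurableSet_Ioo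
        (fun x _ => cube_deriv _ x) (cube_inj hA.1.le)]
      exact h1.congr (hptae A 1 hA.1.le le_rfl).symm
    · intro x hx
      have hx0 : x ∈ Ioc (0:ℝ) 1 := ⟨ha.1.trans_le hx.1, hx.2⟩
      have hX := hroot x hx0
      have hAX : A ≤ x ^ ((1:ℝ)/3) := Real.rpow_le_rpow ha.1.le hx.1 (by norm_num)
      set X := x ^ ((1:ℝ)/3) with hXdef
      have hX3 : X ^ 3 = x := cube_cbrt hx0.1.le
      have h2 : Ioo a x = (fun R : ℝ => R ^ 3) '' Ioo A X := by
        rw [cube_image hA.1.le, hA3, hX3]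
      have hF3X : AbsolutelyContinuousOnInterval (fun x => F x ^ 3) A X :=
        hF3.mono (by
          rw [uIcc_of_le hAX, uIcc_of_le zero_le_one]; exact Icc_subset_Icc hA.1.le hX.2)
      have h3 := hF3X.integral_deriv_eq_sub
      rw [intervalIntegral.integral_of_le hAX, integral_Ioc_eq_integral_Ioo] at h3
      rw [intervalIntegral.integral_of_le hx.1, integral_Ioc_eq_integral_Ioo, h2,
        integral_image_eq_integral_abs_deriv_smul measurableSet_Ioo
        (fun x _ => cube_deriv _ x) (cube_inj hA.1.le),
        integral_congr_ae (hptae A X hA.1.le hX.2), h3,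
        hFTC X ⟨hX.1.le, hX.2⟩, hFTC A ⟨hA.1.le, hA.2⟩]
      simp only [hF]
      ring
  · rw [ae_restrict_iff' measurableSet_Ioo]
    have hnull : volume {x | ¬ (x ∈ Icc (0:ℝ) 1 → HasDerivAt F (r' x) x)} = 0 := hderF
    have himg := addHaar_image_eq_zero_of_differentiableOn_of_addHaar_eq_zero volume
      (f := fun R : ℝ => R ^ 3) (by fun_prop) hnull
    filter_upwards [measure_eq_zero_iff_ae_notMem.mp himg] with ρ hρ hm
    have hc := cube_cbrt hm.1.le
    have hR0 : 0 < ρ ^ ((1:ℝ)/3) := Real.rpow_pos_of_pos hm.1 _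
    have hR1 : ρ ^ ((1:ℝ)/3) < 1 := Real.rpow_lt_one hm.1.le hm.2 (by norm_num)
    have hD : HasDerivAt F (r' (ρ ^ ((1:ℝ)/3))) (ρ ^ ((1:ℝ)/3)) := by
      by_contra hcon
      exact hρ ⟨_, fun h => hcon (h ⟨hR0.le, hR1.le⟩), hc⟩
    have hDr : HasDerivAt r (r' (ρ ^ ((1:ℝ)/3))) (ρ ^ ((1:ℝ)/3)) := by
      refine hD.congr_of_eventuallyEq ?_
      filter_upwards [Ioo_mem_nhds hR0 hR1] with y hy
      exact hFTC y ⟨hy.1.le, hy.2.le⟩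
    have hp : HasDerivAt (fun σ : ℝ => σ ^ ((1:ℝ)/3)) (1/3 * ρ ^ ((1:ℝ)/3 - 1)) ρ :=
      Real.hasDerivAt_rpow_const (Or.inl hm.1.ne')
    have hcomp := (hDr.comp ρ hp).pow 3
    refine hcomp.congr_deriv ?_
    have he : ρ ^ ((1:ℝ)/3 - 1) = ((ρ ^ ((1:ℝ)/3)) ^ 2)⁻¹ := by
      rw [← Real.rpow_natCast, ← Real.rpow_mul hm.1.le, ← Real.rpow_neg hm.1.le]
      norm_num
    rw [he, deltaR]
    simp only [Function.comp]
    field_simp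
    push_cast
    ring
  · intro g _
    have h2 : Ioo (0:ℝ) 1 = (fun R : ℝ => R ^ 3) '' Ioo 0 1 := by
      rw [cube_image le_rfl]; norm_num
    conv_lhs => rw [h2]
    rw [lintegral_image_eq_lintegral_abs_deriv_mul measurableSet_Ioo
        (fun x _ => cube_deriv _ x) (cube_inj le_rfl), ← lintegral_const_mul' _ _ (by norm_num)]
    refine setLIntegral_congr_fun measurableSet_Ioo ?_
    intro R hR
    simp only
    rw [cbrt_cube hR.1.le, abs_of_nonneg (by positivity), ENNReal.ofReal_mul (by norm_num)]
    rw [show ENNReal.ofReal 3 = 3 by norm_num]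
    ring
end

section
/- Assume 0<k0≤ρ0(R)≤k1 on [0,1], that Φ is continuous, that Φ satisfies the growth condition (G) with (H1)–(H3), and that for each fixed R the map is polyconvex in the sense that Φ(R,v1,v2,v3)=g(R,v1,v2,v3,v1v2v3) for some continuous g that is convex in its last four arguments. Then for every λ>0 there exists r_λ ∈ A_λ such that I(r_λ) = inf { I(r) : r ∈ A_λ }. -/
open MeasureTheory Real Set Filter
open scoped ENNReal

/-- `M_R = 4π ∫₀^R ρ0(u) u² du`. -/
noncomputable def Mfun (ρ0 : ℝ → ℝ) (R : ℝ) : ℝ := 4 * π * ∫ u in (0:ℝ)..R, ρ0 u * u ^ 2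

/-- Mechanical energy `I_mec(r) = ∫₀¹ Φ(R, r'(R), r(R)/R, r(R)/R) R² dR`. -/
noncomputable def Imec (Φ : ℝ → ℝ → ℝ → ℝ → ℝ) (r r' : ℝ → ℝ) : ℝ :=
  ∫ R in Ioo (0:ℝ) 1, Φ R (r' R) (r R / R) (r R / R) * R ^ 2

/-- Gravitational potential energy `I_pot(r) = ∫₀¹ ρ0(R) M_R r(R)⁻¹ R² dR`. -/
noncomputable def Ipot (ρ0 : ℝ → ℝ) (r : ℝ → ℝ) : ℝ :=
  ∫ R in Ioo (0:ℝ) 1, ρ0 R * Mfun ρ0 R * (r R)⁻¹ * R ^ 2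

/-- Total energy `I = I_mec − I_pot`. -/
noncomputable def Ifun (Φ : ℝ → ℝ → ℝ → ℝ → ℝ) (ρ0 : ℝ → ℝ) (r r' : ℝ → ℝ) : ℝ :=
  Imec Φ r r' - Ipot ρ0 r

/-- The admissible set `A_λ`. -/
def Adm (Φ : ℝ → ℝ → ℝ → ℝ → ℝ) (lam : ℝ) (r r' : ℝ → ℝ) : Prop :=
  IntervalIntegrable r' volume 0 1 ∧
  (∀ x ∈ Icc (0:ℝ) 1, r x = r 0 + ∫ t in (0:ℝ)..x, r' t) ∧
  (∀ᵐ R ∂volume.restrict (Ioo (0:ℝ) 1), 0 < r' R) ∧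
  r 1 = lam ∧ 0 ≤ r 0 ∧
  IntegrableOn (fun R => Φ R (r' R) (r R / R) (r R / R) * R ^ 2) (Ioo (0:ℝ) 1)


open scoped Topology

lemma helly_aux (f : ℕ → ℝ → ℝ) (B : ℝ) (hm : ∀ n, Monotone (f n))
    (hb : ∀ n x, f n x ∈ Icc 0 B) :
    ∃ (σ : ℕ → ℕ) (G : ℝ → ℝ), StrictMono σ ∧ Monotone G ∧ (∀ x, G x ∈ Icc 0 B) ∧
      ∀ᵐ x, Tendsto (fun n => f (σ n) x) atTop (𝓝 (G x)) := by
  have hc : IsCompact (Set.univ.pi (fun _ : ℚ => Icc (0:ℝ) B)) :=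
    isCompact_univ_pi fun _ => isCompact_Icc
  obtain ⟨L, hL, σ, hσ, hlim⟩ := hc.tendsto_subseq (x := fun n => fun q : ℚ => f n q)
    (fun n q _ => hb n q)
  rw [tendsto_pi_nhds] at hlim
  have hL' : ∀ q, L q ∈ Icc 0 B := fun q => hL q (mem_univ _)
  have hLm : Monotone L := fun p q hpq => le_of_tendsto_of_tendsto' (hlim p) (hlim q)
    (fun n => hm _ (by exact_mod_cast hpq))
  let G : ℝ → ℝ := fun x => sSup (L '' {q : ℚ | (q:ℝ) < x})
  have hne : ∀ x : ℝ, (L '' {q : ℚ | (q:ℝ) < x}).Nonempty := fun x => by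
    obtain ⟨q, hq⟩ := exists_rat_lt x
    exact ⟨L q, q, hq, rfl⟩
  have hbd : ∀ x : ℝ, BddAbove (L '' {q : ℚ | (q:ℝ) < x}) := fun x =>
    ⟨B, by rintro _ ⟨q, _, rfl⟩; exact (hL' q).2⟩
  have hGm : Monotone G := fun x y hxy =>
    csSup_le_csSup (hbd y) (hne x) (image_mono fun q hq => lt_of_lt_of_le hq hxy)
  have hGle : ∀ (q : ℚ) (x : ℝ), (q:ℝ) < x → L q ≤ G x := fun q x hq =>
    le_csSup (hbd x) ⟨q, hq, rfl⟩
  refine ⟨σ, G, hσ, hGm, fun x => ⟨?_, ?_⟩, ?_⟩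
  · obtain ⟨q, hq⟩ := exists_rat_lt x
    exact (hL' q).1.trans (hGle q x hq)
  · exact csSup_le (hne x) (by rintro _ ⟨q, _, rfl⟩; exact (hL' q).2)
  · have hcount := hGm.countable_not_continuousAt
    have : ∀ᵐ x, x ∉ {x | ¬ ContinuousAt G x} := hcount.ae_notMem volume
    filter_upwards [this] with x hx
    have hx : ContinuousAt G x := by simpa using hx
    rw [tendsto_order]
    constructor
    · intro a ha
      obtain ⟨_, ⟨q, hq, rfl⟩, hq2⟩ := exists_lt_of_lt_csSup (hne x) ha
      filter_upwards [(hlim q).eventually (lt_mem_nhds hq2)] with n hn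
      exact lt_of_lt_of_le hn (hm _ (le_of_lt hq))
    · intro a ha
      have h1 : ∀ᶠ y in 𝓝 x, G y < a := hx.eventually (gt_mem_nhds ha)
      have h2 : ∃ y > x, G y < a := by
        have h3 : ∀ᶠ y in 𝓝[>] x, G y < a := h1.filter_mono nhdsWithin_le_nhds
        obtain ⟨y, hy1, hy2⟩ := (h3.and self_mem_nhdsWithin).exists
        exact ⟨y, hy2, hy1⟩
      obtain ⟨y, hy, hya⟩ := h2
      obtain ⟨q, hq1, hq2⟩ := exists_rat_btwn hy
      have : L q < a := lt_of_le_of_lt (hGle q y hq2) hya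
      filter_upwards [(hlim q).eventually (gt_mem_nhds this)] with n hn
      exact lt_of_le_of_lt (hm _ (le_of_lt hq1)) hn

lemma dom_aux (a : ℕ → ℝ) (l B : ℝ) (hb : ∀ n, |a n - l| ≤ B) :
    ∃ w : ℕ → ℝ, Antitone w ∧ (∀ n i, n ≤ i → |a i - l| ≤ w n) ∧
      (Tendsto a atTop (𝓝 l) → Tendsto w atTop (𝓝 0)) := by
  have hbd : ∀ n, BddAbove (range fun i => |a (n + i) - l|) := fun n =>
    ⟨B, by rintro _ ⟨i, rfl⟩; exact hb _⟩
  have hle : ∀ n i, n ≤ i → |a i - l| ≤ ⨆ j, |a (n + j) - l| := fun n i hni => by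
    have := le_ciSup (hbd n) (i - n)
    simpa [Nat.add_sub_cancel' hni] using this
  refine ⟨fun n => ⨆ i, |a (n + i) - l|, fun n m hnm => ciSup_le fun i => hle n _ (by omega),
    hle, fun h => ?_⟩
  rw [Metric.tendsto_atTop] at h ⊢
  intro ε hε
  obtain ⟨N, hN⟩ := h (ε / 2) (by linarith)
  refine ⟨N, fun n hn => ?_⟩
  have h1 : ⨆ i, |a (n + i) - l| ≤ ε / 2 := ciSup_le fun i => by
    have := hN (n + i) (by omega)
    rw [Real.dist_eq] at this; exact this.le
  have h0 : 0 ≤ ⨆ i, |a (n + i) - l| := Real.iSup_nonneg fun i => abs_nonneg _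
  rw [Real.dist_eq, sub_zero, abs_of_nonneg h0]; linarith

lemma komlos_exp (μ : Measure ℝ) [IsProbabilityMeasure μ] (V : ℕ → Set (ℝ → ℝ))
    (hV : Antitone V) (hne : ∀ n, (V n).Nonempty)
    (hmeas : ∀ n, ∀ v ∈ V n, Measurable v) (hpos : ∀ n, ∀ v ∈ V n, ∀ x, 0 ≤ v x)
    (hmid : ∀ n, ∀ v ∈ V n, ∀ w ∈ V n, (fun x => (v x + w x) / 2) ∈ V n) :
    ∃ v : ℕ → ℝ → ℝ, (∀ n, v n ∈ V n) ∧
      ∀ᵐ x ∂μ, ∃ l, Tendsto (fun n => exp (- v n x / 2)) atTop (𝓝 l) := by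
  let J : (ℝ → ℝ) → ℝ := fun v => ∫ x, exp (- v x) ∂μ
  have hint : ∀ n, ∀ v ∈ V n, Integrable (fun x => exp (- v x)) μ := fun n v hv => by
    refine Integrable.of_bound ((hmeas n v hv).neg.exp.aestronglyMeasurable) 1 (ae_of_all _ fun x => ?_)
    rw [Real.norm_eq_abs, abs_of_pos (exp_pos _)]
    exact exp_le_one_iff.2 (by linarith [hpos n v hv x])
  have hJ0 : ∀ v, 0 ≤ J v := fun v => integral_nonneg fun x => (exp_pos _).le
  have hJ1 : ∀ n, ∀ v ∈ V n, J v ≤ 1 := fun n v hv => by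
    have := integral_mono (hint n v hv) (integrable_const (1:ℝ)) (fun x => by
      exact exp_le_one_iff.2 (by linarith [hpos n v hv x]))
    simpa using this
  let α : ℕ → ℝ := fun n => sInf (J '' V n)
  have hbdd : ∀ n, BddBelow (J '' V n) := fun n => ⟨0, by rintro _ ⟨v, _, rfl⟩; exact hJ0 v⟩
  have hαle : ∀ n, ∀ v ∈ V n, α n ≤ J v := fun n v hv => csInf_le (hbdd n) ⟨v, hv, rfl⟩
  have hαm : Monotone α := fun n m hnm =>
    csInf_le_csInf (hbdd n) ((hne m).image J) (image_mono (hV hnm))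
  have hα1 : BddAbove (range α) := ⟨1, by
    rintro _ ⟨n, rfl⟩
    obtain ⟨v, hv⟩ := hne n
    exact (hαle n v hv).trans (hJ1 n v hv)⟩
  set A := ⨆ n, α n with hA
  have hαA : ∀ n, α n ≤ A := le_ciSup hα1
  let δ : ℕ → ℝ := fun k => (1/4)^k / 4
  have hδ : ∀ k, 0 < δ k := fun k => by positivity
  have hδm : ∀ {k l}, k ≤ l → δ l ≤ δ k := fun {k l} hkl => by
    simp only [δ]
    have : ((1:ℝ)/4)^l ≤ (1/4)^k := pow_le_pow_of_le_one (by norm_num) (by norm_num) hkl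
    linarith
  have hch : ∀ k, ∃ n, k ≤ n ∧ A - δ k ≤ α n ∧ ∃ v ∈ V n, J v ≤ A + δ k := by
    intro k
    obtain ⟨n, hn⟩ := exists_lt_of_lt_ciSup (show A - δ k < ⨆ n, α n by linarith [hδ k])
    refine ⟨max n k, le_max_right _ _, hn.le.trans (hαm (le_max_left _ _)), ?_⟩
    obtain ⟨_, ⟨v, hv, rfl⟩, hlt⟩ := exists_lt_of_csInf_lt ((hne (max n k)).image J)
      (show α (max n k) < α (max n k) + δ k by linarith [hδ k])
    exact ⟨v, hv, by linarith [hαA (max n k)]⟩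
  choose N hN1 hN2 v hv hvJ using hch
  refine ⟨v, fun n => hV (hN1 n) (hv n), ?_⟩
  have hvm : ∀ n, Measurable (fun x => exp (- v n x / 2)) := fun n =>
    ((hmeas _ _ (hv n)).neg.div_const 2).exp
  have key : ∀ k n m, k ≤ n → k ≤ m →
      ∫ x, (exp (- v n x / 2) - exp (- v m x / 2))^2 ∂μ ≤ (1/4)^k := by
    intro k n m hn hm
    have hvn : v n ∈ V (min (N n) (N m)) := hV (min_le_left _ _) (hv n)
    have hvm' : v m ∈ V (min (N n) (N m)) := hV (min_le_right _ _) (hv m)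
    have hmd := hmid _ _ hvn _ hvm'
    have h1 := hαle _ _ hmd
    have h2 : A - δ k ≤ α (min (N n) (N m)) := by
      rcases le_total (N n) (N m) with h | h
      · rw [min_eq_left h]; linarith [hN2 n, hδm hn]
      · rw [min_eq_right h]; linarith [hN2 m, hδm hm]
    have h3 : ∫ x, (exp (- v n x / 2) - exp (- v m x / 2))^2 ∂μ
        = J (v n) + J (v m) - 2 * J (fun x => (v n x + v m x)/2) := by
      simp only [J]
      have hs : Integrable (fun x => exp (- v n x) + exp (- v m x)) μ :=
        (hint _ _ hvn).add (hint _ _ hvm')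
      rw [← integral_add (hint _ _ hvn) (hint _ _ hvm'), ← integral_const_mul,
        ← integral_sub hs ((hint _ _ hmd).const_mul 2)]
      congr 1
      ext x
      have e1 : exp (- v n x) = exp (- v n x / 2)^2 := by rw [← exp_nat_mul]; congr 1; push_cast; ring
      have e2 : exp (- v m x) = exp (- v m x / 2)^2 := by rw [← exp_nat_mul]; congr 1; push_cast; ring
      have e3 : exp (- ((v n x + v m x)/2)) = exp (- v n x / 2) * exp (- v m x / 2) := by
        rw [← exp_add]; congr 1; ring
      rw [e1, e2, e3]; ring
    have h4 := hvJ n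
    have h5 := hvJ m
    have h6 := hδm hn
    have h7 := hδm hm
    have h8 : δ k = (1/4)^k/4 := rfl
    rw [h3]; linarith
  refine Lp.ae_tendsto_of_cauchy_eLpNorm (p := 1) (B := fun k => ENNReal.ofReal (3 * (1/2)^k))
    (fun n => (hvm n).aestronglyMeasurable) le_rfl ?_ ?_
  · rw [← ENNReal.ofReal_tsum_of_nonneg (fun n => by positivity)]
    · exact ENNReal.ofReal_ne_top
    · exact (summable_geometric_of_lt_one (by norm_num) (by norm_num)).mul_left 3
  · intro k n m hn hm
    have hi2 : Integrable (fun x => (exp (- v n x / 2) - exp (- v m x / 2))^2) μ := by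
      refine Integrable.of_bound (((hvm n).sub (hvm m)).pow_const 2).aestronglyMeasurable 1
        (ae_of_all _ fun x => ?_)
      have a1 := exp_pos (- v n x / 2)
      have a2 := exp_pos (- v m x / 2)
      have a3 : exp (- v n x / 2) ≤ 1 := exp_le_one_iff.2 (by linarith [hpos _ _ (hv n) x])
      have a4 : exp (- v m x / 2) ≤ 1 := exp_le_one_iff.2 (by linarith [hpos _ _ (hv m) x])
      rw [Real.norm_eq_abs, abs_of_nonneg (sq_nonneg _)]
      nlinarith
    have hi1 : Integrable (fun x => 2^k * (exp (- v n x / 2) - exp (- v m x / 2))^2 + (1/2)^k) μ :=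
      (hi2.const_mul _).add (integrable_const _)
    have hpt : ∀ a : ℝ, |a| ≤ 2^k * a^2 + (1/2)^k := by
      intro a
      have h2 : (2:ℝ)^k * (1/2)^k = 1 := by rw [← mul_pow]; norm_num
      have hp : (0:ℝ) < 2^k := by positivity
      have hq : (0:ℝ) < (1/2)^k := by positivity
      have h3 : 0 ≤ 2^k * (|a| - (1/2)^k)^2 := by positivity
      have h4 : 2^k * (|a| - (1/2)^k)^2 = 2^k * a^2 - 2 * (2^k * (1/2)^k) * |a| + (2^k*(1/2)^k) * (1/2)^k := by
        rw [← sq_abs a]; ring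
      rw [h2] at h4
      have := abs_nonneg a
      linarith
    have hi0 : Integrable (fun x => exp (- v n x / 2) - exp (- v m x / 2)) μ := by
      refine hi1.mono' ((hvm n).sub (hvm m)).aestronglyMeasurable (ae_of_all _ fun x => hpt _)
    rw [eLpNorm_one_eq_lintegral_enorm]
    simp only [Pi.sub_apply]
    rw [← ofReal_integral_norm_eq_lintegral_enorm hi0]
    apply (ENNReal.ofReal_lt_ofReal_iff (by positivity)).2
    have h1 := integral_mono hi0.norm hi1 (fun x => hpt _)
    rw [integral_add (hi2.const_mul _) (integrable_const _), integral_const_mul] at h1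
    simp only [integral_const, probReal_univ, smul_eq_mul, one_mul] at h1
    have h2 := mul_le_mul_of_nonneg_left (key k n m hn hm) (show (0:ℝ) ≤ 2^k by positivity)
    have h3 : (2:ℝ)^k * (1/4)^k = (1/2)^k := by rw [← mul_pow]; norm_num
    have hq : (0:ℝ) < (1/2)^k := by positivity
    linarith

lemma komlos_aux (μ : Measure ℝ) [IsProbabilityMeasure μ] (V : ℕ → Set (ℝ → ℝ)) (B : ℝ)
    (hV : Antitone V) (hne : ∀ n, (V n).Nonempty)
    (hmeas : ∀ n, ∀ v ∈ V n, Measurable v) (hpos : ∀ n, ∀ v ∈ V n, ∀ x, 0 ≤ v x)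
    (hint : ∀ n, ∀ v ∈ V n, Integrable v μ ∧ ∫ x, v x ∂μ ≤ B)
    (hmid : ∀ n, ∀ v ∈ V n, ∀ w ∈ V n, (fun x => (v x + w x) / 2) ∈ V n) :
    ∃ (v : ℕ → ℝ → ℝ) (g : ℝ → ℝ), (∀ n, v n ∈ V n) ∧ Measurable g ∧
      ∀ᵐ x ∂μ, Tendsto (fun n => v n x) atTop (𝓝 (g x)) := by
  obtain ⟨v, hv, hl⟩ := komlos_exp μ V hV hne hmeas hpos hmid
  have hfat := lintegral_liminf_le (μ := μ) (u := atTop) (f := fun n x => ENNReal.ofReal (v n x))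
    (fun n => (hmeas n _ (hv n)).ennreal_ofReal)
  have hfin : ∫⁻ x, liminf (fun n => ENNReal.ofReal (v n x)) atTop ∂μ ≠ ⊤ := by
    refine ne_top_of_le_ne_top (b := ENNReal.ofReal B) ENNReal.ofReal_ne_top (hfat.trans ?_)
    refine liminf_le_of_frequently_le' (Eventually.frequently (Eventually.of_forall fun n => ?_))
    rw [← ofReal_integral_eq_lintegral_ofReal (hint n _ (hv n)).1 (ae_of_all _ (hpos n _ (hv n)))]
    exact ENNReal.ofReal_le_ofReal (hint n _ (hv n)).2
  have hae := ae_lt_top (Measurable.liminf (fun n => (hmeas n _ (hv n)).ennreal_ofReal)) hfin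
  have hex : ∀ᵐ x ∂μ, ∃ l, Tendsto (fun n => v n x) atTop (𝓝 l) := by
    filter_upwards [hl, hae] with x ⟨l, hl⟩ hx
    have hl0 : 0 ≤ l := ge_of_tendsto' hl fun n => (exp_pos _).le
    rcases hl0.eq_or_lt with h0 | h0
    · exfalso
      have h1 : Tendsto (fun n => exp (- v n x / 2)) atTop (𝓝[>] 0) :=
        tendsto_nhdsWithin_iff.2 ⟨h0 ▸ hl, Eventually.of_forall fun n => exp_pos _⟩
      have h2 := Real.tendsto_log_nhdsGT_zero.comp h1
      have h3 : Tendsto (fun n => v n x) atTop atTop := by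
        have h4 := (tendsto_neg_atBot_atTop.comp h2).const_mul_atTop (show (0:ℝ) < 2 by norm_num)
        refine h4.congr fun n => ?_
        simp [log_exp]; ring
      have h5 := (ENNReal.tendsto_ofReal_atTop.comp h3).liminf_eq
      simp only [Function.comp_def] at h5
      rw [h5] at hx
      exact lt_irrefl _ hx
    · refine ⟨2 * (- log l), ((hl.log h0.ne').neg.const_mul 2).congr fun n => ?_⟩
      simp [log_exp]; ring
  obtain ⟨g, hg, hgl⟩ := measurable_limit_of_tendsto_metrizable_ae
    (fun n => (hmeas n _ (hv n)).aemeasurable) hex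
  exact ⟨v, g, hv, hg, hgl⟩

structure Good (Φ : ℝ → ℝ → ℝ → ℝ → ℝ) (lam : ℝ) (f r : ℝ → ℝ) : Prop where
  meas : Measurable f
  pos : ∀ x, 0 < f x
  int : IntegrableOn f (Ioo (0:ℝ) 1)
  mono : Monotone r
  bd : ∀ x, r x ∈ Icc 0 lam
  right : ∀ x ∈ Ioo (0:ℝ) 1, ∫ t in Ioo x 1, f t = lam - r x
  left : ∀ x ∈ Ioo (0:ℝ) 1, ∫ t in Ioo 0 x, f t ≤ r x
  tot : ∫ t in Ioo (0:ℝ) 1, f t ≤ lam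
  rpos : ∀ x ∈ Ioo (0:ℝ) 1, 0 < r x
  eint : IntegrableOn (fun R => Φ R (f R) (r R / R) (r R / R) * R ^ 2) (Ioo (0:ℝ) 1)

lemma good_of_adm (Φ : ℝ → ℝ → ℝ → ℝ → ℝ) (lam : ℝ) (r r' : ℝ → ℝ) (ρ0 : ℝ → ℝ)
    (H : Adm Φ lam r r') : ∃ f ρ, Good Φ lam f ρ ∧ Imec Φ ρ f = Imec Φ r r' ∧
      Ipot ρ0 ρ = Ipot ρ0 r := by
  obtain ⟨h1, h2, h3, h4, h5, h6⟩ := H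
  have h1' : IntegrableOn r' (Ioo (0:ℝ) 1) := by
    rw [intervalIntegrable_iff_integrableOn_Ioo_of_le zero_le_one] at h1
    exact h1
  have hm := h1'.aemeasurable
  let f : ℝ → ℝ := fun x => if 0 < hm.mk r' x then hm.mk r' x else 1
  have hfm : Measurable f :=
    Measurable.ite (measurableSet_lt measurable_const hm.measurable_mk) hm.measurable_mk
      measurable_const
  have hfp : ∀ x, 0 < f x := fun x => by
    simp only [f]; split_ifs with h
    · exact h
    · exact one_pos
  have hfe : f =ᵐ[volume.restrict (Ioo (0:ℝ) 1)] r' := by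
    filter_upwards [h3, hm.ae_eq_mk] with x hx hxe
    simp only [f]
    rw [← hxe, if_pos hx]
  have hfi : IntegrableOn f (Ioo (0:ℝ) 1) := h1'.congr hfe.symm
  have hfII : IntervalIntegrable f volume 0 1 := by
    rw [intervalIntegrable_iff_integrableOn_Ioo_of_le zero_le_one]
    exact hfi
  have hfII' : ∀ a ∈ Icc (0:ℝ) 1, ∀ b ∈ Icc (0:ℝ) 1, IntervalIntegrable f volume a b := by
    intro a ha b hb
    apply hfII.mono_set
    rw [uIcc_of_le zero_le_one]
    exact uIcc_subset_Icc ha hb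
  have hrep : ∀ x ∈ Icc (0:ℝ) 1, r x = r 0 + ∫ t in (0:ℝ)..x, f t := by
    intro x hx
    rw [h2 x hx]
    congr 1
    rw [intervalIntegral.integral_of_le hx.1, intervalIntegral.integral_of_le hx.1,
      integral_Ioc_eq_integral_Ioo, integral_Ioc_eq_integral_Ioo]
    exact integral_congr_ae (ae_restrict_of_ae_restrict_of_subset
      (Ioo_subset_Ioo_right hx.2) hfe.symm)
  have hdiff : ∀ a ∈ Icc (0:ℝ) 1, ∀ b ∈ Icc (0:ℝ) 1, a ≤ b →
      ∫ t in Ioo a b, f t = r b - r a := by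
    intro a ha b hb hab
    rw [hrep a ha, hrep b hb, ← integral_Ioc_eq_integral_Ioo, ← intervalIntegral.integral_of_le hab,
      ← intervalIntegral.integral_interval_sub_left (hfII' 0 (by simp) b hb) (hfII' 0 (by simp) a ha)]
    ring
  have hnn : ∀ s : Set ℝ, 0 ≤ ∫ t in s, f t := fun s => integral_nonneg fun x => (hfp x).le
  have hmono : ∀ a ∈ Icc (0:ℝ) 1, ∀ b ∈ Icc (0:ℝ) 1, a ≤ b → r a ≤ r b := by
    intro a ha b hb hab
    have := hdiff a ha b hb hab
    linarith [hnn (Ioo a b)]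
  have h0m : (0:ℝ) ∈ Icc (0:ℝ) 1 := by simp
  have h1m : (1:ℝ) ∈ Icc (0:ℝ) 1 := by simp
  let c : ℝ → ℝ := fun x => max 0 (min x 1)
  have hc : ∀ x, c x ∈ Icc (0:ℝ) 1 := fun x => ⟨le_max_left _ _, max_le zero_le_one (min_le_right _ _)⟩
  have hcm : Monotone c := fun x y hxy => max_le_max le_rfl (min_le_min hxy le_rfl)
  have hcx : ∀ x ∈ Ioo (0:ℝ) 1, c x = x := fun x hx => by
    simp [c, hx.1.le, hx.2.le]
  have hec : EqOn (fun R => Φ R (f R) (r (c R) / R) (r (c R) / R) * R ^ 2)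
      (fun R => Φ R (f R) (r R / R) (r R / R) * R ^ 2) (Ioo (0:ℝ) 1) := fun x hx => by
    simp only [hcx x hx]
  have hef : (fun R => Φ R (r' R) (r R / R) (r R / R) * R ^ 2) =ᵐ[volume.restrict (Ioo (0:ℝ) 1)]
      (fun R => Φ R (f R) (r (c R) / R) (r (c R) / R) * R ^ 2) := by
    filter_upwards [hfe, ae_restrict_mem measurableSet_Ioo] with x hx hxm
    rw [hcx x hxm, hx]
  refine ⟨f, fun x => r (c x), ⟨hfm, hfp, hfi, fun x y hxy => hmono _ (hc x) _ (hc y) (hcm hxy),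
    fun x => ⟨h5.trans (hmono 0 h0m _ (hc x) (hc x).1), h4 ▸ hmono _ (hc x) 1 h1m (hc x).2⟩, ?_, ?_, ?_, ?_, ?_⟩, ?_, ?_⟩
  · intro x hx
    simp only [hcx x hx]
    rw [hdiff x ⟨hx.1.le, hx.2.le⟩ 1 h1m hx.2.le, h4]
  · intro x hx
    simp only [hcx x hx]
    rw [hdiff 0 h0m x ⟨hx.1.le, hx.2.le⟩ hx.1.le]
    linarith
  · rw [hdiff 0 h0m 1 h1m zero_le_one, h4]; linarith
  · intro x hx
    simp only [hcx x hx]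
    have h7 := hdiff 0 h0m x ⟨hx.1.le, hx.2.le⟩ hx.1.le
    have h8 : 0 < ∫ t in Ioo 0 x, f t := by
      rw [setIntegral_pos_iff_support_of_nonneg_ae (ae_of_all _ fun y => (hfp y).le)
        (hfi.mono_set (Ioo_subset_Ioo_right hx.2.le))]
      have : Function.support f = univ := by
        ext y; simp [(hfp y).ne']
      rw [this, univ_inter, Real.volume_Ioo]
      simpa using hx.1
    linarith
  · exact h6.congr hef
  · exact (integral_congr_ae hef).symm
  · exact setIntegral_congr_fun measurableSet_Ioo fun x hx => by simp only [hcx x hx]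

lemma lower_aux (f r e : ℝ → ℝ) (K s : ℝ) (hK : 0 < K) (hs : 1 ≤ s)
    (hfm : Measurable f) (hfp : ∀ x, 0 < f x) (hfi : IntegrableOn f (Ioo (0:ℝ) 1))
    (hr : Monotone r) (hrp : ∀ x ∈ Ioo (0:ℝ) 1, 0 < r x)
    (hl : ∀ x ∈ Ioo (0:ℝ) 1, ∫ t in Ioo 0 x, f t ≤ r x)
    (he : IntegrableOn e (Ioo (0:ℝ) 1)) (he0 : ∀ x ∈ Ioo (0:ℝ) 1, 0 ≤ e x)
    (hE : ∀ x ∈ Ioo (0:ℝ) 1, K * (f x * (r x / x) * (r x / x)) ^ (-s) * x ^ 2 ≤ e x) :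
    ∀ x ∈ Ioo (0:ℝ) 1, x ^ 6 ≤ 9 * ((∫ t in Ioo (0:ℝ) 1, e t) / K + 1) * r x ^ 3 := by
  intro x hx
  have hx0 := hx.1
  have hrx := hrp x hx
  set c : ℝ := x ^ 3 / (3 * r x ^ 3) with hc
  have hcp : 0 < c := by positivity
  have hsub : Ioo 0 x ⊆ Ioo (0:ℝ) 1 := Ioo_subset_Ioo_right hx.2.le
  have hpt : ∀ t ∈ Ioo 0 x, 2 * t ^ 2 ≤ c * r x ^ 2 * f t + (e t / (K * c) + 1 / c) := by
    intro t ht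
    have ht1 := hsub ht
    have ht0 := ht.1
    have hrt := hrp t ht1
    have hft := hfp t
    set d := f t * (r t / t) * (r t / t) with hd
    have hdp : 0 < d := by positivity
    have a1 : d⁻¹ ≤ d ^ (-s) + 1 := by
      rcases le_total d 1 with h | h
      · have : d ^ (-1:ℝ) ≤ d ^ (-s) := rpow_le_rpow_of_exponent_ge hdp h (by linarith)
        rw [rpow_neg_one] at this; linarith
      · have : d⁻¹ ≤ 1 := inv_le_one_of_one_le₀ h
        have := rpow_pos_of_pos hdp (-s)
        linarith
    have a2 := hE t ht1
    have a3 : d * t ^ 2 ≤ r x ^ 2 * f t := by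
      have : d * t ^ 2 = r t ^ 2 * f t := by rw [hd]; field_simp
      rw [this]
      have h := hr ht.2.le
      gcongr
    have a4 : d ^ (-s) * t ^ 2 ≤ e t / K := by
      rw [le_div_iff₀ hK]; linarith
    have a5 : t ^ 2 ≤ 1 := by have := ht1.2; nlinarith
    have a6 : 2 ≤ c * d + d⁻¹ / c := by
      have : c * d + d⁻¹ / c - 2 = (c * d - 1) ^ 2 / (c * d) := by field_simp; ring
      have : 0 ≤ (c * d - 1) ^ 2 / (c * d) := by positivity
      linarith
    have a7 : d⁻¹ * t ^ 2 ≤ e t / K + 1 := by nlinarith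
    calc 2 * t ^ 2 ≤ (c * d + d⁻¹ / c) * t ^ 2 := by gcongr
      _ = c * (d * t ^ 2) + (d⁻¹ * t ^ 2) / c := by ring
      _ ≤ c * (r x ^ 2 * f t) + (e t / K + 1) / c := by gcongr
      _ = _ := by field_simp
  have hfi' := hfi.mono_set hsub
  have hei' := he.mono_set hsub
  have hconst : IntegrableOn (fun _ : ℝ => 1 / c) (Ioo 0 x) := by
    refine integrableOn_const (by simp)
  have i1 : IntegrableOn (fun t => c * r x ^ 2 * f t) (Ioo 0 x) := hfi'.const_mul _
  have i2 : IntegrableOn (fun t => e t / (K * c) + 1 / c) (Ioo 0 x) :=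
    (hei'.div_const _).add hconst
  have hint2 : IntegrableOn (fun t : ℝ => 2 * t ^ 2) (Ioo 0 x) :=
    (Continuous.integrableOn_Icc (by fun_prop)).mono_set Ioo_subset_Icc_self
  have hI := setIntegral_mono_on hint2 (i1.add i2) measurableSet_Ioo hpt
  simp only [Pi.add_apply] at hI
  rw [integral_add i1 i2, integral_add (hei'.div_const _) hconst,
    integral_const_mul, integral_div, ← integral_Ioc_eq_integral_Ioo, ← intervalIntegral.integral_of_le hx0.le,
    integral_const_mul, integral_pow, setIntegral_const, Measure.real, Real.volume_Ioo,
    ENNReal.toReal_ofReal (by linarith)] at hI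
  have hF := setIntegral_mono_set he ((ae_restrict_mem measurableSet_Ioo).mono he0) hsub.eventuallyLE
  set E := ∫ t in Ioo (0:ℝ) 1, e t
  set E' := ∫ t in Ioo (0:ℝ) x, e t
  have hlx := hl x hx
  set I := ∫ t in Ioo (0:ℝ) x, f t
  simp only [smul_eq_mul] at hI
  have b1 : c * r x ^ 2 * I ≤ x ^ 3 / 3 := by
    calc c * r x ^ 2 * I ≤ c * r x ^ 2 * r x := by gcongr
      _ = x ^ 3 / 3 := by rw [hc]; field_simp
  have b2 : E' / (K * c) + (x - 0) * (1 / c) ≤ (E / K + 1) / c := by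
    calc E' / (K * c) + (x - 0) * (1 / c) ≤ E / (K * c) + 1 * (1 / c) := by
          gcongr
          linarith [hx.2]
      _ = _ := by field_simp
  have b3 : x ^ 3 / 3 ≤ (E / K + 1) / c := by
    norm_num at hI b2
    linarith
  rw [le_div_iff₀ hcp, hc] at b3
  have b4 : x ^ 3 / 3 * (x ^ 3 / (3 * r x ^ 3)) = x ^ 6 / (9 * r x ^ 3) := by field_simp; ring
  rw [b4, div_le_iff₀ (by positivity)] at b3
  linarith

lemma trunc_aux (f e : ℝ → ℝ) (C γ : ℝ) (hC : 0 < C) (hγ : 1 < γ)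
    (hfp : ∀ x, 0 < f x) (hfi : IntegrableOn f (Ioo (0:ℝ) 1))
    (he : IntegrableOn e (Ioo (0:ℝ) 1)) (he0 : ∀ x ∈ Ioo (0:ℝ) 1, 0 ≤ e x)
    (hE : ∀ x ∈ Ioo (0:ℝ) 1, C * (f x) ^ γ * x ^ 2 ≤ e x) (a : ℝ) (ha : a ∈ Ioo (0:ℝ) 1)
    (M : ℝ) (hM : 0 < M) :
    ∫ t in Ioo a 1, max (f t - M) 0 ≤ M ^ (1 - γ) * ((∫ t in Ioo (0:ℝ) 1, e t) / (C * a ^ 2)) := by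
  have hsub : Ioo a 1 ⊆ Ioo (0:ℝ) 1 := Ioo_subset_Ioo_left ha.1.le
  have ha0 := ha.1
  have hpt : ∀ t ∈ Ioo a 1, max (f t - M) 0 ≤ M ^ (1 - γ) * (e t / (C * a ^ 2)) := by
    intro t ht
    have ht1 := hsub ht
    have h0 := he0 t ht1
    have hMp := rpow_pos_of_pos hM (1 - γ)
    apply max_le
    · rcases le_total (f t) M with h | h
      · have : 0 ≤ M ^ (1 - γ) * (e t / (C * a ^ 2)) := by positivity
        linarith
      · have h1 : (f t) ^ γ ≤ e t / (C * a ^ 2) := by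
          rw [le_div_iff₀ (by positivity)]
          have h2 := hE t ht1
          have h3 : a ^ 2 ≤ t ^ 2 := by have := ht.1; gcongr
          have h4 := rpow_pos_of_pos (hfp t) γ
          have h5 : C * (f t) ^ γ * a ^ 2 ≤ C * (f t) ^ γ * t ^ 2 := by gcongr
          linarith
        have h2 : f t = (f t) ^ (1 - γ) * (f t) ^ γ := by
          rw [← rpow_add (hfp t)]; simp
        have h3 : (f t) ^ (1 - γ) ≤ M ^ (1 - γ) := rpow_le_rpow_of_nonpos hM h (by linarith)
        have h4 := rpow_pos_of_pos (hfp t) γ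
        calc f t - M ≤ f t := by linarith
          _ = (f t) ^ (1 - γ) * (f t) ^ γ := h2
          _ ≤ M ^ (1 - γ) * (e t / (C * a ^ 2)) := by gcongr
    · positivity
  have i1 : IntegrableOn (fun t => max (f t - M) 0) (Ioo a 1) :=
    ((hfi.mono_set hsub).sub (integrableOn_const (by simp))).sup (integrable_zero _ _ _)
  have i2 : IntegrableOn (fun t => M ^ (1 - γ) * (e t / (C * a ^ 2))) (Ioo a 1) :=
    ((he.mono_set hsub).div_const _).const_mul _
  refine (setIntegral_mono_on i1 i2 measurableSet_Ioo hpt).trans ?_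
  rw [integral_const_mul, integral_div]
  have hF := setIntegral_mono_set he ((ae_restrict_mem measurableSet_Ioo).mono he0) hsub.eventuallyLE
  have := rpow_pos_of_pos hM (1 - γ)
  gcongr

lemma limit_int_aux (ν : Measure ℝ) [IsFiniteMeasure ν] (v : ℕ → ℝ → ℝ) (g : ℝ → ℝ)
    (hvm : ∀ n, Measurable (v n)) (hgm : Measurable g) (hvp : ∀ n x, 0 ≤ v n x)
    (hvi : ∀ n, Integrable (v n) ν)
    (hlim : ∀ᵐ x ∂ν, Tendsto (fun n => v n x) atTop (𝓝 (g x))) (L : ℝ)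
    (hL : Tendsto (fun n => ∫ x, v n x ∂ν) atTop (𝓝 L)) (η : ℝ → ℝ) (hη : Tendsto η atTop (𝓝 0))
    (htr : ∀ M > 0, ∀ n, ∫ x, max (v n x - M) 0 ∂ν ≤ η M) :
    Integrable g ν ∧ ∫ x, g x ∂ν = L := by
  have hg0 : ∀ᵐ x ∂ν, 0 ≤ g x := by
    filter_upwards [hlim] with x hx using ge_of_tendsto' hx fun n => hvp n x
  have hL0 : 0 ≤ L := ge_of_tendsto' hL fun n => integral_nonneg (hvp n)
  have hfat := lintegral_liminf_le (μ := ν) (u := atTop) (f := fun n x => ENNReal.ofReal (v n x))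
    (fun n => (hvm n).ennreal_ofReal)
  have hle : ∫⁻ x, ENNReal.ofReal (g x) ∂ν ≤ ENNReal.ofReal L := by
    have h1 : ∫⁻ x, ENNReal.ofReal (g x) ∂ν
        = ∫⁻ x, liminf (fun n => ENNReal.ofReal (v n x)) atTop ∂ν := by
      apply lintegral_congr_ae
      filter_upwards [hlim] with x hx
      exact (ENNReal.tendsto_ofReal hx).liminf_eq.symm
    rw [h1]
    refine hfat.trans (le_of_eq ?_)
    have h2 : Tendsto (fun n => ∫⁻ x, ENNReal.ofReal (v n x) ∂ν) atTop (𝓝 (ENNReal.ofReal L)) := by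
      refine (ENNReal.tendsto_ofReal hL).congr fun n => ?_
      exact ofReal_integral_eq_lintegral_ofReal (hvi n) (ae_of_all _ (hvp n))
    exact h2.liminf_eq
  have hgi : Integrable g ν :=
    (lintegral_ofReal_ne_top_iff_integrable hgm.aestronglyMeasurable hg0).1
      (ne_top_of_le_ne_top ENNReal.ofReal_ne_top hle)
  refine ⟨hgi, le_antisymm ?_ ?_⟩
  · rw [← ofReal_integral_eq_lintegral_ofReal hgi hg0] at hle
    exact (ENNReal.ofReal_le_ofReal_iff hL0).1 hle
  · have hM : ∀ M > 0, L - η M ≤ ∫ x, g x ∂ν := by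
      intro M hM
      have hmin : Tendsto (fun n => ∫ x, min (v n x) M ∂ν) atTop (𝓝 (∫ x, min (g x) M ∂ν)) := by
        refine tendsto_integral_of_dominated_convergence (fun _ => M)
          (fun n => ((hvm n).min measurable_const).aestronglyMeasurable) (integrable_const _)
          (fun n => ae_of_all _ fun x => ?_) ?_
        · rw [Real.norm_eq_abs, abs_of_nonneg (le_min (hvp n x) hM.le)]
          exact min_le_right _ _
        · filter_upwards [hlim] with x hx
          exact hx.min tendsto_const_nhds
      have h1 : ∫ x, min (g x) M ∂ν ≤ ∫ x, g x ∂ν :=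
        integral_mono (hgi.inf (integrable_const M)) hgi fun x => min_le_left _ _
      have h2 : L - η M ≤ ∫ x, min (g x) M ∂ν := by
        refine le_of_tendsto_of_tendsto' (hL.sub_const (η M)) hmin fun n => ?_
        have i1 : Integrable (fun x => min (v n x) M) ν := (hvi n).inf (integrable_const M)
        have i2 : Integrable (fun x => max (v n x - M) 0) ν :=
          ((hvi n).sub (integrable_const M)).sup (integrable_zero _ _ _)
        have h3 : ∫ x, v n x ∂ν = ∫ x, min (v n x) M ∂ν + ∫ x, max (v n x - M) 0 ∂ν := by
          rw [← integral_add i1 i2]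
          congr 1; ext x
          rcases le_total (v n x) M with h | h
          · rw [min_eq_left h, max_eq_right (by linarith)]; ring
          · rw [min_eq_right h, max_eq_left (by linarith)]; ring
        linarith [htr M hM n]
      exact h2.trans h1
    have h4 : Tendsto (fun M => L - η M) atTop (𝓝 (L - 0)) := tendsto_const_nhds.sub hη
    rw [sub_zero] at h4
    exact le_of_tendsto h4 ((eventually_gt_atTop 0).mono hM)
def VSet (g : ℝ → ℝ → ℝ → ℝ → ℝ → ℝ) (h r : ℝ → ℝ) (lam : ℝ) (η : ℝ → ℝ → ℝ)
    (ω : ℝ → ℝ) (mu : ℝ) : Set (ℝ → ℝ) :=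
  {v | Measurable v ∧ (∀ x, 0 < v x) ∧ IntegrableOn v (Ioo (0:ℝ) 1) ∧
    ∫ x in Ioo (0:ℝ) 1, v x ≤ lam ∧
    (∀ a ∈ Ioo (0:ℝ) 1, |(∫ x in Ioo a 1, v x) - (lam - r a)| ≤ ω a) ∧
    (∀ a ∈ Ioo (0:ℝ) 1, ∀ M > 0, ∫ x in Ioo a 1, max (v x - M) 0 ≤ η a M) ∧
    ∃ u D e : ℝ → ℝ, (∀ x ∈ Ioo (0:ℝ) 1, 0 < u x ∧ 0 < D x ∧ |u x - r x| ≤ ω x ∧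
        |D x - v x * r x ^ 2| ≤ 2 * lam * ω x * v x ∧
        g x (v x) (u x / x) (u x / x) (D x / x ^ 2) * x ^ 2 ≤ e x ∧
        h (D x / x ^ 2) * x ^ 2 ≤ e x) ∧
      IntegrableOn e (Ioo (0:ℝ) 1) ∧ ∫ x in Ioo (0:ℝ) 1, e x ≤ mu}

lemma VSet_mono (g : ℝ → ℝ → ℝ → ℝ → ℝ → ℝ) (h r : ℝ → ℝ) (lam : ℝ) (hlam : 0 < lam) (η : ℝ → ℝ → ℝ)
    (ω ω' : ℝ → ℝ) (mu mu' : ℝ) (hω : ∀ x, ω x ≤ ω' x) (hmu : mu ≤ mu') :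
    VSet g h r lam η ω mu ⊆ VSet g h r lam η ω' mu' := by
  rintro v ⟨h1, h2, h3, h4, h5, h6, u, D, e, h7, h8, h9⟩
  refine ⟨h1, h2, h3, h4, fun a ha => (h5 a ha).trans (hω a), h6, u, D, e, fun x hx => ?_, h8,
    h9.trans hmu⟩
  obtain ⟨a1, a2, a3, a4, a5, a6⟩ := h7 x hx
  refine ⟨a1, a2, a3.trans (hω x), a4.trans ?_, a5, a6⟩
  have := hω x
  have := (h2 x).le
  gcongr

lemma VSet_mid (g : ℝ → ℝ → ℝ → ℝ → ℝ → ℝ) (h r : ℝ → ℝ) (lam : ℝ) (η : ℝ → ℝ → ℝ)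
    (ω : ℝ → ℝ) (mu : ℝ)
    (hgconv : ∀ R ∈ Icc (0:ℝ) 1,
      ConvexOn ℝ ((Ioi (0:ℝ)) ×ˢ (Ioi (0:ℝ)) ×ˢ (Ioi (0:ℝ)) ×ˢ (Ioi (0:ℝ)))
        (fun p : ℝ × ℝ × ℝ × ℝ => g R p.1 p.2.1 p.2.2.1 p.2.2.2))
    (hhconv : StrictConvexOn ℝ (Ioi 0) h) :
    ∀ v ∈ VSet g h r lam η ω mu, ∀ w ∈ VSet g h r lam η ω mu,
      (fun x => (v x + w x) / 2) ∈ VSet g h r lam η ω mu := by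
  rintro v ⟨h1, h2, h3, h4, h5, h6, u, D, e, h7, h8, h9⟩ w ⟨k1, k2, k3, k4, k5, k6, u', D', e', k7, k8, k9⟩
  have hsub : ∀ a ∈ Ioo (0:ℝ) 1, Ioo a 1 ⊆ Ioo (0:ℝ) 1 := fun a ha => Ioo_subset_Ioo_left ha.1.le
  have hmidI : ∀ (s : Set ℝ) (p q : ℝ → ℝ), IntegrableOn p s → IntegrableOn q s →
      ∫ x in s, (p x + q x) / 2 = ((∫ x in s, p x) + ∫ x in s, q x) / 2 := by
    intro s p q hp hq
    rw [integral_div, integral_add hp hq]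
  refine ⟨(h1.add k1).div_const 2, fun x => by have := h2 x; have := k2 x; positivity,
    (h3.add k3).div_const 2, ?_, ?_, ?_, fun x => (u x + u' x) / 2, fun x => (D x + D' x) / 2,
    fun x => (e x + e' x) / 2, ?_, (h8.add k8).div_const 2, ?_⟩
  · rw [hmidI _ _ _ h3 k3]; linarith
  · intro a ha
    rw [hmidI _ _ _ (h3.mono_set (hsub a ha)) (k3.mono_set (hsub a ha))]
    have a1 := abs_le.1 (h5 a ha)
    have a2 := abs_le.1 (k5 a ha)
    rw [abs_le]
    constructor <;> linarith [a1.1, a1.2, a2.1, a2.2]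
  · intro a ha M hM
    have hi : ∀ p : ℝ → ℝ, IntegrableOn p (Ioo (0:ℝ) 1) →
        IntegrableOn (fun x => max (p x - M) 0) (Ioo a 1) := fun p hp =>
      ((hp.mono_set (hsub a ha)).sub (integrableOn_const (by simp))).sup (integrable_zero _ _ _)
    have hi3 := hi _ ((h3.add k3).div_const 2)
    have hle := integral_mono hi3 (((hi v h3).add (hi w k3)).div_const 2) (fun x => by
      simp only [Pi.add_apply]
      apply max_le
      · have := le_max_left (v x - M) 0
        have := le_max_left (w x - M) 0
        linarith
      · have := le_max_right (v x - M) 0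
        have := le_max_right (w x - M) 0
        linarith)
    simp only [Pi.add_apply] at hle
    rw [hmidI _ _ _ (hi v h3) (hi w k3)] at hle
    linarith [h6 a ha M hM, k6 a ha M hM]
  · intro x hx
    obtain ⟨a1, a2, a3, a4, a5, a6⟩ := h7 x hx
    obtain ⟨b1, b2, b3, b4, b5, b6⟩ := k7 x hx
    have hx0 := hx.1
    have hv := h2 x
    have hw := k2 x
    refine ⟨by linarith, by linarith, ?_, ?_, ?_, ?_⟩
    · rw [abs_le] at a3 b3 ⊢
      constructor <;> linarith [a3.1, a3.2, b3.1, b3.2]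
    · rw [abs_le] at a4 b4 ⊢
      constructor <;> nlinarith [a4.1, a4.2, b4.1, b4.2]
    · have := (hgconv x ⟨hx.1.le, hx.2.le⟩).2
        (x := (v x, u x / x, u x / x, D x / x ^ 2)) (y := (w x, u' x / x, u' x / x, D' x / x ^ 2))
        ⟨hv, div_pos a1 hx0, div_pos a1 hx0, div_pos a2 (pow_pos hx0 2)⟩
        ⟨hw, div_pos b1 hx0, div_pos b1 hx0, div_pos b2 (pow_pos hx0 2)⟩
        (show (0:ℝ) ≤ 1/2 by norm_num) (show (0:ℝ) ≤ 1/2 by norm_num) (by norm_num)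
      simp only [Prod.smul_mk, Prod.mk_add_mk, smul_eq_mul] at this
      have e1 : 1 / 2 * v x + 1 / 2 * w x = (v x + w x) / 2 := by ring
      have e2 : 1 / 2 * (u x / x) + 1 / 2 * (u' x / x) = (u x + u' x) / 2 / x := by ring
      have e3 : 1 / 2 * (D x / x ^ 2) + 1 / 2 * (D' x / x ^ 2) = (D x + D' x) / 2 / x ^ 2 := by ring
      rw [e1, e2, e3] at this
      have h0 : 0 ≤ x ^ 2 := by positivity
      nlinarith [mul_le_mul_of_nonneg_right this h0]
    · have := hhconv.convexOn.2 (x := D x / x ^ 2) (y := D' x / x ^ 2)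
        (div_pos a2 (pow_pos hx0 2)) (div_pos b2 (pow_pos hx0 2))
        (show (0:ℝ) ≤ 1/2 by norm_num) (show (0:ℝ) ≤ 1/2 by norm_num) (by norm_num)
      simp only [smul_eq_mul] at this
      have e3 : 1 / 2 * (D x / x ^ 2) + 1 / 2 * (D' x / x ^ 2) = (D x + D' x) / 2 / x ^ 2 := by ring
      rw [e3] at this
      have h0 : 0 ≤ x ^ 2 := by positivity
      nlinarith [mul_le_mul_of_nonneg_right this h0]
  · rw [hmidI _ _ _ h8 k8]; linarith

lemma Mfun_facts (ρ0 : ℝ → ℝ) (k0 k1 : ℝ) (hk0 : 0 < k0) (hρmeas : Measurable ρ0)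
    (hρ : ∀ R ∈ Icc (0:ℝ) 1, k0 ≤ ρ0 R ∧ ρ0 R ≤ k1) :
    (∀ x ∈ Ioo (0:ℝ) 1, 0 ≤ Mfun ρ0 x ∧ Mfun ρ0 x ≤ 4 * π * k1) ∧
    AEStronglyMeasurable (Mfun ρ0) (volume.restrict (Ioo (0:ℝ) 1)) := by
  have hb : ∀ x ∈ Icc (0:ℝ) 1, 0 ≤ ρ0 x * x ^ 2 ∧ ρ0 x * x ^ 2 ≤ k1 := by
    intro x hx
    obtain ⟨h1, h2⟩ := hρ x hx
    have h3 : x ^ 2 ≤ 1 := by nlinarith [hx.1, hx.2]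
    have h4 : 0 ≤ x ^ 2 := by positivity
    constructor
    · exact mul_nonneg (by linarith) h4
    · nlinarith
  have hi : IntegrableOn (fun u => ρ0 u * u ^ 2) (Icc (0:ℝ) 1) := by
    refine Measure.integrableOn_of_bounded (M := k1) (by simp) (by fun_prop) ?_
    filter_upwards [ae_restrict_mem measurableSet_Icc] with x hx
    rw [Real.norm_eq_abs, abs_of_nonneg (hb x hx).1]
    exact (hb x hx).2
  refine ⟨fun x hx => ?_, ?_⟩
  · have hsub : Ioc 0 x ⊆ Icc (0:ℝ) 1 := fun y hy => ⟨hy.1.le, hy.2.trans hx.2.le⟩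
    have h1 : 0 ≤ ∫ u in (0:ℝ)..x, ρ0 u * u ^ 2 := by
      rw [intervalIntegral.integral_of_le hx.1.le]
      exact setIntegral_nonneg measurableSet_Ioc fun y hy => (hb y (hsub hy)).1
    have h2 : ∫ u in (0:ℝ)..x, ρ0 u * u ^ 2 ≤ k1 := by
      rw [intervalIntegral.integral_of_le hx.1.le]
      have := setIntegral_mono_on (hi.mono_set hsub) (integrableOn_const (C := k1) (by simp)) measurableSet_Ioc
        (fun y hy => (hb y (hsub hy)).2)
      rw [setIntegral_const, Measure.real, Real.volume_Ioc, ENNReal.toReal_ofReal (by linarith [hx.1])] at this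
      have hk : 0 ≤ k1 := by have := hρ 0 (by simp); linarith
      simp only [smul_eq_mul] at this
      nlinarith [hx.2]
    unfold Mfun
    have := pi_pos
    constructor
    · positivity
    · gcongr
  · have hc : ContinuousOn (Mfun ρ0) (Icc (0:ℝ) 1) := by
      unfold Mfun
      have := intervalIntegral.continuousOn_primitive_interval (μ := volume) (a := 0) (b := 1)
        (f := fun u => ρ0 u * u ^ 2) (by rwa [uIcc_of_le zero_le_one])
      rw [uIcc_of_le zero_le_one] at this
      exact continuousOn_const.mul this
    exact (hc.mono Ioo_subset_Icc_self).aestronglyMeasurable measurableSet_Ioo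

lemma pot_bound (ρ0 : ℝ → ℝ) (k0 k1 : ℝ) (hk0 : 0 < k0)
    (hρ : ∀ R ∈ Icc (0:ℝ) 1, k0 ≤ ρ0 R ∧ ρ0 R ≤ k1)
    (hM : ∀ x ∈ Ioo (0:ℝ) 1, 0 ≤ Mfun ρ0 x ∧ Mfun ρ0 x ≤ 4 * π * k1)
    (r : ℝ → ℝ) (F A : ℝ) (hA : 0 < A) (x : ℝ) (hx : x ∈ Ioo (0:ℝ) 1) (hr : 0 < r x)
    (hF : x ^ 6 ≤ 9 * F * r x ^ 3) :
    ‖ρ0 x * Mfun ρ0 x * (r x)⁻¹ * x ^ 2‖ ≤ 4 * π * k1 ^ 2 * (A + 9 * F / A ^ 2) := by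
  obtain ⟨h1, h2⟩ := hρ x ⟨hx.1.le, hx.2.le⟩
  obtain ⟨h3, h4⟩ := hM x hx
  have hx0 := hx.1
  set y := (r x)⁻¹ * x ^ 2 with hy
  have hy0 : 0 < y := by positivity
  have hy3 : y ^ 3 ≤ 9 * F := by
    have : y ^ 3 = x ^ 6 / r x ^ 3 := by rw [hy]; field_simp
    rw [this, div_le_iff₀ (by positivity)]; exact hF
  have hyA : y ≤ A + 9 * F / A ^ 2 := by
    rcases le_total y A with h | h
    · have : 0 ≤ 9 * F / A ^ 2 := div_nonneg (by nlinarith [pow_pos hy0 3]) (by positivity)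
      linarith
    · have : y ≤ y ^ 3 / A ^ 2 := by
        rw [le_div_iff₀ (by positivity)]
        calc y * A ^ 2 ≤ y * y ^ 2 := by gcongr
          _ = y ^ 3 := by ring
      have h5 : y ^ 3 / A ^ 2 ≤ 9 * F / A ^ 2 := by gcongr
      linarith
  have e : ρ0 x * Mfun ρ0 x * (r x)⁻¹ * x ^ 2 = ρ0 x * Mfun ρ0 x * y := by rw [hy]; ring
  have h0 : 0 ≤ ρ0 x := by linarith
  rw [e, Real.norm_eq_abs, abs_of_nonneg (by positivity)]
  have hk : 0 ≤ k1 := by linarith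
  calc ρ0 x * Mfun ρ0 x * y ≤ k1 * (4 * π * k1) * (A + 9 * F / A ^ 2) := by gcongr
    _ = _ := by ring
lemma fatou_aux (μ : Measure ℝ) (v : ℕ → ℝ → ℝ) (g : ℝ → ℝ) (B : ℝ) (hB : 0 ≤ B)
    (hvm : ∀ n, Measurable (v n)) (hgm : Measurable g) (hvp : ∀ n x, 0 ≤ v n x)
    (hvi : ∀ n, Integrable (v n) μ) (hvB : ∀ n, ∫ x, v n x ∂μ ≤ B)
    (hlim : ∀ᵐ x ∂μ, Tendsto (fun n => v n x) atTop (𝓝 (g x))) :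
    Integrable g μ ∧ ∫ x, g x ∂μ ≤ B := by
  have hg0 : ∀ᵐ x ∂μ, 0 ≤ g x := by
    filter_upwards [hlim] with x hx using ge_of_tendsto' hx fun n => hvp n x
  have hfat := lintegral_liminf_le (μ := μ) (u := atTop) (f := fun n x => ENNReal.ofReal (v n x))
    (fun n => (hvm n).ennreal_ofReal)
  have hle : ∫⁻ x, ENNReal.ofReal (g x) ∂μ ≤ ENNReal.ofReal B := by
    have h1 : ∫⁻ x, ENNReal.ofReal (g x) ∂μ
        = ∫⁻ x, liminf (fun n => ENNReal.ofReal (v n x)) atTop ∂μ := by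
      apply lintegral_congr_ae
      filter_upwards [hlim] with x hx
      exact (ENNReal.tendsto_ofReal hx).liminf_eq.symm
    rw [h1]
    refine hfat.trans ?_
    refine liminf_le_of_frequently_le' (Eventually.frequently (Eventually.of_forall fun n => ?_))
    rw [← ofReal_integral_eq_lintegral_ofReal (hvi n) (ae_of_all _ (hvp n))]
    exact ENNReal.ofReal_le_ofReal (hvB n)
  have hgi : Integrable g μ :=
    (lintegral_ofReal_ne_top_iff_integrable hgm.aestronglyMeasurable hg0).1
      (ne_top_of_le_ne_top ENNReal.ofReal_ne_top hle)
  refine ⟨hgi, ?_⟩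
  rw [← ofReal_integral_eq_lintegral_ofReal hgi hg0] at hle
  exact (ENNReal.ofReal_le_ofReal_iff hB).1 hle

lemma limit_main (Φ : ℝ → ℝ → ℝ → ℝ → ℝ)
    (hΦ0 : ∀ R ∈ Icc (0:ℝ) 1, ∀ v1 ∈ Ioi (0:ℝ), ∀ v2 ∈ Ioi (0:ℝ), ∀ v3 ∈ Ioi (0:ℝ),
      0 ≤ Φ R v1 v2 v3)
    (hΦcont : ContinuousOn (fun p : ℝ × ℝ × ℝ × ℝ => Φ p.1 p.2.1 p.2.2.1 p.2.2.2)
      (Icc 0 1 ×ˢ Ioi 0 ×ˢ Ioi 0 ×ˢ Ioi 0))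
    (g : ℝ → ℝ → ℝ → ℝ → ℝ → ℝ)
    (hgcont : ContinuousOn (fun p : ℝ × ℝ × ℝ × ℝ × ℝ => g p.1 p.2.1 p.2.2.1 p.2.2.2.1 p.2.2.2.2)
      (Icc 0 1 ×ˢ Ioi 0 ×ˢ Ioi 0 ×ˢ Ioi 0 ×ˢ Ioi 0))
    (hpoly : ∀ R ∈ Icc (0:ℝ) 1, ∀ v1 ∈ Ioi (0:ℝ), ∀ v2 ∈ Ioi (0:ℝ), ∀ v3 ∈ Ioi (0:ℝ),
      Φ R v1 v2 v3 = g R v1 v2 v3 (v1 * v2 * v3))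
    (h : ℝ → ℝ) (K s : ℝ) (hK : 0 < K) (hs : 0 < s)
    (hH3 : ∀ d ∈ Ioi (0:ℝ), K * d ^ (-s) ≤ h d)
    (r : ℝ → ℝ) (lam : ℝ) (hlam : 0 < lam) (hrm : Monotone r) (hr0 : ∀ x, 0 ≤ r x)
    (η : ℝ → ℝ → ℝ) (hη : ∀ a ∈ Ioo (0:ℝ) 1, Tendsto (η a) atTop (𝓝 0))
    (ω : ℕ → ℝ → ℝ) (hω : ∀ᵐ x ∂volume.restrict (Ioo (0:ℝ) 1), Tendsto (fun n => ω n x) atTop (𝓝 0))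
    (mu : ℕ → ℝ) (m : ℝ) (hmu : Tendsto mu atTop (𝓝 m))
    (v : ℕ → ℝ → ℝ) (gt : ℝ → ℝ) (hgt : Measurable gt)
    (hv : ∀ n, v n ∈ VSet g h r lam η (ω n) (mu n))
    (hlim : ∀ᵐ x ∂volume.restrict (Ioo (0:ℝ) 1), Tendsto (fun n => v n x) atTop (𝓝 (gt x))) :
    IntegrableOn gt (Ioo (0:ℝ) 1) ∧ ∫ x in Ioo (0:ℝ) 1, gt x ≤ lam ∧
    (∀ᵐ a ∂volume.restrict (Ioo (0:ℝ) 1), ∫ x in Ioo a 1, gt x = lam - r a) ∧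
    (∀ᵐ x ∂volume.restrict (Ioo (0:ℝ) 1), 0 < gt x) ∧
    IntegrableOn (fun x => Φ x (gt x) (r x / x) (r x / x) * x ^ 2) (Ioo (0:ℝ) 1) ∧
    ∫ x in Ioo (0:ℝ) 1, Φ x (gt x) (r x / x) (r x / x) * x ^ 2 ≤ m := by
  choose h1 h2 h3 h4 h5 h6 u D e h7 h8 h9 using hv
  obtain ⟨A1, A2⟩ := fatou_aux (volume.restrict (Ioo (0:ℝ) 1)) v gt lam hlam.le h1 hgt
    (fun n x => (h2 n x).le) h3 h4 hlim
  refine ⟨A1, A2, ?_, ?_⟩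
  · filter_upwards [hω, ae_restrict_mem measurableSet_Ioo] with a ha1 ha
    have hsub : Ioo a 1 ⊆ Ioo (0:ℝ) 1 := Ioo_subset_Ioo_left ha.1.le
    refine (limit_int_aux (volume.restrict (Ioo a 1)) v gt h1 hgt (fun n x => (h2 n x).le)
      (fun n => (h3 n).mono_set hsub) (ae_restrict_of_ae_restrict_of_subset hsub hlim) _ ?_ (η a)
      (hη a ha) (fun M hM n => h6 n a ha M hM)).2
    rw [tendsto_iff_dist_tendsto_zero]
    exact squeeze_zero (fun _ => dist_nonneg) (fun n => h5 n a ha) ha1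
  have he0 : ∀ n, ∀ x ∈ Ioo (0:ℝ) 1, K * (D n x / x ^ 2) ^ (-s) * x ^ 2 ≤ e n x := by
    intro n x hx
    obtain ⟨a1, a2, a3, a4, a5, a6⟩ := h7 n x hx
    refine le_trans ?_ a6
    have := hH3 (D n x / x ^ 2) (div_pos a2 (pow_pos hx.1 2))
    gcongr
  have he0' : ∀ n, ∀ x ∈ Ioo (0:ℝ) 1, 0 ≤ e n x := by
    intro n x hx
    refine le_trans ?_ (he0 n x hx)
    obtain ⟨a1, a2, -⟩ := h7 n x hx
    have := rpow_pos_of_pos (div_pos a2 (pow_pos hx.1 2)) (-s)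
    positivity
  have hem : ∀ n, AEMeasurable (fun x => ENNReal.ofReal (e n x)) (volume.restrict (Ioo (0:ℝ) 1)) :=
    fun n => (h8 n).aemeasurable.ennreal_ofReal
  have hfat : ∫⁻ x in Ioo (0:ℝ) 1, liminf (fun n => ENNReal.ofReal (e n x)) atTop ≤ ENNReal.ofReal m := by
    refine (lintegral_liminf_le' hem).trans ?_
    have hl : Tendsto (fun n => ENNReal.ofReal (mu n)) atTop (𝓝 (ENNReal.ofReal m)) :=
      ENNReal.tendsto_ofReal hmu
    rw [← hl.liminf_eq]
    refine liminf_le_liminf (Eventually.of_forall fun n => ?_)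
    rw [← ofReal_integral_eq_lintegral_ofReal (h8 n)
      ((ae_restrict_mem measurableSet_Ioo).mono (he0' n))]
    exact ENNReal.ofReal_le_ofReal (h9 n)
  have hm0 : 0 ≤ m := ge_of_tendsto' hmu fun n =>
    (setIntegral_nonneg measurableSet_Ioo (he0' n)).trans (h9 n)
  have hlm : AEMeasurable (fun x => liminf (fun n => ENNReal.ofReal (e n x)) atTop)
      (volume.restrict (Ioo (0:ℝ) 1)) := by
    refine ⟨fun x => liminf (fun n => (hem n).mk _ x) atTop,
      Measurable.liminf fun n => (hem n).measurable_mk, ?_⟩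
    filter_upwards [ae_all_iff.2 fun n => (hem n).ae_eq_mk] with x hx
    simp only [hx]
  have hae : ∀ᵐ x ∂volume.restrict (Ioo (0:ℝ) 1), liminf (fun n => ENNReal.ofReal (e n x)) atTop < ⊤ :=
    ae_lt_top' hlm (ne_top_of_le_ne_top ENNReal.ofReal_ne_top hfat)
  have hpt : ∀ᵐ x ∂volume.restrict (Ioo (0:ℝ) 1), 0 < gt x ∧ 0 < r x ∧
      ENNReal.ofReal (Φ x (gt x) (r x / x) (r x / x) * x ^ 2) ≤
        liminf (fun n => ENNReal.ofReal (e n x)) atTop := by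
    filter_upwards [hae, hlim, hω, ae_restrict_mem measurableSet_Ioo] with x hx1 hx2 hx3 hx
    have hx0 := hx.1
    have hxI : x ∈ Icc (0:ℝ) 1 := ⟨hx.1.le, hx.2.le⟩
    have hg0 : 0 ≤ gt x := ge_of_tendsto' hx2 fun n => (h2 n x).le
    have hD : Tendsto (fun n => D n x) atTop (𝓝 (gt x * r x ^ 2)) := by
      have hz : Tendsto (fun n => D n x - v n x * r x ^ 2) atTop (𝓝 0) := by
        refine squeeze_zero_norm (fun n => (h7 n x hx).2.2.2.1) ?_
        have := ((hx3.const_mul (2 * lam)).mul hx2)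
        simpa using this
      have := hz.add (hx2.mul_const (r x ^ 2))
      simpa using this
    have hu : Tendsto (fun n => u n x) atTop (𝓝 (r x)) := by
      rw [tendsto_iff_dist_tendsto_zero]
      exact squeeze_zero (fun _ => dist_nonneg) (fun n => (h7 n x hx).2.2.1) hx3
    have hpos : gt x * r x ^ 2 ≠ 0 := by
      intro hz
      rw [hz] at hD
      have hD2 : Tendsto (fun n => D n x / x ^ 2) atTop (𝓝[>] 0) := by
        refine tendsto_nhdsWithin_iff.2 ⟨by simpa using hD.div_const (x ^ 2),
          Eventually.of_forall fun n => div_pos (h7 n x hx).2.1 (pow_pos hx0 2)⟩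
      have h10 := (tendsto_rpow_neg_nhdsGT_zero (show -s < 0 by linarith)).comp hD2
      have h11 := (h10.const_mul_atTop hK).atTop_mul_const (pow_pos hx0 2)
      have h12 : Tendsto (fun n => e n x) atTop atTop := tendsto_atTop_mono (fun n => he0 n x hx) h11
      have h13 := (ENNReal.tendsto_ofReal_atTop.comp h12).liminf_eq
      simp only [Function.comp_def] at h13
      rw [h13] at hx1
      exact lt_irrefl _ hx1
    have hgp : 0 < gt x := lt_of_le_of_ne hg0 fun hh => hpos (by rw [← hh, zero_mul])
    have hrp : 0 < r x := lt_of_le_of_ne (hr0 x) fun hh => hpos (by rw [← hh]; simp)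
    refine ⟨hgp, hrp, ?_⟩
    have hmem : (x, gt x, r x / x, r x / x, gt x * r x ^ 2 / x ^ 2) ∈
        (Icc (0:ℝ) 1 ×ˢ Ioi (0:ℝ) ×ˢ Ioi (0:ℝ) ×ˢ Ioi (0:ℝ) ×ˢ Ioi (0:ℝ)) :=
      ⟨hxI, hgp, div_pos hrp hx0, div_pos hrp hx0,
        div_pos (mul_pos hgp (pow_pos hrp 2)) (pow_pos hx0 2)⟩
    have hc := hgcont _ hmem
    have hseq : Tendsto (fun n => (x, v n x, u n x / x, u n x / x, D n x / x ^ 2)) atTop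
        (𝓝[Icc (0:ℝ) 1 ×ˢ Ioi (0:ℝ) ×ˢ Ioi (0:ℝ) ×ˢ Ioi (0:ℝ) ×ˢ Ioi (0:ℝ)]
          (x, gt x, r x / x, r x / x, gt x * r x ^ 2 / x ^ 2)) := by
      refine tendsto_nhdsWithin_iff.2 ⟨?_, Eventually.of_forall fun n => ?_⟩
      · exact tendsto_const_nhds.prodMk_nhds (hx2.prodMk_nhds ((hu.div_const x).prodMk_nhds
          ((hu.div_const x).prodMk_nhds (hD.div_const (x ^ 2)))))
      · obtain ⟨a1, a2, -⟩ := h7 n x hx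
        exact ⟨hxI, h2 n x, div_pos a1 hx0, div_pos a1 hx0, div_pos a2 (by positivity)⟩
    have hcl := (hc.tendsto.comp hseq).mul_const (x ^ 2)
    have hΦg : Φ x (gt x) (r x / x) (r x / x) = g x (gt x) (r x / x) (r x / x) (gt x * r x ^ 2 / x ^ 2) := by
      rw [hpoly x hxI _ hgp _ (div_pos hrp hx0) _ (div_pos hrp hx0)]
      congr 1
      field_simp
    rw [hΦg, ← (ENNReal.tendsto_ofReal hcl).liminf_eq]
    refine liminf_le_liminf (Eventually.of_forall fun n => ?_)
    exact ENNReal.ofReal_le_ofReal (h7 n x hx).2.2.2.2.1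
  have hle : ∫⁻ x in Ioo (0:ℝ) 1, ENNReal.ofReal (Φ x (gt x) (r x / x) (r x / x) * x ^ 2) ≤ ENNReal.ofReal m :=
    (lintegral_mono_ae (hpt.mono fun x hx => hx.2.2)).trans hfat
  have hnn : ∀ᵐ x ∂volume.restrict (Ioo (0:ℝ) 1), 0 ≤ Φ x (gt x) (r x / x) (r x / x) * x ^ 2 := by
    filter_upwards [hpt, ae_restrict_mem measurableSet_Ioo] with x hx hxm
    have := hΦ0 x ⟨hxm.1.le, hxm.2.le⟩ _ hx.1 _ (div_pos hx.2.1 hxm.1) _ (div_pos hx.2.1 hxm.1)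
    positivity
  have haesm : AEStronglyMeasurable (fun x => Φ x (gt x) (r x / x) (r x / x) * x ^ 2)
      (volume.restrict (Ioo (0:ℝ) 1)) := by
    classical
    have hS : MeasurableSet (Icc (0:ℝ) 1 ×ˢ Ioi (0:ℝ) ×ˢ Ioi (0:ℝ) ×ˢ Ioi (0:ℝ)) :=
      measurableSet_Icc.prod (measurableSet_Ioi.prod (measurableSet_Ioi.prod measurableSet_Ioi))
    have hP := hΦcont.measurable_piecewise (g := fun _ => (0:ℝ)) continuousOn_const hS
    have hmap : Measurable (fun x : ℝ => (x, gt x, r x / x, r x / x)) := by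
      have := hrm.measurable
      fun_prop
    have hcomp := ((hP.comp hmap).mul (measurable_id.pow_const 2)).aestronglyMeasurable
      (μ := volume.restrict (Ioo (0:ℝ) 1))
    refine hcomp.congr ?_
    filter_upwards [hpt, ae_restrict_mem measurableSet_Ioo] with x hx hxm
    have hmem : (x, gt x, r x / x, r x / x) ∈ (Icc (0:ℝ) 1 ×ˢ Ioi (0:ℝ) ×ˢ Ioi (0:ℝ) ×ˢ Ioi (0:ℝ)) :=
      ⟨⟨hxm.1.le, hxm.2.le⟩, hx.1, div_pos hx.2.1 hxm.1, div_pos hx.2.1 hxm.1⟩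
    simp [Function.comp, Set.piecewise_eq_of_mem _ _ _ hmem]
  have hint : IntegrableOn (fun x => Φ x (gt x) (r x / x) (r x / x) * x ^ 2) (Ioo (0:ℝ) 1) :=
    (lintegral_ofReal_ne_top_iff_integrable haesm hnn).1 (ne_top_of_le_ne_top ENNReal.ofReal_ne_top hle)
  refine ⟨hpt.mono fun x hx => hx.1, hint, ?_⟩
  rw [← ofReal_integral_eq_lintegral_ofReal hint hnn] at hle
  exact (ENNReal.ofReal_le_ofReal_iff hm0).1 hle

theorem stmt4 (ρ0 : ℝ → ℝ) (k0 k1 : ℝ) (hk0 : 0 < k0) (hρmeas : Measurable ρ0)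
    (hρ : ∀ R ∈ Icc (0:ℝ) 1, k0 ≤ ρ0 R ∧ ρ0 R ≤ k1)
    (Φ : ℝ → ℝ → ℝ → ℝ → ℝ)
    (hΦ0 : ∀ R ∈ Icc (0:ℝ) 1, ∀ v1 ∈ Ioi (0:ℝ), ∀ v2 ∈ Ioi (0:ℝ), ∀ v3 ∈ Ioi (0:ℝ),
      0 ≤ Φ R v1 v2 v3)
    (hΦsym : ∀ R ∈ Icc (0:ℝ) 1, ∀ v1 ∈ Ioi (0:ℝ), ∀ v2 ∈ Ioi (0:ℝ), ∀ v3 ∈ Ioi (0:ℝ),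
      Φ R v1 v2 v3 = Φ R v2 v1 v3 ∧ Φ R v1 v2 v3 = Φ R v1 v3 v2)
    (hΦcont : ContinuousOn (fun p : ℝ × ℝ × ℝ × ℝ => Φ p.1 p.2.1 p.2.2.1 p.2.2.2)
      (Icc 0 1 ×ˢ Ioi 0 ×ˢ Ioi 0 ×ˢ Ioi 0))
    -- polyconvexity: `Φ(R,v) = g(R,v₁,v₂,v₃,v₁v₂v₃)` with `g` continuous and convex
    -- in its last four arguments
    (g : ℝ → ℝ → ℝ → ℝ → ℝ → ℝ)
    (hgcont : ContinuousOn (fun p : ℝ × ℝ × ℝ × ℝ × ℝ => g p.1 p.2.1 p.2.2.1 p.2.2.2.1 p.2.2.2.2)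
      (Icc 0 1 ×ˢ Ioi 0 ×ˢ Ioi 0 ×ˢ Ioi 0 ×ˢ Ioi 0))
    (hgconv : ∀ R ∈ Icc (0:ℝ) 1,
      ConvexOn ℝ ((Ioi (0:ℝ)) ×ˢ (Ioi (0:ℝ)) ×ˢ (Ioi (0:ℝ)) ×ˢ (Ioi (0:ℝ)))
        (fun p : ℝ × ℝ × ℝ × ℝ => g R p.1 p.2.1 p.2.2.1 p.2.2.2))
    (hpoly : ∀ R ∈ Icc (0:ℝ) 1, ∀ v1 ∈ Ioi (0:ℝ), ∀ v2 ∈ Ioi (0:ℝ), ∀ v3 ∈ Ioi (0:ℝ),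
      Φ R v1 v2 v3 = g R v1 v2 v3 (v1 * v2 * v3))
    -- growth condition (G) with (H1)-(H3)
    (φ h : ℝ → ℝ)
    (hφpos : ∀ t ∈ Ioi (0:ℝ), 0 < φ t) (hhpos : ∀ t ∈ Ioi (0:ℝ), 0 < h t)
    (hφconv : StrictConvexOn ℝ (Ioi 0) φ) (hhconv : StrictConvexOn ℝ (Ioi 0) h)
    (hG : ∀ R ∈ Icc (0:ℝ) 1, ∀ v1 ∈ Ioi (0:ℝ), ∀ v2 ∈ Ioi (0:ℝ), ∀ v3 ∈ Ioi (0:ℝ),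
      φ v1 + φ v2 + φ v3 + h (v1 * v2 * v3) ≤ Φ R v1 v2 v3)
    (C γ : ℝ) (hC : 0 < C) (hγ1 : 1 < γ) (hγ3 : γ < 3)
    (hH1 : ∀ v ∈ Ioi (0:ℝ), C * v ^ γ ≤ φ v)
    (hH2 : Tendsto (fun d => h d / d) atTop atTop)
    (K s : ℝ) (hK : 0 < K) (hs : γ / (γ - 1) ≤ s)
    (hH3 : ∀ d ∈ Ioi (0:ℝ), K * d ^ (-s) ≤ h d) :
    ∀ lam > (0:ℝ), ∃ rl rl' : ℝ → ℝ, Adm Φ lam rl rl' ∧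
      ∀ r r' : ℝ → ℝ, Adm Φ lam r r' → Ifun Φ ρ0 rl rl' ≤ Ifun Φ ρ0 r r' := by
  intro lam hlam
  have hs1 : 1 ≤ s := by
    have : 1 ≤ γ / (γ - 1) := by rw [le_div_iff₀ (by linarith)]; linarith
    linarith
  obtain ⟨hM, hMm⟩ := Mfun_facts ρ0 k0 k1 hk0 hρmeas hρ
  have hk1 : 0 < k1 := by have := hρ 0 (by simp); linarith
  -- pointwise growth for good pairs
  have hgrow : ∀ f r, Good Φ lam f r → ∀ x ∈ Ioo (0:ℝ) 1,
      C * (f x) ^ γ * x ^ 2 ≤ Φ x (f x) (r x / x) (r x / x) * x ^ 2 ∧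
      h (f x * (r x / x) * (r x / x)) * x ^ 2 ≤ Φ x (f x) (r x / x) (r x / x) * x ^ 2 ∧
      K * (f x * (r x / x) * (r x / x)) ^ (-s) * x ^ 2 ≤ Φ x (f x) (r x / x) (r x / x) * x ^ 2 ∧
      0 ≤ Φ x (f x) (r x / x) (r x / x) * x ^ 2 := by
    intro f r H x hx
    have hx0 := hx.1
    have hf := H.pos x
    have hr := div_pos (H.rpos x hx) hx0
    have h1 := hG x ⟨hx.1.le, hx.2.le⟩ _ hf _ hr _ hr
    have h2 := hφpos _ hr
    have h3 := hφpos _ hf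
    have hd : 0 < f x * (r x / x) * (r x / x) := by positivity
    have h4 := hhpos _ hd
    have h5 := hH1 _ hf
    have h6 := hH3 _ hd
    have h7 : 0 ≤ x ^ 2 := by positivity
    refine ⟨mul_le_mul_of_nonneg_right ?_ h7, mul_le_mul_of_nonneg_right ?_ h7,
      mul_le_mul_of_nonneg_right ?_ h7, mul_nonneg ?_ h7⟩ <;> linarith
  have hE0 : ∀ f r, Good Φ lam f r → 0 ≤ Imec Φ r f := fun f r H =>
    setIntegral_nonneg measurableSet_Ioo fun x hx => (hgrow f r H x hx).2.2.2
  have hlow : ∀ f r, Good Φ lam f r → ∀ x ∈ Ioo (0:ℝ) 1,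
      x ^ 6 ≤ 9 * (Imec Φ r f / K + 1) * r x ^ 3 := fun f r H =>
    lower_aux f r _ K s hK hs1 H.meas H.pos H.int H.mono H.rpos H.left H.eint
      (fun x hx => (hgrow f r H x hx).2.2.2) (fun x hx => (hgrow f r H x hx).2.2.1)
  have hpm : ∀ r : ℝ → ℝ, Monotone r → AEStronglyMeasurable
      (fun R => ρ0 R * Mfun ρ0 R * (r R)⁻¹ * R ^ 2) (volume.restrict (Ioo (0:ℝ) 1)) := by
    intro r hr
    exact ((hρmeas.aestronglyMeasurable.mul hMm).mul hr.measurable.inv.aestronglyMeasurable).mul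
      (by fun_prop)
  set P : ℝ := 4 * π * k1 ^ 2 with hP
  have hPp : 0 < P := by have := pi_pos; positivity
  have hpot : ∀ f r, Good Φ lam f r → ∀ A > 0,
      Ipot ρ0 r ≤ P * (A + 9 * (Imec Φ r f / K + 1) / A ^ 2) := by
    intro f r H A hA
    have hb : ∀ x ∈ Ioo (0:ℝ) 1, ‖ρ0 x * Mfun ρ0 x * (r x)⁻¹ * x ^ 2‖ ≤
        P * (A + 9 * (Imec Φ r f / K + 1) / A ^ 2) := fun x hx =>
      pot_bound ρ0 k0 k1 hk0 hρ hM r _ A hA x hx (H.rpos x hx) (hlow f r H x hx)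
    have := norm_setIntegral_le_of_norm_le_const (μ := volume) (s := Ioo (0:ℝ) 1) (by simp) hb
    simp only [Measure.real, Real.volume_Ioo, sub_zero, ENNReal.ofReal_one, ENNReal.toReal_one, mul_one] at this
    exact (le_abs_self _).trans this
  obtain ⟨cst, hcst⟩ : ∃ c : ℝ, ∀ f r, Good Φ lam f r → Imec Φ r f / 2 - c ≤ Imec Φ r f - Ipot ρ0 r := by
    set A := 18 * P / K + 1 with hA
    have hA1 : 1 ≤ A := by have : 0 ≤ 18 * P / K := by positivity
                           linarith
    refine ⟨P * (A + 9), fun f r H => ?_⟩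
    have h1 := hpot f r H A (by linarith)
    have h2 := hE0 f r H
    set E := Imec Φ r f
    have h3 : A ≤ A ^ 2 := by nlinarith
    have h4 : 9 * (E / K + 1) / A ^ 2 ≤ 9 * (E / K + 1) / A := by
      gcongr
    have h5 : P * (9 * (E / K) / A) ≤ E / 2 := by
      have : P * (9 * (E / K) / A) = E * ((9 * P / K) / A) := by field_simp
      rw [this]
      have : (9 * P / K) / A ≤ 1 / 2 := by
        rw [div_le_iff₀ (by linarith), hA]
        have : 18 * P / K = 2 * (9 * P / K) := by ring
        linarith
      nlinarith
    have h6 : P * (9 / A) ≤ P * 9 := by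
      gcongr
      exact div_le_self (by norm_num) hA1
    have h7 : P * (A + 9 * (E / K + 1) / A ^ 2) ≤ P * (A + 9 * (E / K + 1) / A) := by gcongr
    have h8 : P * (A + 9 * (E / K + 1) / A) = P * A + P * (9 * (E / K) / A) + P * (9 / A) := by ring
    linarith
  -- the set of values
  set S : Set ℝ := {y | ∃ r r', Adm Φ lam r r' ∧ y = Ifun Φ ρ0 r r'} with hS
  have hSlow : BddBelow S := by
    refine ⟨-cst, ?_⟩
    rintro _ ⟨r, r', H, rfl⟩
    obtain ⟨f, ρ, Hg, e1, e2⟩ := good_of_adm Φ lam r r' ρ0 H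
    have h1 := hcst f ρ Hg
    have h2 := hE0 f ρ Hg
    rw [Ifun, ← e1, ← e2]; linarith
  have hSne : S.Nonempty := by
    refine ⟨_, fun x => lam * x, fun _ => lam, ⟨by simp, ?_, ?_, by simp, by simp, ?_⟩, rfl⟩
    · intro x hx; simp [mul_comm]
    · exact ae_of_all _ fun _ => hlam
    · have hc : ContinuousOn (fun R : ℝ => Φ R lam lam lam * R ^ 2) (Icc 0 1) := by
        refine ContinuousOn.mul ?_ (by fun_prop)
        exact hΦcont.comp (f := fun R : ℝ => (R, lam, lam, lam)) (by fun_prop)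
          (fun x hx => ⟨hx, hlam, hlam, hlam⟩)
      refine ((hc.integrableOn_Icc).mono_set Ioo_subset_Icc_self).congr_fun (fun x hx => ?_) measurableSet_Ioo
      have : lam * x / x = lam := by have := hx.1.ne'; field_simp
      simp only [this]
  obtain ⟨y, hyanti, hylim, hyS⟩ := exists_seq_tendsto_sInf hSne hSlow
  have hch : ∀ n, ∃ f ρ, Good Φ lam f ρ ∧ Imec Φ ρ f - Ipot ρ0 ρ = y n := by
    intro n
    obtain ⟨r, r', H, hy⟩ := hyS n
    obtain ⟨f, ρ, Hg, e1, e2⟩ := good_of_adm Φ lam r r' ρ0 H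
    exact ⟨f, ρ, Hg, by rw [e1, e2, hy, Ifun]⟩
  choose f0 ρs0 Hg0 hy0 using hch
  obtain ⟨σ, G, hσ, hGm, hGb, hGlim⟩ := helly_aux ρs0 lam (fun n => (Hg0 n).mono) (fun n => (Hg0 n).bd)
  set f : ℕ → ℝ → ℝ := fun n => f0 (σ n) with hf
  set ρ : ℕ → ℝ → ℝ := fun n => ρs0 (σ n) with hρd
  have Hg : ∀ n, Good Φ lam (f n) (ρ n) := fun n => Hg0 (σ n)
  set E0 : ℝ := 2 * (y 0 + cst) with hE0d
  have hEle : ∀ n, Imec Φ (ρ n) (f n) ≤ E0 := by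
    intro n
    have h1 := hcst _ _ (Hg n)
    have h2 : Imec Φ (ρ n) (f n) - Ipot ρ0 (ρ n) = y (σ n) := hy0 (σ n)
    have h3 := hyanti (Nat.zero_le (σ n))
    linarith
  have hGlim' : ∀ᵐ x ∂volume.restrict (Ioo (0:ℝ) 1), Tendsto (fun n => ρ n x) atTop (𝓝 (G x)) :=
    ae_restrict_of_ae hGlim
  have hlowu : ∀ n, ∀ x ∈ Ioo (0:ℝ) 1, x ^ 6 ≤ 9 * (E0 / K + 1) * ρ n x ^ 3 := by
    intro n x hx
    have h1 := hEle n
    have h2 := (Hg n).rpos x hx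
    refine (hlow _ _ (Hg n) x hx).trans ?_
    gcongr
  have hpotlim : Tendsto (fun n => Ipot ρ0 (ρ n)) atTop (𝓝 (Ipot ρ0 G)) := by
    refine tendsto_integral_of_dominated_convergence (fun _ => P * (1 + 9 * (E0 / K + 1) / 1 ^ 2))
      (fun n => hpm _ (Hg n).mono) (integrable_const _) (fun n => ?_) ?_
    · filter_upwards [ae_restrict_mem measurableSet_Ioo] with x hx
      exact pot_bound ρ0 k0 k1 hk0 hρ hM _ _ 1 one_pos x hx ((Hg n).rpos x hx) (hlowu n x hx)
    · filter_upwards [hGlim', ae_restrict_mem measurableSet_Ioo] with x hx hxm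
      have hG0 : G x ≠ 0 := by
        intro h0
        have h1 := le_of_tendsto_of_tendsto' tendsto_const_nhds ((hx.pow 3).const_mul (9 * (E0 / K + 1)))
          (fun n => hlowu n x hxm)
        rw [h0] at h1
        have := pow_pos hxm.1 6
        norm_num at h1
        linarith
      exact ((hx.inv₀ hG0).const_mul _).mul_const _
  set m' := sInf S + Ipot ρ0 G with hm'
  have hmeclim : Tendsto (fun n => Imec Φ (ρ n) (f n)) atTop (𝓝 m') := by
    refine ((hylim.comp hσ.tendsto_atTop).add hpotlim).congr fun n => ?_
    have h2 : Imec Φ (ρ n) (f n) - Ipot ρ0 (ρ n) = y (σ n) := hy0 (σ n)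
    simp only [Function.comp]
    linarith
  have hωex := fun x => dom_aux (fun n => ρ n x) (G x) lam (fun n => by
    have h1 := (Hg n).bd x
    have h2 := hGb x
    rw [abs_le]; constructor <;> linarith [h1.1, h1.2, h2.1, h2.2])
  choose ω hωa hωb hωl using hωex
  obtain ⟨w, hwa, hwb, hwl⟩ := dom_aux (fun n => Imec Φ (ρ n) (f n)) m' (E0 + |m'|) (fun n => by
    have h1 := hEle n
    have h2 := hE0 _ _ (Hg n)
    have h3 := le_abs_self m'
    have h4 := neg_abs_le m'
    rw [abs_le]; constructor <;> linarith)
  have hwl := hwl hmeclim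
  set η : ℝ → ℝ → ℝ := fun a M => M ^ (1 - γ) * (E0 / (C * a ^ 2)) with hη
  set V : ℕ → Set (ℝ → ℝ) := fun n => VSet g h G lam η (fun x => ω x n) (m' + w n) with hV
  have hfV : ∀ n, f n ∈ V n := by
    intro n
    have H := Hg n
    have hω1 : ∀ x, |ρ n x - G x| ≤ ω x n := fun x => hωb x n n le_rfl
    refine ⟨H.meas, H.pos, H.int, H.tot, ?_, ?_, ρ n, fun x => f n x * ρ n x ^ 2,
      fun x => Φ x (f n x) (ρ n x / x) (ρ n x / x) * x ^ 2, ?_, H.eint, ?_⟩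
    · intro a ha
      rw [H.right a ha]
      have := hω1 a
      rw [abs_sub_comm] at this
      convert this using 2
      ring
    · intro a ha M hMp
      refine (trunc_aux (f n) _ C γ hC hγ1 H.pos H.int H.eint (fun x hx => (hgrow _ _ H x hx).2.2.2)
        (fun x hx => (hgrow _ _ H x hx).1) a ha M hMp).trans ?_
      have h1 := rpow_pos_of_pos hMp (1 - γ)
      have h2 := hEle n
      have ha0 := ha.1
      simp only [hη]
      unfold Imec at h2
      gcongr
    · intro x hx
      have hx0 := hx.1
      have hr := H.rpos x hx
      have hfx := H.pos x
      have hd : f n x * (ρ n x / x) * (ρ n x / x) = f n x * ρ n x ^ 2 / x ^ 2 := by field_simp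
      refine ⟨hr, by positivity, hω1 x, ?_, ?_, ?_⟩
      · have e1 : f n x * ρ n x ^ 2 - f n x * G x ^ 2 = (ρ n x - G x) * ((ρ n x + G x) * f n x) := by ring
        have h1 := H.bd x
        have h2 := hGb x
        have h3 : 0 ≤ (ρ n x + G x) * f n x := mul_nonneg (by linarith [h1.1, h2.1]) hfx.le
        rw [e1, abs_mul, abs_of_nonneg h3]
        have h4 : (ρ n x + G x) * f n x ≤ (2 * lam) * f n x := by
          apply mul_le_mul_of_nonneg_right _ hfx.le
          linarith [h1.2, h2.2]
        have h5 := hω1 x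
        calc |ρ n x - G x| * ((ρ n x + G x) * f n x) ≤ ω x n * ((2 * lam) * f n x) :=
              mul_le_mul h5 h4 h3 ((abs_nonneg _).trans h5)
          _ = _ := by ring
      · rw [← hd, ← hpoly x ⟨hx.1.le, hx.2.le⟩ _ hfx _ (div_pos hr hx0) _ (div_pos hr hx0)]
      · rw [← hd]
        exact (hgrow _ _ H x hx).2.1
    · have h1 := (abs_le.1 (hwb n n le_rfl)).2
      unfold Imec at h1
      linarith
  haveI : IsProbabilityMeasure (volume.restrict (Ioo (0:ℝ) 1)) := ⟨by simp⟩
  obtain ⟨v, gt, hv, hgt, hvlim⟩ := komlos_aux (volume.restrict (Ioo (0:ℝ) 1)) V lam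
    (fun n k hnk => VSet_mono g h G lam hlam η _ _ _ _ (fun x => hωa x hnk) (by linarith [hwa hnk]))
    (fun n => ⟨f n, hfV n⟩) (fun n v hv => hv.1) (fun n v hv x => (hv.2.1 x).le)
    (fun n v hv => ⟨hv.2.2.1, hv.2.2.2.1⟩)
    (fun n => VSet_mid g h G lam η _ _ hgconv hhconv)
  have hηl : ∀ a ∈ Ioo (0:ℝ) 1, Tendsto (η a) atTop (𝓝 0) := by
    intro a ha
    have h1 := (tendsto_rpow_neg_atTop (show 0 < γ - 1 by linarith)).mul_const (E0 / (C * a ^ 2))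
    rw [zero_mul] at h1
    refine h1.congr fun M => ?_
    simp only [hη, neg_sub]
  obtain ⟨A1, A2, A3, A4, A5, A6⟩ := limit_main Φ hΦ0 hΦcont g hgcont hpoly h K s hK (by linarith) hH3
    G lam hlam hGm (fun x => (hGb x).1) η hηl (fun n x => ω x n)
    (hGlim'.mono fun x hx => hωl x hx) (fun n => m' + w n) m'
    (by simpa using hwl.const_add m') v gt hgt hv hvlim
  have hII : IntervalIntegrable gt volume 0 1 := by
    rw [intervalIntegrable_iff_integrableOn_Ioo_of_le zero_le_one]; exact A1
  have hII' : ∀ a ∈ Icc (0:ℝ) 1, ∀ b ∈ Icc (0:ℝ) 1, IntervalIntegrable gt volume a b := by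
    intro a ha b hb
    apply hII.mono_set
    rw [uIcc_of_le zero_le_one]
    exact uIcc_subset_Icc ha hb
  set rl : ℝ → ℝ := fun x => lam - ∫ t in x..1, gt t with hrl
  have hrlG : ∀ᵐ x ∂volume.restrict (Ioo (0:ℝ) 1), rl x = G x := by
    filter_upwards [A3, ae_restrict_mem measurableSet_Ioo] with x hx hxm
    simp only [hrl]
    rw [intervalIntegral.integral_of_le hxm.2.le, integral_Ioc_eq_integral_Ioo, hx]; ring
  have hee : (fun R => Φ R (gt R) (rl R / R) (rl R / R) * R ^ 2) =ᵐ[volume.restrict (Ioo (0:ℝ) 1)]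
      (fun R => Φ R (gt R) (G R / R) (G R / R) * R ^ 2) := by
    filter_upwards [hrlG] with x hx
    rw [hx]
  refine ⟨rl, gt, ⟨hII, ?_, A4, ?_, ?_, ?_⟩, ?_⟩
  · intro x hx
    simp only [hrl]
    rw [← intervalIntegral.integral_add_adjacent_intervals (hII' 0 (by simp) x hx) (hII' x hx 1 (by simp))]
    ring
  · simp [hrl]
  · simp only [hrl]
    rw [intervalIntegral.integral_of_le zero_le_one, integral_Ioc_eq_integral_Ioo]
    linarith
  · exact Integrable.congr A5 hee.symm
  · intro r r' H
    have h1 : sInf S ≤ Ifun Φ ρ0 r r' := csInf_le hSlow ⟨r, r', H, rfl⟩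
    have h2 : Imec Φ rl gt ≤ m' := by
      unfold Imec
      rw [integral_congr_ae hee]; exact A6
    have h3 : Ipot ρ0 rl = Ipot ρ0 G := by
      unfold Ipot
      apply integral_congr_ae
      filter_upwards [hrlG] with x hx
      rw [hx]
    have h4 : Ifun Φ ρ0 rl gt = Imec Φ rl gt - Ipot ρ0 rl := rfl
    rw [h4, h3]
    linarith
end

section
/- Assume 0≤ρ0(R)≤k1 on [0,1] and that Φ satisfies the growth condition (G) with (H1) and (H3). Then there exists a constant c>0, depending only on k1, C, γ and s, such that for every λ>0 and every r ∈ A_λ one has ∫₀¹ ρ0(R) M_R R² / r(R)² dR ≤ c (∫₀¹ δ_r(R)^{−s} R² dR)^{1/s} (I_mec(r))^{1/γ}. -/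
open MeasureTheory Real Set Filter

theorem Mfun_bounds (k1 : ℝ) (ρ0 : ℝ → ℝ) (hm : Measurable ρ0)
    (hb : ∀ R ∈ Icc (0:ℝ) 1, 0 ≤ ρ0 R ∧ ρ0 R ≤ k1) (R : ℝ) (hR : R ∈ Ioo (0:ℝ) 1) :
    0 ≤ Mfun ρ0 R ∧ Mfun ρ0 R ≤ 4 * π * k1 * R ^ 3 := by
  have hR0 := hR.1
  have hR1 := hR.2
  have hint2 : IntervalIntegrable (fun u : ℝ => k1 * R ^ 2) volume 0 R :=
    intervalIntegrable_const
  have hbd : ∀ u ∈ Icc 0 R, 0 ≤ ρ0 u * u ^ 2 ∧ ρ0 u * u ^ 2 ≤ k1 * R ^ 2 := by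
    intro u hu
    obtain ⟨h0, h1⟩ := hb u ⟨hu.1, hu.2.trans hR1.le⟩
    have : u ^ 2 ≤ R ^ 2 := pow_le_pow_left₀ hu.1 hu.2 2
    exact ⟨by positivity, mul_le_mul h1 this (by positivity) (h0.trans h1)⟩
  have hint1 : IntervalIntegrable (fun u : ℝ => ρ0 u * u ^ 2) volume 0 R := by
    refine hint2.mono_fun (by fun_prop) ?_
    rw [uIoc_of_le hR0.le]
    filter_upwards [ae_restrict_mem measurableSet_Ioc] with u hu
    obtain ⟨h0, h1⟩ := hbd u ⟨hu.1.le, hu.2⟩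
    rw [Real.norm_of_nonneg h0, Real.norm_of_nonneg (h0.trans h1)]
    exact h1
  have hp := Real.pi_pos
  constructor
  · have := intervalIntegral.integral_nonneg (μ := volume) hR0.le (fun u hu => (hbd u hu).1)
    unfold Mfun
    positivity
  · have := intervalIntegral.integral_mono_on hR0.le hint1 hint2 (fun u hu => (hbd u hu).2)
    rw [intervalIntegral.integral_const] at this
    unfold Mfun
    have h2 := mul_le_mul_of_nonneg_left this (by positivity : 0 ≤ 4 * π)
    refine h2.trans (le_of_eq ?_)
    simp only [smul_eq_mul]
    ring

theorem Lp_mono_real {μ : Measure ℝ} [IsProbabilityMeasure μ] {q s : ℝ} (hq : 1 < q)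
    (hqs : q ≤ s) {g : ℝ → ℝ} (hg0 : 0 ≤ᵐ[μ] g) (hg : MemLp g (ENNReal.ofReal s) μ) :
    (∫ x, g x ^ q ∂μ) ^ (1 / q) ≤ (∫ x, g x ^ s ∂μ) ^ (1 / s) := by
  have hle : ENNReal.ofReal q ≤ ENNReal.ofReal s := ENNReal.ofReal_le_ofReal hqs
  have hgq : MemLp g (ENNReal.ofReal q) μ := hg.mono_exponent hle
  have key : ∀ p : ℝ, 1 < p → MemLp g (ENNReal.ofReal p) μ →
      eLpNorm g (ENNReal.ofReal p) μ = ENNReal.ofReal ((∫ x, g x ^ p ∂μ) ^ (1 / p)) := by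
    intro p hp hgp
    have hp0 : 0 < p := by linarith
    rw [hgp.eLpNorm_eq_integral_rpow_norm (by simpa using hp0) (by simp),
      ENNReal.toReal_ofReal hp0.le, one_div]
    congr 2
    refine integral_congr_ae ?_
    filter_upwards [hg0] with x hx
    simp only [Real.norm_of_nonneg hx]
  have h := eLpNorm_le_eLpNorm_of_exponent_le (μ := μ) hle hg.1
  rw [key q hq hgq, key s (by linarith) hg] at h
  refine (ENNReal.ofReal_le_ofReal_iff ?_).1 h
  refine Real.rpow_nonneg (integral_nonneg_of_ae ?_) _
  filter_upwards [hg0] with x hx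
  exact Real.rpow_nonneg hx _

theorem memLp_of_rpow {μ : Measure ℝ} {p : ℝ} (hp : 1 < p) {g : ℝ → ℝ} (hg0 : 0 ≤ᵐ[μ] g)
    (hm : AEStronglyMeasurable g μ) (hi : Integrable (fun x => g x ^ p) μ) :
    MemLp g (ENNReal.ofReal p) μ := by
  have hp0 : 0 < p := by linarith
  refine (integrable_norm_rpow_iff hm (by simpa using hp0) (by simp)).1 ?_
  rw [ENNReal.toReal_ofReal hp0.le]
  refine hi.congr ?_
  filter_upwards [hg0] with x hx
  simp only [Real.norm_of_nonneg hx]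

theorem stmt6 (k1 C γ s : ℝ) (hk1 : 0 < k1) (hC : 0 < C) (hγ1 : 1 < γ) (hγ3 : γ < 3)
    (hs : γ / (γ - 1) ≤ s) :
    ∃ c > (0:ℝ), ∀ ρ0 : ℝ → ℝ, Measurable ρ0 →
      (∀ R ∈ Icc (0:ℝ) 1, 0 ≤ ρ0 R ∧ ρ0 R ≤ k1) →
      ∀ Φ : ℝ → ℝ → ℝ → ℝ → ℝ, ∀ φ h : ℝ → ℝ,
      (∀ t ∈ Ioi (0:ℝ), 0 < φ t) → (∀ t ∈ Ioi (0:ℝ), 0 < h t) →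
      StrictConvexOn ℝ (Ioi 0) φ → StrictConvexOn ℝ (Ioi 0) h →
      (∀ R ∈ Icc (0:ℝ) 1, ∀ v1 ∈ Ioi (0:ℝ), ∀ v2 ∈ Ioi (0:ℝ), ∀ v3 ∈ Ioi (0:ℝ),
        φ v1 + φ v2 + φ v3 + h (v1 * v2 * v3) ≤ Φ R v1 v2 v3) →
      (∀ v ∈ Ioi (0:ℝ), C * v ^ γ ≤ φ v) →
      ∀ K : ℝ, 0 < K → (∀ d ∈ Ioi (0:ℝ), K * d ^ (-s) ≤ h d) →
      ∀ lam > (0:ℝ), ∀ r r' : ℝ → ℝ, Adm Φ lam r r' →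
        (∫ R in Ioo (0:ℝ) 1, ρ0 R * Mfun ρ0 R * R ^ 2 / (r R) ^ 2) ≤
          c * (∫ R in Ioo (0:ℝ) 1, deltaR r r' R ^ (-s) * R ^ 2) ^ (1 / s) *
            Imec Φ r r' ^ (1 / γ) := by
  have hγ0 : 0 < γ := by linarith
  set q := γ / (γ - 1) with hq
  have hconj : γ.HolderConjugate q := Real.HolderConjugate.conjExponent hγ1
  have hq1 : 1 < q := hconj.symm.lt
  have hs1 : 1 < s := lt_of_lt_of_le hq1 hs
  have hs0 : 0 < s := by linarith
  have hexp : 1 / γ + 1 / s ≤ 1 := by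
    have h1 := hconj.inv_add_inv_eq_one
    have h2 : 1 / s ≤ 1 / q := one_div_le_one_div_of_le (by linarith) hs
    simp only [one_div] at *
    linarith
  have hpi := Real.pi_pos
  refine ⟨4 * π * k1 ^ 2 * (C⁻¹) ^ (1 / γ), by positivity, ?_⟩
  intro ρ0 hρm hρ Φ φ h hφ0 hh0 _ _ hG hH1 K hK hH3 lam hlam r r' hA
  obtain ⟨hr'i, hr, hr'pos, -, hr0, hIi⟩ := hA
  set μ : Measure ℝ := volume.restrict (Ioo (0:ℝ) 1) with hμ
  haveI : IsProbabilityMeasure μ := ⟨by simp [hμ]⟩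
  have hmem : ∀ᵐ R ∂μ, R ∈ Ioo (0:ℝ) 1 := ae_restrict_mem measurableSet_Ioo
  -- measurability
  have hr'm : AEMeasurable r' μ := by
    have := (intervalIntegrable_iff_integrableOn_Ioo_of_le zero_le_one).1 hr'i
    exact this.aestronglyMeasurable.aemeasurable
  have hrc : ContinuousOn r (Icc 0 1) := by
    have h1 : ContinuousOn (fun x => ∫ t in (0:ℝ)..x, r' t) (Icc 0 1) := by
      have := intervalIntegral.continuousOn_primitive_interval (a := (0:ℝ)) (b := 1)
        (f := r') (μ := volume) (by
          rw [uIcc_of_le zero_le_one]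
          exact (intervalIntegrable_iff_integrableOn_Icc_of_le zero_le_one).1 hr'i)
      rwa [uIcc_of_le zero_le_one] at this
    exact (continuousOn_const.add h1).congr hr
  have hrm : AEMeasurable r μ :=
    (hrc.mono Ioo_subset_Icc_self).aemeasurable measurableSet_Ioo
  have hrpos : ∀ x ∈ Ioo (0:ℝ) 1, 0 < r x := by
    intro x hx
    rw [hr x ⟨hx.1.le, hx.2.le⟩]
    have : 0 < ∫ t in (0:ℝ)..x, r' t := by
      have hi : IntervalIntegrable r' volume 0 x :=
        hr'i.mono_set (by
          rw [uIcc_of_le zero_le_one, uIcc_of_le hx.1.le]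
          exact Icc_subset_Icc_right hx.2.le)
      refine intervalIntegral.integral_pos_iff_support_of_nonneg_ae' ?_ hi |>.2 ⟨hx.1, ?_⟩
      · rw [uIoc_of_le hx.1.le, ← restrict_Ioo_eq_restrict_Ioc]
        have := ae_restrict_of_ae_restrict_of_subset (Ioo_subset_Ioo_right hx.2.le) hr'pos
        filter_upwards [this] with t ht using ht.le
      · have hae := ae_restrict_of_ae_restrict_of_subset (Ioo_subset_Ioo_right hx.2.le) hr'pos
        rw [ae_restrict_iff' measurableSet_Ioo] at hae
        have h2 : volume (Ioo 0 x) ≤ volume (Function.support r' ∩ Ioc 0 x) := by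
          refine measure_mono_ae ?_
          filter_upwards [hae] with t ht h3
          exact ⟨(ht h3).ne', h3.1, h3.2.le⟩
        refine lt_of_lt_of_le ?_ h2
        simpa using hx.1
    linarith
  have hδpos : ∀ᵐ R ∂μ, 0 < deltaR r r' R := by
    filter_upwards [hmem, hr'pos] with R hR h1
    have := hrpos R hR
    have := hR.1
    unfold deltaR
    positivity
  have hδm : AEMeasurable (deltaR r r') μ := by
    unfold deltaR
    fun_prop
  -- pointwise bounds from the growth condition
  have hΦ : ∀ᵐ R ∂μ, C * (r' R ^ γ * R ^ 2) ≤ Φ R (r' R) (r R / R) (r R / R) * R ^ 2 ∧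
      K * (deltaR r r' R ^ (-s) * R ^ 2) ≤ Φ R (r' R) (r R / R) (r R / R) * R ^ 2 := by
    filter_upwards [hmem, hr'pos, hδpos] with R hR h1 h2
    have hv : 0 < r R / R := div_pos (hrpos R hR) hR.1
    have hg := hG R ⟨hR.1.le, hR.2.le⟩ _ h1 _ hv _ hv
    have e : r' R * (r R / R) * (r R / R) = deltaR r r' R := by unfold deltaR; ring
    rw [e] at hg
    have a1 := hφ0 _ hv
    have a2 := hφ0 _ h1
    have a3 := hh0 _ h2
    have a4 := hH1 _ h1
    have a5 := hH3 _ h2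
    have hR2 : 0 ≤ R ^ 2 := sq_nonneg R
    constructor
    · rw [← mul_assoc]; exact mul_le_mul_of_nonneg_right (by linarith) hR2
    · rw [← mul_assoc]; exact mul_le_mul_of_nonneg_right (by linarith) hR2
  have hFi : Integrable (fun R => r' R ^ γ * R ^ 2) μ := by
    refine (hIi.const_mul C⁻¹).mono' (by fun_prop) ?_
    filter_upwards [hΦ, hr'pos] with R h1 h2
    rw [Real.norm_of_nonneg (by positivity), inv_mul_eq_div, le_div_iff₀' hC]
    exact h1.1
  have hGi : Integrable (fun R => deltaR r r' R ^ (-s) * R ^ 2) μ := by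
    refine (hIi.const_mul K⁻¹).mono' (by fun_prop) ?_
    filter_upwards [hΦ, hδpos] with R h1 h2
    rw [Real.norm_of_nonneg (by positivity), inv_mul_eq_div, le_div_iff₀' hK]
    exact h1.2
  set f : ℝ → ℝ := fun R => r' R * R ^ (2 / γ) with hf
  set g : ℝ → ℝ := fun R => (deltaR r r' R)⁻¹ * R ^ (2 / s) with hg
  have hf0 : 0 ≤ᵐ[μ] f := by
    filter_upwards [hmem, hr'pos] with R hR h1
    have := hR.1
    simp only [hf, Pi.zero_apply]
    positivity
  have hg0 : 0 ≤ᵐ[μ] g := by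
    filter_upwards [hmem, hδpos] with R hR h1
    have := hR.1
    simp only [hg, Pi.zero_apply]
    positivity
  have hfp : (fun R => r' R ^ γ * R ^ 2) =ᵐ[μ] fun R => f R ^ γ := by
    filter_upwards [hmem, hr'pos] with R hR h1
    have := hR.1
    simp only [hf]
    rw [Real.mul_rpow h1.le (by positivity), ← Real.rpow_mul this.le,
      div_mul_cancel₀ _ hγ0.ne', Real.rpow_two]
  have hgp : (fun R => deltaR r r' R ^ (-s) * R ^ 2) =ᵐ[μ] fun R => g R ^ s := by
    filter_upwards [hmem, hδpos] with R hR h1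
    have := hR.1
    simp only [hg]
    rw [Real.mul_rpow (by positivity) (by positivity), ← Real.rpow_mul this.le,
      div_mul_cancel₀ _ hs0.ne', Real.rpow_two, Real.inv_rpow h1.le, Real.rpow_neg h1.le]
  have hfm : AEStronglyMeasurable f μ := by
    have : AEMeasurable f μ := by simp only [hf]; fun_prop
    exact this.aestronglyMeasurable
  have hgm : AEStronglyMeasurable g μ := by
    have : AEMeasurable g μ := by simp only [hg]; fun_prop
    exact this.aestronglyMeasurable
  have hfL : MemLp f (ENNReal.ofReal γ) μ := memLp_of_rpow hγ1 hf0 hfm (hFi.congr hfp)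
  have hgL : MemLp g (ENNReal.ofReal s) μ := memLp_of_rpow hs1 hg0 hgm (hGi.congr hgp)
  have hgLq : MemLp g (ENNReal.ofReal q) μ :=
    hgL.mono_exponent (ENNReal.ofReal_le_ofReal hs)
  have hHol := integral_mul_le_Lp_mul_Lq_of_nonneg hconj hf0 hg0 hfL hgLq
  have hmono := Lp_mono_real hq1 hs hg0 hgL
  have hfgi : Integrable (fun R => f R * g R) μ := by
    haveI : ENNReal.HolderConjugate (ENNReal.ofReal γ) (ENNReal.ofReal q) :=
      hconj.ennrealOfReal
    exact hfL.integrable_mul hgLq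
  -- the pointwise bound of the left-hand side
  have hL : (∫ R, ρ0 R * Mfun ρ0 R * R ^ 2 / (r R) ^ 2 ∂μ) ≤
      ∫ R, 4 * π * k1 ^ 2 * (f R * g R) ∂μ := by
    refine integral_mono_of_nonneg ?_ (hfgi.const_mul _) ?_
    · filter_upwards [hmem] with R hR
      have := (Mfun_bounds k1 ρ0 hρm hρ R hR).1
      have := (hρ R ⟨hR.1.le, hR.2.le⟩).1
      simp only [Pi.zero_apply]
      positivity
    · filter_upwards [hmem, hr'pos, hδpos] with R hR h1 h2
      obtain ⟨m0, m1⟩ := Mfun_bounds k1 ρ0 hρm hρ R hR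
      obtain ⟨p0, p1⟩ := hρ R ⟨hR.1.le, hR.2.le⟩
      have hR0 := hR.1
      have hrR := hrpos R hR
      have e1 : ρ0 R * Mfun ρ0 R ≤ k1 * (4 * π * k1 * R ^ 3) :=
        mul_le_mul p1 m1 m0 hk1.le
      have e2 : R ^ 3 ≤ R ^ (2 / γ) * R ^ (2 / s) := by
        rw [← Real.rpow_add hR0, ← Real.rpow_natCast]
        refine Real.rpow_le_rpow_of_exponent_ge hR0 hR.2.le ?_
        have : 2 / γ + 2 / s = 2 * (1 / γ + 1 / s) := by ring
        rw [this]
        push_cast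
        linarith
      have e3 : R ^ 2 / r R ^ 2 = r' R * (deltaR r r' R)⁻¹ := by
        unfold deltaR
        field_simp
      have e4 : 0 ≤ r' R * (deltaR r r' R)⁻¹ := by positivity
      simp only [hf, hg]
      calc ρ0 R * Mfun ρ0 R * R ^ 2 / (r R) ^ 2
          = ρ0 R * Mfun ρ0 R * (r' R * (deltaR r r' R)⁻¹) := by rw [← e3]; ring
        _ ≤ k1 * (4 * π * k1 * R ^ 3) * (r' R * (deltaR r r' R)⁻¹) :=
            mul_le_mul_of_nonneg_right e1 e4
        _ = 4 * π * k1 ^ 2 * (r' R * (deltaR r r' R)⁻¹) * R ^ 3 := by ring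
        _ ≤ 4 * π * k1 ^ 2 * (r' R * (deltaR r r' R)⁻¹) * (R ^ (2 / γ) * R ^ (2 / s)) :=
            mul_le_mul_of_nonneg_left e2 (by positivity)
        _ = _ := by ring
  rw [integral_const_mul] at hL
  have hFint : (∫ R, f R ^ γ ∂μ) ≤ C⁻¹ * Imec Φ r r' := by
    rw [← integral_congr_ae hfp]
    unfold Imec
    rw [← integral_const_mul]
    refine integral_mono_ae hFi (hIi.const_mul _) ?_
    filter_upwards [hΦ] with R h1
    rw [inv_mul_eq_div, le_div_iff₀' hC]
    exact h1.1
  have hF0 : 0 ≤ ∫ R, f R ^ γ ∂μ := by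
    refine integral_nonneg_of_ae ?_
    filter_upwards [hf0] with R h1 using Real.rpow_nonneg h1 _
  have hG0 : 0 ≤ ∫ R, g R ^ s ∂μ := by
    refine integral_nonneg_of_ae ?_
    filter_upwards [hg0] with R h1 using Real.rpow_nonneg h1 _
  have hI0 : 0 ≤ Imec Φ r r' := by
    have := hF0.trans hFint
    exact nonneg_of_mul_nonneg_right this (by positivity)
  have hFp : (∫ R, f R ^ γ ∂μ) ^ (1 / γ) ≤ (C⁻¹) ^ (1 / γ) * Imec Φ r r' ^ (1 / γ) := by
    rw [← Real.mul_rpow (by positivity) hI0]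
    exact Real.rpow_le_rpow hF0 hFint (by positivity)
  rw [integral_congr_ae hgp]
  have hfin : (∫ R, f R * g R ∂μ) ≤
      ((C⁻¹) ^ (1 / γ) * Imec Φ r r' ^ (1 / γ)) * (∫ R, g R ^ s ∂μ) ^ (1 / s) := by
    refine hHol.trans ?_
    refine (mul_le_mul_of_nonneg_left hmono (Real.rpow_nonneg hF0 _)).trans ?_
    exact mul_le_mul_of_nonneg_right hFp (Real.rpow_nonneg hG0 _)
  refine hL.trans ((mul_le_mul_of_nonneg_left hfin (by positivity)).trans (le_of_eq ?_))
  ring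
end

section
/- Let Φ:[0,1]×(0,∞)³→[0,∞) be C¹ and let r ∈ C¹((0,1)) satisfy r(R)>0, r'(R)>0 on (0,1), with R ↦ R²Φ_{,1}(R,r(R)) differentiable on (0,1) and satisfying the Euler–Lagrange equation d/dR[R² Φ_{,1}(R,r(R))] = 2R Φ_{,2}(R,r(R)) + R² ρ0(R) M_R / r(R)². Then the radial Cauchy stress T(R) := (R²/r(R)²) Φ_{,1}(R,r(R)) is differentiable on (0,1) with T'(R) = (2R²/r(R)³)[ (r(R)/R) Φ_{,2}(R,r(R)) − r'(R) Φ_{,1}(R,r(R)) ] + R² ρ0(R) M_R / r(R)⁴. In particular, if ρ0(R)>0 and the Baker–Ericksen inequality holds at R (i.e. r'(R)Φ_{,1}(R,r(R)) < (r(R)/R)Φ_{,2}(R,r(R)) whenever r'(R) < r(R)/R), then T'(R)>0 at every R∈(0,1) with r'(R) < r(R)/R. -/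
open MeasureTheory Real Set Filter

theorem stmt8 (ρ0 : ℝ → ℝ) (hρmeas : Measurable ρ0) (hρnn : ∀ u ∈ Icc (0:ℝ) 1, 0 ≤ ρ0 u)
    (r r' : ℝ → ℝ)
    -- `P1 R = Φ_{,1}(R, r(R))` and `P2 R = Φ_{,2}(R, r(R))`, i.e. the partial derivatives
    -- of the stored energy evaluated along the deformation
    (P1 P2 : ℝ → ℝ)
    -- `r ∈ C¹((0,1))` with `r > 0`, `r' > 0`
    (hr : ∀ R ∈ Ioo (0:ℝ) 1, HasDerivAt r (r' R) R)
    (hr'cont : ContinuousOn r' (Ioo (0:ℝ) 1))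
    (hrpos : ∀ R ∈ Ioo (0:ℝ) 1, 0 < r R) (hr'pos : ∀ R ∈ Ioo (0:ℝ) 1, 0 < r' R)
    -- `R ↦ R² Φ_{,1}(R,r(R))` is differentiable and satisfies the Euler--Lagrange equation
    (hEL : ∀ R ∈ Ioo (0:ℝ) 1,
      HasDerivAt (fun S => S ^ 2 * P1 S)
        (2 * R * P2 R + R ^ 2 * ρ0 R * Mfun ρ0 R / (r R) ^ 2) R) :
    -- the radial Cauchy stress `T(R) = (R²/r(R)²) P1 R` is differentiable with the
    -- asserted derivative
    (∀ R ∈ Ioo (0:ℝ) 1,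
      HasDerivAt (fun S => S ^ 2 / (r S) ^ 2 * P1 S)
        (2 * R ^ 2 / (r R) ^ 3 * (r R / R * P2 R - r' R * P1 R) +
          R ^ 2 * ρ0 R * Mfun ρ0 R / (r R) ^ 4) R) ∧
    -- positivity of `T'` under the Baker–Ericksen inequality
    (∀ R ∈ Ioo (0:ℝ) 1, 0 < ρ0 R →
      (r' R < r R / R → r' R * P1 R < r R / R * P2 R) →
      r' R < r R / R →
      0 < 2 * R ^ 2 / (r R) ^ 3 * (r R / R * P2 R - r' R * P1 R) +
            R ^ 2 * ρ0 R * Mfun ρ0 R / (r R) ^ 4) := by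
  constructor
  · intro R hR
    have hR0 : R ≠ 0 := hR.1.ne'
    have hr0 : r R ≠ 0 := (hrpos R hR).ne'
    have h := (hEL R hR).fun_div ((hr R hR).fun_pow 2) (pow_ne_zero 2 hr0)
    have hf : (fun S => S ^ 2 / (r S) ^ 2 * P1 S) = fun S => S ^ 2 * P1 S / (r S) ^ 2 := by
      funext S
      ring
    rw [hf]
    refine h.congr_deriv ?_
    field_simp
    push_cast
    ring
  · intro R hR hρ hBE hlt
    have hrp := hrpos R hR
    have hR0 := hR.1
    have hM : 0 ≤ Mfun ρ0 R := by
      unfold Mfun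
      have : 0 ≤ ∫ u in (0:ℝ)..R, ρ0 u * u ^ 2 := by
        apply intervalIntegral.integral_nonneg hR0.le
        intro u hu
        exact mul_nonneg (hρnn u ⟨hu.1, hu.2.trans hR.2.le⟩) (sq_nonneg u)
      positivity
    have h1 : 0 < r R / R * P2 R - r' R * P1 R := sub_pos.mpr (hBE hlt)
    positivity
end

section
/- Let Φ(R,v1,v2,v3) = α(R)(φ(v1)+φ(v2)+φ(v3)) + h(v1v2v3), where α ∈ C¹([0,1]) is positive with α'(R) ≤ 0 for all R, φ:(0,∞)→[0,∞) is convex and differentiable with φ'(t) ≥ 0 for all t, and h:(0,∞)→(0,∞) is strictly convex and differentiable, attaining its global minimum at d₀>0. Assume 0<k0≤ρ0(R)≤k1 on [0,1]. Let λ>0 with λ³ < d₀ and let r be a minimizer of I over A_λ. Then r(0)=0. -/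
open MeasureTheory Real Set Filter

lemma tangent_le {f : ℝ → ℝ} (hf : ConvexOn ℝ (Ioi 0) f) {f' x y : ℝ} (hx : 0 < x) (hy : 0 < y)
    (hd : HasDerivAt f f' x) : f x + f' * (y - x) ≤ f y := by
  rcases lt_trichotomy x y with hxy | hxy | hxy
  · have := hf.le_slope_of_hasDerivAt (mem_Ioi.2 hx) (mem_Ioi.2 hy) hxy hd
    rw [slope_def_field, le_div_iff₀ (by linarith)] at this
    linarith
  · subst hxy; simp
  · have := hf.slope_le_of_hasDerivAt (mem_Ioi.2 hy) (mem_Ioi.2 hx) hxy hd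
    rw [slope_def_field, div_le_iff₀ (by linarith)] at this
    linarith

lemma hderiv_neg {h : ℝ → ℝ} (hc : StrictConvexOn ℝ (Ioi 0) h) {x d0 h' : ℝ} (hx : 0 < x)
    (hxd : x < d0) (hd : HasDerivAt h h' x) (hmin : ∀ d ∈ Ioi (0:ℝ), h d0 ≤ h d) : h' < 0 := by
  have := hc.lt_slope_of_hasDerivAt (mem_Ioi.2 hx) (mem_Ioi.2 (hx.trans hxd)) hxd hd
  refine this.trans_le ?_
  rw [slope_def_field]
  apply div_nonpos_of_nonpos_of_nonneg
  · linarith [hmin x hx]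
  · linarith

lemma ac_id (a b : ℝ) : AbsolutelyContinuousOnInterval (fun x : ℝ => x) a b :=
  (LipschitzWith.id.lipschitzOnWith (s := uIcc a b)).absolutelyContinuousOnInterval

lemma ac_const (a b c : ℝ) : AbsolutelyContinuousOnInterval (fun _ : ℝ => c) a b :=
  ((LipschitzWith.const c).lipschitzOnWith (s := uIcc a b)).absolutelyContinuousOnInterval

lemma ac_alpha {α α' : ℝ → ℝ} (b : ℝ) (hb0 : 0 ≤ b) (hb1 : b ≤ 1)
    (hαd : ∀ R ∈ Icc (0:ℝ) 1, HasDerivWithinAt α (α' R) (Icc (0:ℝ) 1) R)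
    (hα'cont : ContinuousOn α' (Icc (0:ℝ) 1)) : AbsolutelyContinuousOnInterval α 0 b := by
  obtain ⟨C, hC⟩ := isCompact_Icc.exists_bound_of_continuousOn hα'cont
  have hL : LipschitzOnWith C.toNNReal α (Icc 0 1) := by
    apply Convex.lipschitzOnWith_of_nnnorm_hasDerivWithin_le (convex_Icc 0 1) hαd
    intro x hx
    rw [← NNReal.coe_le_coe]
    simpa using Or.inl (hC x hx)
  apply (hL.mono _).absolutelyContinuousOnInterval
  rw [uIcc_of_le hb0]
  exact Icc_subset_Icc le_rfl hb1

/-- The main comparison on the interval `[0,b]`. -/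
lemma core {α α' φ h r r' : ℝ → ℝ} {lam b c p q : ℝ} (hb0 : 0 < b) (hb1 : b ≤ 1) (hlam : 0 < lam)
    (hαd : ∀ R ∈ Icc (0:ℝ) 1, HasDerivWithinAt α (α' R) (Icc (0:ℝ) 1) R)
    (hα'cont : ContinuousOn α' (Icc (0:ℝ) 1))
    (hαpos : ∀ R ∈ Icc (0:ℝ) 1, 0 < α R)
    (hα'np : ∀ R ∈ Icc (0:ℝ) 1, α' R ≤ 0)
    (hφconv : ConvexOn ℝ (Ioi 0) φ) (hφd : HasDerivAt φ p lam) (hp : 0 ≤ p)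
    (hhconv : ConvexOn ℝ (Ioi 0) h) (hhd : HasDerivAt h q (lam ^ 3))
    (hr'int : IntervalIntegrable r' volume 0 1)
    (hr : ∀ x ∈ Icc (0:ℝ) 1, r x = c + ∫ t in (0:ℝ)..x, r' t)
    (hr'pos : ∀ᵐ R ∂volume.restrict (Ioo (0:ℝ) 1), 0 < r' R)
    (hrb : r b = lam * b) (hrgt : ∀ R ∈ Ioo 0 b, lam * R < r R)
    (hint : IntervalIntegrable (fun R => (α R * (φ (r' R) + φ (r R / R) + φ (r R / R)) +
      h (r' R * (r R / R) * (r R / R))) * R ^ 2) volume 0 b) :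
    - (q * c ^ 3 / 3) + ∫ R in (0:ℝ)..b, (α R * (φ lam + φ lam + φ lam) +
      h (lam * lam * lam)) * R ^ 2 ≤ ∫ R in (0:ℝ)..b, (α R * (φ (r' R) + φ (r R / R) + φ (r R / R)) +
      h (r' R * (r R / R) * (r R / R))) * R ^ 2 := by
  have hsub : uIcc 0 b ⊆ uIcc (0:ℝ) 1 := by
    rw [uIcc_of_le hb0.le, uIcc_of_le zero_le_one]; exact Icc_subset_Icc le_rfl hb1
  have hαcont : ContinuousOn α (Icc 0 1) := fun R hR => (hαd R hR).continuousWithinAt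
  set g : ℝ → ℝ := fun x => c + ∫ t in (0:ℝ)..x, r' t with hg
  have hgac : AbsolutelyContinuousOnInterval g 0 b :=
    (ac_const 0 b c).fun_add
      ((hr'int.absolutelyContinuousOnInterval_intervalIntegral (by simp)).mono hsub)
  set F : ℝ → ℝ := fun x => p * (α x * (x * x * (g x - lam * x)))
    + q / 3 * (g x * g x * g x - lam ^ 3 * (x * x * x)) with hF
  have hid := ac_id 0 b
  have hFac : AbsolutelyContinuousOnInterval F 0 b := by
    have hα := ac_alpha b hb0.le hb1 hαd hα'cont
    apply AbsolutelyContinuousOnInterval.fun_add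
    · exact (ac_const 0 b p).fun_mul (hα.fun_mul ((hid.fun_mul hid).fun_mul
        (hgac.fun_sub ((ac_const 0 b lam).fun_mul hid))))
    · exact (ac_const 0 b _).fun_mul (((hgac.fun_mul hgac).fun_mul hgac).fun_sub
        ((ac_const 0 b _).fun_mul ((hid.fun_mul hid).fun_mul hid)))
  have hFint := hFac.integral_deriv_eq_sub
  have hgb : g b = lam * b := by rw [← hrb, hr b ⟨hb0.le, hb1⟩]
  have hg0 : g 0 = c := by simp [hg]
  have hFv : F b - F 0 = - (q * c ^ 3 / 3) := by
    simp only [hF, hgb, hg0]; ring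
  have hsint : IntervalIntegrable (fun R => (α R * (φ lam + φ lam + φ lam) +
      h (lam * lam * lam)) * R ^ 2) volume 0 b := by
    apply ContinuousOn.intervalIntegrable
    rw [uIcc_of_le hb0.le]
    have := hαcont.mono (Icc_subset_Icc le_rfl hb1)
    fun_prop
  rw [← hFv, ← hFint, ← intervalIntegral.integral_add hFac.intervalIntegrable_deriv hsint,
    intervalIntegral.integral_of_le hb0.le, intervalIntegral.integral_of_le hb0.le,
    integral_Ioc_eq_integral_Ioo, integral_Ioc_eq_integral_Ioo]
  apply setIntegral_mono_ae_restrict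
  · exact (((intervalIntegrable_iff_integrableOn_Ioo_of_le hb0.le).1
      hFac.intervalIntegrable_deriv).add
      ((intervalIntegrable_iff_integrableOn_Ioo_of_le hb0.le).1 hsint))
  · exact (intervalIntegrable_iff_integrableOn_Ioo_of_le hb0.le).1 hint
  have hposb : ∀ᵐ R ∂volume.restrict (Ioo (0:ℝ) b), 0 < r' R :=
    ae_restrict_of_ae_restrict_of_subset (Ioo_subset_Ioo le_rfl hb1) hr'pos
  filter_upwards [hposb, ae_restrict_mem measurableSet_Ioo,
    ae_restrict_of_ae hr'int.ae_hasDerivAt_integral] with R hR1 hR2 hR3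
  have hR01 : R ∈ Icc (0:ℝ) 1 := ⟨hR2.1.le, hR2.2.le.trans hb1⟩
  have hRpos := hR2.1
  have hgd : HasDerivAt g (r' R) R :=
    (hR3 (by rwa [uIcc_of_le zero_le_one]) 0 (by simp)).const_add c
  have hαR : HasDerivAt α (α' R) R :=
    (hαd R hR01).hasDerivAt (Icc_mem_nhds hR2.1 (hR2.2.trans_le hb1))
  have hi := hasDerivAt_id' R
  have hFd : HasDerivAt F (p * (α' R * (R * R * (g R - lam * R)) + α R * ((1 * R + R * 1) *
      (g R - lam * R) + R * R * (r' R - lam * 1)))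
    + q / 3 * ((r' R * g R + g R * r' R) * g R + g R * g R * r' R
      - lam ^ 3 * ((1 * R + R * 1) * R + R * R * 1))) R :=
    ((hαR.mul ((hi.mul hi).mul (hgd.sub (hi.const_mul lam)))).const_mul p).add
      ((((hgd.mul hgd).mul hgd).sub (((hi.mul hi).mul hi).const_mul (lam ^ 3))).const_mul (q / 3))
  have hrg : g R = r R := (hr R hR01).symm
  have hrgt' := hrgt R hR2
  rw [hFd.deriv, hrg]
  have hrpos : 0 < r R := lt_trans (by positivity) hrgt'
  have h1 := tangent_le hφconv hlam hR1 hφd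
  have h2 := tangent_le hφconv hlam (div_pos hrpos hRpos) hφd
  have h3 := tangent_le hhconv (pow_pos hlam 3)
    (by positivity : 0 < r' R * (r R / R) * (r R / R)) hhd
  have e : lam * lam * lam = lam ^ 3 := by ring
  rw [e]
  have h4 : p * (α' R * (R * R * (r R - lam * R))) ≤ 0 := by
    apply mul_nonpos_of_nonneg_of_nonpos hp
    apply mul_nonpos_of_nonpos_of_nonneg (hα'np R hR01)
    have : 0 ≤ r R - lam * R := by linarith
    positivity
  have h5 : α R * (3 * φ lam + p * (r' R - lam) + 2 * (p * (r R / R - lam))) ≤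
      α R * (φ (r' R) + φ (r R / R) + φ (r R / R)) :=
    mul_le_mul_of_nonneg_left (by linarith) (hαpos R hR01).le
  have h6 := mul_le_mul_of_nonneg_right (add_le_add h5 h3) (sq_nonneg R)
  refine le_trans ?_ h6
  have h7 : (α R * (3 * φ lam + p * (r' R - lam) + 2 * (p * (r R / R - lam))) +
      (h (lam ^ 3) + q * (r' R * (r R / R) * (r R / R) - lam ^ 3))) * R ^ 2 =
      α R * (3 * φ lam * R ^ 2 + p * (r' R - lam) * R ^ 2 + 2 * p * (r R * R - lam * R ^ 2)) +
      (h (lam ^ 3) * R ^ 2 + q * (r' R * r R ^ 2 - lam ^ 3 * R ^ 2)) := by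
    field_simp
  rw [h7]
  linarith [h4]

lemma pot_integrable {ρ0 s : ℝ → ℝ} {k0 k1 m : ℝ} (hk0 : 0 < k0) (hm : 0 < m)
    (hρmeas : Measurable ρ0)
    (hρ : ∀ R ∈ Icc (0:ℝ) 1, k0 ≤ ρ0 R ∧ ρ0 R ≤ k1) (hs : ContinuousOn s (Icc 0 1))
    (hsm : ∀ R ∈ Icc (0:ℝ) 1, m * R ≤ s R) :
    IntegrableOn (fun R => ρ0 R * Mfun ρ0 R * (s R)⁻¹ * R ^ 2) (Ioo 0 1) := by
  have hi : IntegrableOn (fun u => ρ0 u * u ^ 2) (Icc 0 1) := by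
    apply Measure.integrableOn_of_bounded (M := k1) (by simp)
    · exact (hρmeas.mul (by fun_prop)).aestronglyMeasurable
    · filter_upwards [ae_restrict_mem measurableSet_Icc] with u hu
      have := hρ u hu
      rw [Real.norm_of_nonneg (mul_nonneg (by linarith) (sq_nonneg u))]
      have : u ^ 2 ≤ 1 := pow_le_one₀ hu.1 hu.2
      nlinarith [sq_nonneg u]
  have hM : ContinuousOn (Mfun ρ0) (Icc 0 1) := by
    unfold Mfun
    apply continuousOn_const.mul
    have := intervalIntegral.continuousOn_primitive_interval (a := (0:ℝ)) (b := 1)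
      (μ := volume) (f := fun u => ρ0 u * u ^ 2) (by rwa [uIcc_of_le zero_le_one])
    rwa [uIcc_of_le zero_le_one] at this
  obtain ⟨C, hC⟩ := isCompact_Icc.exists_bound_of_continuousOn hM
  refine Integrable.of_bound (μ := volume.restrict (Ioo (0:ℝ) 1)) ?_ (k1 * C * m⁻¹) ?_
  · have h1 := (hM.mono Ioo_subset_Icc_self).aestronglyMeasurable (μ := volume) measurableSet_Ioo
    have h2 : AEMeasurable s (volume.restrict (Ioo 0 1)) :=
      (hs.mono Ioo_subset_Icc_self).aemeasurable measurableSet_Ioo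
    have h3 : AEMeasurable (fun R : ℝ => R ^ 2) (volume.restrict (Ioo 0 1)) := by fun_prop
    exact (((hρmeas.aemeasurable.mul h1.aemeasurable).mul h2.inv).mul h3).aestronglyMeasurable
  · filter_upwards [ae_restrict_mem measurableSet_Ioo] with R hR
    have hR' := Ioo_subset_Icc_self hR
    have h1 := hρ R hR'
    have h2 := hC R hR'
    have h3 := hsm R hR'
    have hR0 := hR.1
    have hspos : 0 < s R := lt_of_lt_of_le (by positivity) h3
    have h4 : (s R)⁻¹ * R ^ 2 ≤ m⁻¹ := by
      rw [inv_mul_le_iff₀ hspos]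
      have : R ^ 2 ≤ R := by nlinarith [hR.2]
      calc R ^ 2 ≤ R := this
        _ = (m * R) * m⁻¹ := by field_simp
        _ ≤ _ := by gcongr
    rw [mul_assoc, norm_mul, norm_mul, Real.norm_of_nonneg (by positivity : 0 ≤ (s R)⁻¹ * R ^ 2),
      Real.norm_of_nonneg (by linarith : 0 ≤ ρ0 R)]
    have hk1 : 0 ≤ k1 := by linarith
    have hC0 : 0 ≤ C := (norm_nonneg _).trans h2
    gcongr
    exact h1.2

theorem stmt12 (ρ0 : ℝ → ℝ) (k0 k1 : ℝ) (hk0 : 0 < k0) (hρmeas : Measurable ρ0)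
    (hρ : ∀ R ∈ Icc (0:ℝ) 1, k0 ≤ ρ0 R ∧ ρ0 R ≤ k1)
    -- the coefficient `α ∈ C¹([0,1])`, positive and nonincreasing
    (α α' : ℝ → ℝ)
    (hαd : ∀ R ∈ Icc (0:ℝ) 1, HasDerivWithinAt α (α' R) (Icc (0:ℝ) 1) R)
    (hα'cont : ContinuousOn α' (Icc (0:ℝ) 1))
    (hαpos : ∀ R ∈ Icc (0:ℝ) 1, 0 < α R)
    (hα'np : ∀ R ∈ Icc (0:ℝ) 1, α' R ≤ 0)
    -- `φ` convex, differentiable, nonnegative, with `φ' ≥ 0`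
    (φ φ' : ℝ → ℝ) (hφconv : ConvexOn ℝ (Ioi 0) φ)
    (hφd : ∀ t ∈ Ioi (0:ℝ), HasDerivAt φ (φ' t) t)
    (hφnn : ∀ t ∈ Ioi (0:ℝ), 0 ≤ φ t) (hφ'nn : ∀ t ∈ Ioi (0:ℝ), 0 ≤ φ' t)
    -- `h` strictly convex, differentiable, positive, with global minimum at `d₀ > 0`
    (h h' : ℝ → ℝ) (hhconv : StrictConvexOn ℝ (Ioi 0) h)
    (hhd : ∀ d ∈ Ioi (0:ℝ), HasDerivAt h (h' d) d)
    (hhpos : ∀ d ∈ Ioi (0:ℝ), 0 < h d)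
    (d0 : ℝ) (hd0 : 0 < d0) (hmin0 : ∀ d ∈ Ioi (0:ℝ), h d0 ≤ h d)
    (lam : ℝ) (hlam : 0 < lam) (hlamd0 : lam ^ 3 < d0)
    (r r' : ℝ → ℝ)
    (hadm : Adm (fun R v1 v2 v3 => α R * (φ v1 + φ v2 + φ v3) + h (v1 * v2 * v3)) lam r r')
    (hminr : ∀ s s' : ℝ → ℝ,
      Adm (fun R v1 v2 v3 => α R * (φ v1 + φ v2 + φ v3) + h (v1 * v2 * v3)) lam s s' →
      Ifun (fun R v1 v2 v3 => α R * (φ v1 + φ v2 + φ v3) + h (v1 * v2 * v3)) ρ0 r r' ≤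
        Ifun (fun R v1 v2 v3 => α R * (φ v1 + φ v2 + φ v3) + h (v1 * v2 * v3)) ρ0 s s') :
    r 0 = 0 := by
  obtain ⟨hr'int, hr, hr'pos, hr1, hr0, hint⟩ := hadm
  by_contra hne
  have hc : 0 < r 0 := lt_of_le_of_ne hr0 (Ne.symm hne)
  simp only [] at hint
  -- `r` is continuous and at least `r 0`
  have hrcont : ContinuousOn r (Icc 0 1) := by
    have h1 := intervalIntegral.continuousOn_primitive_interval (a := (0:ℝ)) (b := 1)
      (μ := volume) (f := r') (((intervalIntegrable_iff' (by simp)).1 hr'int))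
    rw [uIcc_of_le zero_le_one] at h1
    exact (continuousOn_const.add h1).congr hr
  have hrge : ∀ x ∈ Icc (0:ℝ) 1, r 0 ≤ r x := by
    intro x hx
    rw [hr x hx]
    have : 0 ≤ ∫ t in (0:ℝ)..x, r' t := by
      rw [intervalIntegral.integral_of_le hx.1, integral_Ioc_eq_integral_Ioo]
      apply integral_nonneg_of_ae
      filter_upwards [ae_restrict_of_ae_restrict_of_subset (Ioo_subset_Ioo le_rfl hx.2) hr'pos]
        with t ht using ht.le
    linarith
  -- first crossing point
  obtain ⟨b, ⟨hbI, hbr⟩, hbmin⟩ : ∃ b, (b ∈ Icc (0:ℝ) 1 ∧ r b = lam * b) ∧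
      ∀ R ∈ Icc (0:ℝ) 1, r R = lam * R → b ≤ R := by
    have hK : IsCompact {R ∈ Icc (0:ℝ) 1 | (r R - lam * R) ∈ ({0} : Set ℝ)} := by
      apply isCompact_Icc.of_isClosed_subset _ (fun x hx => hx.1)
      exact ContinuousOn.preimage_isClosed_of_isClosed (f := fun R => r R - lam * R)
        (by fun_prop) isClosed_Icc isClosed_singleton
    obtain ⟨b, hb, hbl⟩ := hK.exists_isLeast ⟨1, ⟨by simp, by simp [hr1]⟩⟩
    refine ⟨b, ⟨hb.1, by have := hb.2; simp at this; linarith⟩, fun R hR h => ?_⟩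
    exact hbl ⟨hR, by simp [h]⟩
  have hb0 : 0 < b := by
    rcases hbI.1.eq_or_lt with h0 | h0
    · rw [← h0] at hbr; simp at hbr; exact absurd hbr hne
    · exact h0
  have hb1 := hbI.2
  have hrgt : ∀ R ∈ Ioo 0 b, lam * R < r R := by
    intro R hR
    by_contra hcon
    push Not at hcon
    have hIVT := intermediate_value_Icc' (f := fun R => r R - lam * R) hR.1.le
      ((hrcont.mono (Icc_subset_Icc le_rfl (hR.2.le.trans hb1))).sub (by fun_prop))
    obtain ⟨x, hx, hx0⟩ := hIVT (show (0:ℝ) ∈ _ from ⟨by linarith, by simp; linarith⟩)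
    have := hbmin x ⟨hx.1, hx.2.trans (hR.2.le.trans hb1)⟩ (by simp at hx0; linarith)
    linarith [hx.2, hR.2]
  have hIooI : IntervalIntegrable (fun R => (α R * (φ (r' R) + φ (r R / R) + φ (r R / R)) +
      h (r' R * (r R / R) * (r R / R))) * R ^ 2) volume 0 1 :=
    (intervalIntegrable_iff_integrableOn_Ioo_of_le zero_le_one).2 hint
  have hsub0 : uIcc 0 b ⊆ uIcc (0:ℝ) 1 := by
    rw [uIcc_of_le hb0.le, uIcc_of_le zero_le_one]; exact Icc_subset_Icc le_rfl hb1
  have hsub1 : uIcc b 1 ⊆ uIcc (0:ℝ) 1 := by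
    rw [uIcc_of_le hb1, uIcc_of_le zero_le_one]; exact Icc_subset_Icc hb0.le le_rfl
  have hG0 := hIooI.mono_set hsub0
  have hG1 := hIooI.mono_set hsub1
  have hcore := core hb0 hb1 hlam hαd hα'cont hαpos hα'np hφconv (hφd lam hlam) (hφ'nn lam hlam)
    hhconv.convexOn (hhd (lam ^ 3) (pow_pos hlam 3)) hr'int hr hr'pos hbr hrgt hG0
  have hq := hderiv_neg hhconv (pow_pos hlam 3) hlamd0 (hhd (lam ^ 3) (pow_pos hlam 3)) hmin0
  have hgain : 0 < - (h' (lam ^ 3) * r 0 ^ 3 / 3) := by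
    have : 0 < - h' (lam ^ 3) * r 0 ^ 3 := mul_pos (by linarith) (pow_pos hc 3)
    linarith
  -- the competitor
  set s : ℝ → ℝ := fun R => if R ≤ b then lam * R else r R with hs
  set s' : ℝ → ℝ := fun R => if R ≤ b then lam else r' R with hs'
  set Gs : ℝ → ℝ := fun R => (α R * (φ (s' R) + φ (s R / R) + φ (s R / R)) +
      h (s' R * (s R / R) * (s R / R))) * R ^ 2 with hGs
  have hs'0 : IntervalIntegrable s' volume 0 b := by
    apply (intervalIntegrable_const (c := lam)).congr
    intro x hx
    rw [uIoc_of_le hb0.le] at hx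
    simp [hs', hx.2]
  have hs'1 : IntervalIntegrable s' volume b 1 := by
    apply (hr'int.mono_set hsub1).congr
    intro x hx
    rw [uIoc_of_le hb1] at hx
    simp [hs', not_le.2 hx.1]
  have hs'int : IntervalIntegrable s' volume 0 1 := hs'0.trans hs'1
  have hs'le : ∀ x, 0 ≤ x → x ≤ b → ∫ t in (0:ℝ)..x, s' t = lam * x := by
    intro x hx0 hxb
    have : ∫ t in (0:ℝ)..x, s' t = ∫ t in (0:ℝ)..x, lam := by
      apply intervalIntegral.integral_congr
      intro t ht
      rw [uIcc_of_le hx0] at ht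
      simp [hs', ht.2.trans hxb]
    rw [this]; simp; ring
  have hs0 : s 0 = 0 := by simp [hs, hb0.le]
  have hsfund : ∀ x ∈ Icc (0:ℝ) 1, s x = s 0 + ∫ t in (0:ℝ)..x, s' t := by
    intro x hx
    rw [hs0, zero_add]
    by_cases hxb : x ≤ b
    · rw [hs'le x hx.1 hxb]; simp [hs, hxb]
    · push Not at hxb
      have hsubx : uIcc b x ⊆ uIcc (0:ℝ) 1 := by
        rw [uIcc_of_le hxb.le, uIcc_of_le zero_le_one]; exact Icc_subset_Icc hb0.le hx.2
      rw [← intervalIntegral.integral_add_adjacent_intervals hs'0 (hs'int.mono_set hsubx),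
        hs'le b hb0.le le_rfl]
      have e1 : ∫ t in b..x, s' t = ∫ t in b..x, r' t := by
        apply intervalIntegral.integral_congr_ae
        filter_upwards with t ht
        rw [uIoc_of_le hxb.le] at ht
        simp [hs', not_le.2 ht.1]
      have e2 := intervalIntegral.integral_add_adjacent_intervals (hr'int.mono_set hsub0)
        (hr'int.mono_set hsubx)
      have e3 := hr x hx
      have e4 := hr b hbI
      rw [e1]
      simp only [hs, not_le.2 hxb, if_false]
      linarith
  have hGs0eq : ∀ t ∈ Ioc 0 b, (α t * (φ lam + φ lam + φ lam) +
      h (lam * lam * lam)) * t ^ 2 = Gs t := by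
    intro t ht
    have : lam * t / t = lam := by have := ht.1.ne'; field_simp
    simp [hGs, hs, hs', ht.2, this]
  have hGs1eq : ∀ t ∈ Ioc b 1, (α t * (φ (r' t) + φ (r t / t) + φ (r t / t)) +
      h (r' t * (r t / t) * (r t / t))) * t ^ 2 = Gs t := by
    intro t ht
    simp [hGs, hs, hs', not_le.2 ht.1]
  have hαcont : ContinuousOn α (Icc 0 1) := fun R hR => (hαd R hR).continuousWithinAt
  have hGs0 : IntervalIntegrable Gs volume 0 b := by
    have : IntervalIntegrable (fun R => (α R * (φ lam + φ lam + φ lam) +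
      h (lam * lam * lam)) * R ^ 2) volume 0 b := by
      apply ContinuousOn.intervalIntegrable
      rw [uIcc_of_le hb0.le]
      have := hαcont.mono (Icc_subset_Icc le_rfl hb1)
      fun_prop
    apply this.congr
    rw [uIoc_of_le hb0.le]
    exact hGs0eq
  have hGs1 : IntervalIntegrable Gs volume b 1 := by
    apply hG1.congr
    rw [uIoc_of_le hb1]
    exact hGs1eq
  have hadms : Adm (fun R v1 v2 v3 => α R * (φ v1 + φ v2 + φ v3) + h (v1 * v2 * v3)) lam s s' := by
    refine ⟨hs'int, hsfund, ?_, ?_, hs0.ge, ?_⟩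
    · filter_upwards [hr'pos] with R hR
      by_cases hRb : R ≤ b <;> simp [hs', hRb, hlam, hR]
    · by_cases h1b : 1 ≤ b <;> simp [hs, h1b, hr1]
    · exact (intervalIntegrable_iff_integrableOn_Ioo_of_le zero_le_one).1 (hGs0.trans hGs1)
  have hscont : ContinuousOn s (Icc 0 1) := by
    have h1 := intervalIntegral.continuousOn_primitive_interval (a := (0:ℝ)) (b := 1)
      (μ := volume) (f := s') (((intervalIntegrable_iff' (by simp)).1 hs'int))
    rw [uIcc_of_le zero_le_one] at h1
    exact (continuousOn_const.add h1).congr hsfund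
  have hpotint := pot_integrable hk0 (lt_min hlam hc) hρmeas hρ hscont (by
    intro R hR
    by_cases hRb : R ≤ b
    · simp only [hs, hRb, if_true]
      exact mul_le_mul_of_nonneg_right (min_le_left _ _) hR.1
    · simp only [hs, hRb, if_false]
      calc min lam (r 0) * R ≤ r 0 * 1 :=
            mul_le_mul (min_le_right _ _) hR.2 hR.1 hc.le
        _ ≤ r R := by rw [mul_one]; exact hrge R hR)
  have hpot : Ipot ρ0 r ≤ Ipot ρ0 s := by
    have hMnn : ∀ R ∈ Ioo (0:ℝ) 1, 0 ≤ ρ0 R * Mfun ρ0 R := by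
      intro R hR
      apply mul_nonneg
      · linarith [(hρ R (Ioo_subset_Icc_self hR)).1]
      · apply mul_nonneg (by positivity)
        apply intervalIntegral.integral_nonneg hR.1.le
        intro u hu
        have := (hρ u ⟨hu.1, hu.2.trans hR.2.le⟩).1
        exact mul_nonneg (by linarith) (sq_nonneg u)
    refine integral_mono_of_nonneg ?_ hpotint ?_
    · filter_upwards [ae_restrict_mem measurableSet_Ioo] with R hR
      have h1 := hMnn R hR
      have h2 := hrge R (Ioo_subset_Icc_self hR)
      exact mul_nonneg (mul_nonneg h1 (inv_nonneg.2 (by linarith))) (sq_nonneg R)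
    · filter_upwards [ae_restrict_mem measurableSet_Ioo] with R hR
      have h1 := hMnn R hR
      apply mul_le_mul_of_nonneg_right _ (sq_nonneg R)
      apply mul_le_mul_of_nonneg_left _ h1
      by_cases hRb : R ≤ b
      · have hle : lam * R ≤ r R := by
          rcases hRb.eq_or_lt with h2 | h2
          · rw [h2, hbr]
          · exact (hrgt R ⟨hR.1, h2⟩).le
        simp only [hs, hRb, if_true]
        exact inv_anti₀ (mul_pos hlam hR.1) hle
      · simp only [hs, hRb, if_false]; exact le_rfl
  have hfin := hminr s s' hadms
  have hmr : Imec (fun R v1 v2 v3 => α R * (φ v1 + φ v2 + φ v3) + h (v1 * v2 * v3)) r r' =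
      (∫ R in (0:ℝ)..b, (α R * (φ (r' R) + φ (r R / R) + φ (r R / R)) +
      h (r' R * (r R / R) * (r R / R))) * R ^ 2) +
      ∫ R in b..1, (α R * (φ (r' R) + φ (r R / R) + φ (r R / R)) +
      h (r' R * (r R / R) * (r R / R))) * R ^ 2 := by
    rw [intervalIntegral.integral_add_adjacent_intervals hG0 hG1,
      intervalIntegral.integral_of_le zero_le_one, integral_Ioc_eq_integral_Ioo]
    rfl
  have hms : Imec (fun R v1 v2 v3 => α R * (φ v1 + φ v2 + φ v3) + h (v1 * v2 * v3)) s s' =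
      (∫ R in (0:ℝ)..b, Gs R) + ∫ R in b..1, Gs R := by
    rw [intervalIntegral.integral_add_adjacent_intervals hGs0 hGs1,
      intervalIntegral.integral_of_le zero_le_one, integral_Ioc_eq_integral_Ioo]
    rfl
  have e0 : ∫ R in (0:ℝ)..b, (α R * (φ lam + φ lam + φ lam) +
      h (lam * lam * lam)) * R ^ 2 = ∫ R in (0:ℝ)..b, Gs R := by
    apply intervalIntegral.integral_congr_ae
    filter_upwards with t ht
    rw [uIoc_of_le hb0.le] at ht
    exact hGs0eq t ht
  have e1 : ∫ R in b..1, (α R * (φ (r' R) + φ (r R / R) + φ (r R / R)) +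
      h (r' R * (r R / R) * (r R / R))) * R ^ 2 = ∫ R in b..1, Gs R := by
    apply intervalIntegral.integral_congr_ae
    filter_upwards with t ht
    rw [uIoc_of_le hb1] at ht
    exact hGs1eq t ht
  unfold Ifun at hfin
  rw [hmr, hms, e1] at hfin
  rw [e0] at hcore
  linarith
end

section
/- Let φ,h:(0,∞)→ℝ be convex and differentiable, let α(R)>0 and λ̂>0, and let Φ(R,v1,v2,v3)=α(R)(φ(v1)+φ(v2)+φ(v3))+h(v1v2v3). Let R∈(0,1] and suppose r is differentiable at R with r(R)>0 and r'(R)>0. Then [Φ(R, r'(R), r(R)/R, r(R)/R) − Φ(R, λ̂, λ̂, λ̂)] R² ≥ α(R) φ'(λ̂)(R² r'(R) + 2R r(R) − 3λ̂ R²) + h'(λ̂³)(r(R)² r'(R) − λ̂³ R²), and the right-hand side equals α(R) φ'(λ̂) · d/dR[r(R)R² − λ̂R³] + (1/3) h'(λ̂³) · d/dR[r(R)³ − λ̂³R³]. -/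
open MeasureTheory Real Set Filter

theorem tangent_aux (f : ℝ → ℝ) (d x y : ℝ) (hc : ConvexOn ℝ (Ioi 0) f) (hx : 0 < x) (hy : 0 < y)
    (hd : HasDerivAt f d x) : d * (y - x) ≤ f y - f x := by
  rcases lt_trichotomy x y with hxy | hxy | hxy
  · have := hc.le_slope_of_hasDerivAt hx hy hxy hd
    rw [slope_def_field, le_div_iff₀ (by linarith)] at this
    exact this
  · subst hxy; simp
  · have := hc.slope_le_of_hasDerivAt hy hx hxy hd
    rw [slope_def_field, div_le_iff₀ (by linarith)] at this
    linarith

theorem stmt13 (φ h φ' h' : ℝ → ℝ)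
    (hφconv : ConvexOn ℝ (Ioi 0) φ) (hhconv : ConvexOn ℝ (Ioi 0) h)
    (hφd : ∀ t ∈ Ioi (0:ℝ), HasDerivAt φ (φ' t) t)
    (hhd : ∀ t ∈ Ioi (0:ℝ), HasDerivAt h (h' t) t)
    (α : ℝ → ℝ) (lamh : ℝ) (hlamh : 0 < lamh)
    (r r' : ℝ → ℝ) (R : ℝ) (hR : R ∈ Ioc (0:ℝ) 1) (hα : 0 < α R)
    (hrd : HasDerivAt r (r' R) R) (hrpos : 0 < r R) (hr'pos : 0 < r' R) :
    -- the convexity inequality, with `Φ(R,v₁,v₂,v₃) = α(R)(φ(v₁)+φ(v₂)+φ(v₃)) + h(v₁v₂v₃)`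
    (α R * φ' lamh * (R ^ 2 * r' R + 2 * R * r R - 3 * lamh * R ^ 2) +
        h' (lamh ^ 3) * ((r R) ^ 2 * r' R - lamh ^ 3 * R ^ 2) ≤
      ((α R * (φ (r' R) + φ (r R / R) + φ (r R / R)) + h (r' R * (r R / R) * (r R / R))) -
          (α R * (φ lamh + φ lamh + φ lamh) + h (lamh * lamh * lamh))) * R ^ 2) ∧
    -- the right-hand side is the indicated exact derivative combination
    HasDerivAt (fun S => r S * S ^ 2 - lamh * S ^ 3)
      (R ^ 2 * r' R + 2 * R * r R - 3 * lamh * R ^ 2) R ∧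
    HasDerivAt (fun S => ((r S) ^ 3 - lamh ^ 3 * S ^ 3) / 3)
      ((r R) ^ 2 * r' R - lamh ^ 3 * R ^ 2) R := by
  have hR0 : 0 < R := hR.1
  have hq : 0 < r R / R := div_pos hrpos hR0
  refine ⟨?_, ?_, ?_⟩
  · have h1 := tangent_aux φ _ lamh (r' R) hφconv hlamh hr'pos (hφd _ hlamh)
    have h2 := tangent_aux φ _ lamh (r R / R) hφconv hlamh hq (hφd _ hlamh)
    have hl3 : 0 < lamh ^ 3 := by positivity
    have h3 := tangent_aux h _ (lamh ^ 3) (r' R * (r R / R) * (r R / R)) hhconv hl3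
      (by positivity) (hhd _ hl3)
    have e : lamh * lamh * lamh = lamh ^ 3 := by ring
    rw [e]
    obtain ⟨q, hqe⟩ : ∃ q, q = r R / R := ⟨_, rfl⟩
    have hr : r R = q * R := by rw [hqe]; field_simp
    rw [← hqe] at h2 h3 ⊢
    rw [hr]
    have h4 := mul_le_mul_of_nonneg_left (add_le_add h1 (add_le_add h2 h2)) hα.le
    have h5 := mul_le_mul_of_nonneg_right (add_le_add h4 h3) (sq_nonneg R)
    linarith
  · have := (hrd.mul (hasDerivAt_pow 2 R)).sub ((hasDerivAt_pow 3 R).const_mul lamh)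
    refine this.congr_deriv ?_
    norm_num
    ring
  · have := ((hrd.pow 3).sub ((hasDerivAt_pow 3 R).const_mul (lamh ^ 3))).div_const 3
    refine this.congr_deriv ?_
    norm_num
    ring
end

section
/- Assume 0<k0≤ρ0(R)≤k1 on [0,1]. Let Φ:[0,1]×(0,∞)³→[0,∞) be continuous, continuously differentiable in R, symmetric in its last three arguments, and satisfy |∂Φ/∂R(R,v)| ≤ C Φ̃(v) for all R∈[0,1], v∈(0,∞)³, for some constant C>0 and some continuous Φ̃:(0,∞)³→[0,∞). Let λ>0 and let r ∈ A_λ satisfy: r(0)=0; r ∈ C¹((0,1]); r'(R) and r(R)/R extend to continuous strictly positive functions on [0,1] with common limit ℓ := lim_{R→0⁺} r'(R) ∈ (0,∞). Suppose there exist μ>0 and a locally absolutely continuous r_c:(0,∞)→(0,∞) with r_c'>0 a.e., lim_{S→0⁺} r_c(S) > 0, S ↦ r_c(S)/S continuous and strictly decreasing with r_c(S)/S → ∞ as S→0⁺, r_c(μ)/μ = ℓ, and r_c(μ')/μ' < ℓ for some μ'>μ; with finite energies ∫₀^b S² Φ̃(r_c'(S), r_c(S)/S, r_c(S)/S) dS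 < ∞ and ∫₀^b S² Φ(0, r_c'(S), r_c(S)/S, r_c(S)/S) dS < ∞ for every b>0; and with the strict energy inequality ∫₀¹ U² Φ(0, r_c'(μU), r_c(μU)/(μU), r_c(μU)/(μU)) dU < ∫₀¹ U² Φ(0, ℓ, ℓ, ℓ) dU (which holds when ℓ exceeds the critical boundary displacement of the material Φ(0,·)). Then r is not a minimizer of I over A_λ: there exists r̂ ∈ A_λ with I(r̂) < I(r). -/
open MeasureTheory Real Set Filter

lemma h_pot (ρ0 : ℝ → ℝ) (k0 k1 : ℝ) (hk0 : 0 < k0) (hρmeas : Measurable ρ0)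
    (hρ : ∀ R ∈ Icc (0:ℝ) 1, k0 ≤ ρ0 R ∧ ρ0 R ≤ k1) (f : ℝ → ℝ)
    (hf : ContinuousOn f (Icc 0 1)) (m : ℝ) (hm : 0 < m)
    (hmf : ∀ R ∈ Ioo (0:ℝ) 1, m * R ≤ f R) :
    (∀ R ∈ Ioo (0:ℝ) 1, 0 ≤ ρ0 R * Mfun ρ0 R * (f R)⁻¹ * R ^ 2 ∧
      ρ0 R * Mfun ρ0 R * (f R)⁻¹ * R ^ 2 ≤ k1 * (4 * π * k1) / m * R ^ 4) ∧
    IntegrableOn (fun R => ρ0 R * Mfun ρ0 R * (f R)⁻¹ * R ^ 2) (Ioo (0:ℝ) 1) := by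
  have hk1 : 0 < k1 := by
    have := hρ 0 (by simp); linarith
  have hint : IntervalIntegrable (fun u => ρ0 u * u ^ 2) volume 0 1 := by
    rw [intervalIntegrable_iff_integrableOn_Ioc_of_le zero_le_one]
    refine Measure.integrableOn_of_bounded (M := k1) (by simp) (by fun_prop) ?_
    refine (ae_restrict_iff' measurableSet_Ioc).2 (Eventually.of_forall fun x hx => ?_)
    have h1 := hρ x ⟨hx.1.le, hx.2⟩
    have h2 : 0 ≤ x ^ 2 := by positivity
    have h3 : x ^ 2 ≤ 1 := by
      have := hx.1; have := hx.2; nlinarith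
    rw [Real.norm_eq_abs, abs_of_nonneg (mul_nonneg (by linarith) h2)]
    nlinarith
  have hM : ∀ R ∈ Ioo (0:ℝ) 1, 0 ≤ Mfun ρ0 R ∧ Mfun ρ0 R ≤ 4 * π * k1 * R ^ 3 := by
    intro R hR
    have h0 : 0 ≤ ∫ u in (0:ℝ)..R, ρ0 u * u ^ 2 := by
      apply intervalIntegral.integral_nonneg hR.1.le
      intro u hu
      have := (hρ u ⟨hu.1, hu.2.trans hR.2.le⟩).1
      exact mul_nonneg (by linarith) (by positivity)
    have h1 : ∫ u in (0:ℝ)..R, ρ0 u * u ^ 2 ≤ ∫ u in (0:ℝ)..R, k1 * R ^ 2 := by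
      apply intervalIntegral.integral_mono_on hR.1.le
      · apply hint.mono_set
        rw [uIcc_of_le hR.1.le, uIcc_of_le zero_le_one]
        exact Icc_subset_Icc_right hR.2.le
      · simp
      · intro u hu
        have h3 := (hρ u ⟨hu.1, hu.2.trans hR.2.le⟩)
        have : u ^ 2 ≤ R ^ 2 := pow_le_pow_left₀ hu.1 hu.2 2
        apply mul_le_mul h3.2 this (by positivity) hk1.le
    rw [intervalIntegral.integral_const] at h1
    simp only [sub_zero, smul_eq_mul] at h1
    unfold Mfun
    refine ⟨by positivity, ?_⟩
    have : 4 * π * k1 * R ^ 3 = 4 * π * (R * (k1 * R ^ 2)) := by ring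
    rw [this]
    gcongr
  have hb : ∀ R ∈ Ioo (0:ℝ) 1, 0 ≤ ρ0 R * Mfun ρ0 R * (f R)⁻¹ * R ^ 2 ∧
      ρ0 R * Mfun ρ0 R * (f R)⁻¹ * R ^ 2 ≤ k1 * (4 * π * k1) / m * R ^ 4 := by
    intro R hR
    have hR0 := hR.1
    have h1 := hρ R ⟨hR.1.le, hR.2.le⟩
    have h2 := hM R hR
    have h3 := hmf R hR
    have h4 : 0 < m * R := by positivity
    have h5 : 0 < f R := by linarith
    have h6 : 0 ≤ ρ0 R := by linarith
    have h7 : 0 ≤ Mfun ρ0 R := h2.1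
    refine ⟨by positivity, ?_⟩
    have : k1 * (4 * π * k1) / m * R ^ 4 = k1 * (4 * π * k1 * R ^ 3) * (m * R)⁻¹ * R ^ 2 := by
      field_simp
    rw [this]
    gcongr
    · exact h1.2
    · exact h2.2
  refine ⟨hb, ?_⟩
  have hmeas : AEStronglyMeasurable (fun R => ρ0 R * Mfun ρ0 R * (f R)⁻¹ * R ^ 2)
      (volume.restrict (Ioo (0:ℝ) 1)) := by
    have hMc : ContinuousOn (Mfun ρ0) (Icc 0 1) := by
      unfold Mfun
      have := intervalIntegral.continuousOn_primitive_interval' hint left_mem_uIcc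
      rw [uIcc_of_le zero_le_one] at this
      exact continuousOn_const.mul this
    have hM' : AEMeasurable (Mfun ρ0) (volume.restrict (Ioo (0:ℝ) 1)) :=
      (hMc.mono Ioo_subset_Icc_self).aemeasurable measurableSet_Ioo
    have hf' : AEMeasurable f (volume.restrict (Ioo (0:ℝ) 1)) :=
      (hf.mono Ioo_subset_Icc_self).aemeasurable measurableSet_Ioo
    apply AEMeasurable.aestronglyMeasurable
    fun_prop
  refine IntegrableOn.of_bound (C := k1 * (4 * π * k1) / m) (by simp) hmeas ?_
  refine (ae_restrict_iff' measurableSet_Ioo).2 (Eventually.of_forall fun x hx => ?_)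
  have h := hb x hx
  rw [Real.norm_eq_abs, abs_of_nonneg h.1]
  refine h.2.trans ?_
  have : x ^ 4 ≤ 1 := pow_le_one₀ hx.1.le hx.2.le
  have h0 : 0 ≤ k1 * (4 * π * k1) / m := by positivity
  nlinarith

lemma h_meas (Φ : ℝ → ℝ → ℝ → ℝ → ℝ)
    (hΦcont : ContinuousOn (fun p : ℝ × ℝ × ℝ × ℝ => Φ p.1 p.2.1 p.2.2.1 p.2.2.2)
      (Icc 0 1 ×ˢ Ioi 0 ×ˢ Ioi 0 ×ˢ Ioi 0)) (A : Set ℝ) (hA : MeasurableSet A)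
    (hA1 : A ⊆ Icc 0 1) (f1 f2 : ℝ → ℝ) (h1 : AEMeasurable f1 (volume.restrict A))
    (h2 : AEMeasurable f2 (volume.restrict A))
    (p1 : ∀ᵐ x ∂volume.restrict A, 0 < f1 x) (p2 : ∀ᵐ x ∂volume.restrict A, 0 < f2 x) :
    AEStronglyMeasurable (fun R => Φ R (f1 R) (f2 R) (f2 R)) (volume.restrict A) := by
  set S : Set (ℝ × ℝ × ℝ × ℝ) := Icc 0 1 ×ˢ Ioi 0 ×ˢ Ioi 0 ×ˢ Ioi 0 with hS
  have hSm : MeasurableSet S :=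
    measurableSet_Icc.prod (measurableSet_Ioi.prod (measurableSet_Ioi.prod measurableSet_Ioi))
  have hG : Measurable (S.indicator (fun p : ℝ × ℝ × ℝ × ℝ => Φ p.1 p.2.1 p.2.2.1 p.2.2.2)) := by
    classical
    have := hΦcont.measurable_piecewise (g := 0) continuousOn_const hSm
    rwa [Set.piecewise_eq_indicator] at this
  have hF : AEMeasurable (fun R => (R, f1 R, f2 R, f2 R)) (volume.restrict A) :=
    aemeasurable_id.prodMk (h1.prodMk (h2.prodMk h2))
  have := hG.comp_aemeasurable hF
  refine (this.congr ?_).aestronglyMeasurable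
  filter_upwards [p1, p2, ae_restrict_mem hA] with x q1 q2 hx
  have : (x, f1 x, f2 x, f2 x) ∈ S := ⟨hA1 hx, q1, q2, q2⟩
  simp [Function.comp, Set.indicator_of_mem this]

lemma h_mvt (Φ ΦR : ℝ → ℝ → ℝ → ℝ → ℝ) (Φt : ℝ → ℝ → ℝ → ℝ)
    (hΦRd : ∀ R ∈ Icc (0:ℝ) 1, ∀ v1 ∈ Ioi (0:ℝ), ∀ v2 ∈ Ioi (0:ℝ), ∀ v3 ∈ Ioi (0:ℝ),
      HasDerivWithinAt (fun t => Φ t v1 v2 v3) (ΦR R v1 v2 v3) (Icc (0:ℝ) 1) R)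
    (C : ℝ)
    (hΦRbdd : ∀ R ∈ Icc (0:ℝ) 1, ∀ v1 ∈ Ioi (0:ℝ), ∀ v2 ∈ Ioi (0:ℝ), ∀ v3 ∈ Ioi (0:ℝ),
      |ΦR R v1 v2 v3| ≤ C * Φt v1 v2 v3) (R : ℝ) (hR : R ∈ Icc (0:ℝ) 1) (v1 v2 v3 : ℝ)
    (h1 : 0 < v1) (h2 : 0 < v2) (h3 : 0 < v3) :
    Φ R v1 v2 v3 ≤ Φ 0 v1 v2 v3 + C * Φt v1 v2 v3 * R := by
  have := Convex.norm_image_sub_le_of_norm_hasDerivWithin_le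
    (fun x hx => hΦRd x hx v1 h1 v2 h2 v3 h3) (fun x hx => hΦRbdd x hx v1 h1 v2 h2 v3 h3)
    (convex_Icc 0 1) (show (0:ℝ) ∈ Icc (0:ℝ) 1 by simp) hR
  rw [Real.norm_eq_abs, Real.norm_eq_abs, sub_zero, abs_of_nonneg hR.1] at this
  linarith [le_abs_self (Φ R v1 v2 v3 - Φ 0 v1 v2 v3)]

lemma h_cav (rc rc' : ℝ → ℝ)
    (hrcAC : ∀ a : ℝ, 0 < a → ∀ b : ℝ, a ≤ b →
      IntervalIntegrable rc' volume a b ∧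
      ∀ x ∈ Icc a b, rc x = rc a + ∫ t in a..x, rc' t)
    (hrc'pos : ∀ᵐ S ∂volume.restrict (Ioi (0:ℝ)), 0 < rc' S)
    (c : ℝ) (hcav : Tendsto rc (nhdsWithin 0 (Ioi 0)) (nhds c)) (b : ℝ) (hb : 0 < b) :
    IntervalIntegrable rc' volume 0 b ∧ rc b = c + ∫ t in (0:ℝ)..b, rc' t := by
  have hpos : ∀ a : ℝ, 0 < a → ∀ᵐ S ∂volume.restrict (Ioc a b), 0 < rc' S := fun a ha =>
    ae_restrict_of_ae_restrict_of_subset (fun x hx => ha.trans hx.1) hrc'pos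
  obtain ⟨u, hu, huI, hul⟩ := exists_seq_strictAnti_tendsto' hb
  have hul' : Tendsto u atTop (nhdsWithin 0 (Ioi 0)) :=
    tendsto_nhdsWithin_iff.2 ⟨hul, Eventually.of_forall fun n => (huI n).1⟩
  have hrcu := hcav.comp hul'
  have hI : ∀ n, IntervalIntegrable rc' volume (u n) b := fun n =>
    (hrcAC (u n) (huI n).1 b (huI n).2.le).1
  have heq : ∀ n, rc b = rc (u n) + ∫ t in (u n)..b, rc' t := fun n =>
    (hrcAC (u n) (huI n).1 b (huI n).2.le).2 b ⟨(huI n).2.le, le_rfl⟩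
  have hInt : IntervalIntegrable rc' volume 0 b := by
    rw [intervalIntegrable_iff_integrableOn_Ioc_of_le hb.le]
    refine integrableOn_Ioc_of_intervalIntegral_norm_bounded_left (I := rc b - c + 1)
      (l := atTop) (a := u) (fun n => ?_) hul ?_
    · exact (intervalIntegrable_iff_integrableOn_Ioc_of_le (huI n).2.le).1 (hI n)
    · have : ∀ᶠ n in atTop, c - 1 < rc (u n) := hrcu.eventually (lt_mem_nhds (by linarith))
      filter_upwards [this] with n hn
      have h1 : ∫ x in Ioc (u n) b, ‖rc' x‖ = ∫ x in Ioc (u n) b, rc' x := by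
        apply integral_congr_ae
        filter_upwards [hpos (u n) (huI n).1] with x hx
        rw [Real.norm_eq_abs, abs_of_pos hx]
      rw [h1, ← intervalIntegral.integral_of_le (huI n).2.le]
      linarith [heq n]
  refine ⟨hInt, ?_⟩
  have hc := intervalIntegral.continuousOn_primitive_interval' hInt right_mem_uIcc
  rw [uIcc_of_le hb.le] at hc
  have h0 := (hc 0 ⟨le_rfl, hb.le⟩).tendsto
  have hul2 : Tendsto u atTop (nhdsWithin 0 (Icc 0 b)) :=
    tendsto_nhdsWithin_iff.2 ⟨hul, Eventually.of_forall fun n => ⟨(huI n).1.le, (huI n).2.le⟩⟩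
  have h2 := hrcu.sub (h0.comp hul2)
  have h3 : Tendsto (fun _ : ℕ => rc b) atTop (nhds (c - ∫ t in b..(0:ℝ), rc' t)) := by
    refine h2.congr fun n => ?_
    have := heq n
    simp only [Function.comp]
    rw [intervalIntegral.integral_symm (u n) b]
    linarith
  have h4 := tendsto_nhds_unique tendsto_const_nhds h3
  rw [h4, intervalIntegral.integral_symm b 0]
  ring

lemma h_scale (f : ℝ → ℝ) (δ s : ℝ) (hδ : 0 < δ) (hf : IntervalIntegrable f volume 0 s) :
    IntervalIntegrable (fun x => f (x / δ)) volume 0 (δ * s) := by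
  have h := hf.comp_mul_left (c := δ⁻¹)
  simp only [div_inv_eq_mul, zero_mul] at h
  rw [mul_comm δ s]
  refine h.congr (fun x _ => ?_)
  simp only [div_eq_inv_mul]

lemma h_qmp (δ : ℝ) (hδ : 0 < δ) :
    Measure.QuasiMeasurePreserving (fun x : ℝ => x / δ) volume volume := by
  refine ⟨by fun_prop, ?_⟩
  have : (fun x : ℝ => x / δ) = (fun x => δ⁻¹ * x) := by
    ext x; rw [div_eq_inv_mul]
  rw [this, Real.map_volume_mul_left (by positivity)]
  exact Measure.smul_absolutelyContinuous

lemma h_con (Φ ΦR : ℝ → ℝ → ℝ → ℝ → ℝ) (Φt : ℝ → ℝ → ℝ → ℝ)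
    (hΦnn : ∀ R ∈ Icc (0:ℝ) 1, ∀ v1 ∈ Ioi (0:ℝ), ∀ v2 ∈ Ioi (0:ℝ), ∀ v3 ∈ Ioi (0:ℝ),
      0 ≤ Φ R v1 v2 v3)
    (hΦcont : ContinuousOn (fun p : ℝ × ℝ × ℝ × ℝ => Φ p.1 p.2.1 p.2.2.1 p.2.2.2)
      (Icc 0 1 ×ˢ Ioi 0 ×ˢ Ioi 0 ×ˢ Ioi 0))
    (hΦRd : ∀ R ∈ Icc (0:ℝ) 1, ∀ v1 ∈ Ioi (0:ℝ), ∀ v2 ∈ Ioi (0:ℝ), ∀ v3 ∈ Ioi (0:ℝ),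
      HasDerivWithinAt (fun t => Φ t v1 v2 v3) (ΦR R v1 v2 v3) (Icc (0:ℝ) 1) R)
    (hΦtnn : ∀ v1 ∈ Ioi (0:ℝ), ∀ v2 ∈ Ioi (0:ℝ), ∀ v3 ∈ Ioi (0:ℝ), 0 ≤ Φt v1 v2 v3)
    (C : ℝ) (hC : 0 < C)
    (hΦRbdd : ∀ R ∈ Icc (0:ℝ) 1, ∀ v1 ∈ Ioi (0:ℝ), ∀ v2 ∈ Ioi (0:ℝ), ∀ v3 ∈ Ioi (0:ℝ),
      |ΦR R v1 v2 v3| ≤ C * Φt v1 v2 v3)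
    (lam : ℝ) (r r' : ℝ → ℝ) (hadm : Adm Φ lam r r')
    (rc rc' : ℝ → ℝ)
    (hrc'pos : ∀ᵐ S ∂volume.restrict (Ioi (0:ℝ)), 0 < rc' S)
    (c : ℝ) (hc : 0 < c)
    (hrcz : ∀ b : ℝ, 0 < b → IntervalIntegrable rc' volume 0 b ∧
      rc b = c + ∫ t in (0:ℝ)..b, rc' t)
    (hratiodec : StrictAntiOn (fun S => rc S / S) (Ioi (0:ℝ)))
    (hrcE : ∀ b > (0:ℝ),
      IntegrableOn (fun S => S ^ 2 * Φt (rc' S) (rc S / S) (rc S / S)) (Ioo 0 b) ∧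
      IntegrableOn (fun S => S ^ 2 * Φ 0 (rc' S) (rc S / S) (rc S / S)) (Ioo 0 b))
    (δ s ε : ℝ) (hδ : 0 < δ) (hs : 0 < s) (hε : δ * s = ε) (hε1 : ε < 1)
    (hmatch : rc s / s = r ε / ε) :
    ∃ rhat rhat' : ℝ → ℝ, Adm Φ lam rhat rhat' ∧
      (∀ R, ε ≤ R → rhat R = r R ∧ rhat' R = r' R) ∧
      (∀ R ∈ Ioo 0 ε, r ε / ε * R ≤ rhat R) ∧
      ∫ R in Ioo 0 ε, Φ R (rhat' R) (rhat R / R) (rhat R / R) * R ^ 2 ≤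
        δ ^ 3 * ((∫ S in (0:ℝ)..s, S ^ 2 * Φ 0 (rc' S) (rc S / S) (rc S / S)) +
          C * ε * ∫ S in (0:ℝ)..s, S ^ 2 * Φt (rc' S) (rc S / S) (rc S / S)) := by
  have hε0 : 0 < ε := hε ▸ mul_pos hδ hs
  obtain ⟨ha1, ha2, ha3, ha4, ha5, ha6⟩ := hadm
  have hsε : ε / δ = s := by rw [← hε]; field_simp
  set rz : ℝ → ℝ := fun x => c + ∫ t in (0:ℝ)..x, rc' t with hrz
  set rhat : ℝ → ℝ := fun R => if R < ε then δ * rz (R / δ) else r R with hrhat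
  set rhat' : ℝ → ℝ := fun R => if R < ε then rc' (R / δ) else r' R with hrhat'
  have hge : ∀ R, ε ≤ R → rhat R = r R ∧ rhat' R = r' R := by
    intro R hR
    simp [hrhat, hrhat', not_lt.2 hR]
  have hlt' : ∀ R, R < ε → rhat' R = rc' (R / δ) := by
    intro R hR; simp [hrhat', hR]
  have hlt : ∀ R ∈ Ioo 0 ε, rhat R = δ * rc (R / δ) := by
    intro R hR
    have h1 : 0 < R / δ := div_pos hR.1 hδ
    simp only [hrhat, if_pos hR.2, hrz, (hrcz _ h1).2]
  have hlt2 : ∀ R ∈ Ioo 0 ε, rhat R / R = rc (R / δ) / (R / δ) := by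
    intro R hR
    have := hR.1
    rw [hlt R hR]; field_simp
  have hrcpos : ∀ x, 0 < x → 0 < rc x := by
    intro x hx
    rw [(hrcz x hx).2]
    have : 0 ≤ ∫ t in (0:ℝ)..x, rc' t := by
      rw [intervalIntegral.integral_of_le hx.le]
      apply integral_nonneg_of_ae
      filter_upwards [ae_restrict_of_ae_restrict_of_subset Ioc_subset_Ioi_self hrc'pos] with t ht
        using ht.le
    linarith
  -- derivative positivity
  have hposδ : ∀ᵐ R ∂volume.restrict (Ioo 0 ε), 0 < rc' (R / δ) := by
    rw [ae_restrict_iff' measurableSet_Ioi] at hrc'pos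
    rw [ae_restrict_iff' measurableSet_Ioo]
    filter_upwards [(h_qmp δ hδ).ae hrc'pos] with R hR hR2
    exact hR (div_pos hR2.1 hδ)
  have hsc1 : IntervalIntegrable (fun x => rc' (x / δ)) volume 0 ε :=
    hε ▸ h_scale rc' δ s hδ (hrcz s hs).1
  have hI1 : IntervalIntegrable rhat' volume 0 ε := by
    rw [intervalIntegrable_iff_integrableOn_Ioo_of_le hε0.le] at hsc1 ⊢
    exact hsc1.congr_fun (fun x hx => (hlt' x hx.2).symm) measurableSet_Ioo
  have hr'ε : IntervalIntegrable r' volume ε 1 := by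
    apply ha1.mono_set
    rw [uIcc_of_le hε1.le, uIcc_of_le zero_le_one]
    exact Icc_subset_Icc_left hε0.le
  have hI2 : IntervalIntegrable rhat' volume ε 1 := by
    rw [intervalIntegrable_iff_integrableOn_Ioo_of_le hε1.le] at hr'ε ⊢
    exact hr'ε.congr_fun (fun x hx => ((hge x hx.1.le).2).symm) measurableSet_Ioo
  have hrhat0 : rhat 0 = δ * c := by
    simp [hrhat, hε0, hrz]
  have hint1 : ∀ x ∈ Icc 0 ε, ∫ t in (0:ℝ)..x, rhat' t = δ * ∫ t in (0:ℝ)..(x / δ), rc' t := by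
    intro x hx
    have : ∫ t in (0:ℝ)..x, rhat' t = ∫ t in (0:ℝ)..x, rc' (t / δ) := by
      rw [intervalIntegral.integral_of_le hx.1, intervalIntegral.integral_of_le hx.1,
        integral_Ioc_eq_integral_Ioo, integral_Ioc_eq_integral_Ioo]
      exact setIntegral_congr_fun measurableSet_Ioo (fun t ht => hlt' t (ht.2.trans_le hx.2))
    rw [this, intervalIntegral.integral_comp_div _ hδ.ne']
    simp
  have hrcε : δ * rc s = r ε := by
    rw [div_eq_div_iff hs.ne' hε0.ne', ← hε] at hmatch
    have : s * (δ * rc s) = s * r (δ * s) := by linarith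
    rw [← hε]; exact mul_left_cancel₀ hs.ne' this
  have hrhateq : ∀ x ∈ Icc (0:ℝ) 1, rhat x = rhat 0 + ∫ t in (0:ℝ)..x, rhat' t := by
    intro x hx
    rcases lt_or_ge x ε with h | h
    · rw [hint1 x ⟨hx.1, h.le⟩, hrhat0]
      simp only [hrhat, if_pos h, hrz]; ring
    · have hI3 : IntervalIntegrable rhat' volume ε x := by
        apply hI2.mono_set
        rw [uIcc_of_le hε1.le, uIcc_of_le h]
        exact Icc_subset_Icc_right hx.2
      have e1 : ∫ t in ε..x, rhat' t = ∫ t in ε..x, r' t := by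
        apply intervalIntegral.integral_congr
        intro t ht
        rw [uIcc_of_le h] at ht
        exact (hge t ht.1).2
      have hr3 : IntervalIntegrable r' volume 0 ε := by
        apply ha1.mono_set
        rw [uIcc_of_le hε0.le, uIcc_of_le zero_le_one]
        exact Icc_subset_Icc_right hε1.le
      have hr4 : IntervalIntegrable r' volume ε x := by
        apply hr'ε.mono_set
        rw [uIcc_of_le hε1.le, uIcc_of_le h]
        exact Icc_subset_Icc_right hx.2
      have e2 := intervalIntegral.integral_add_adjacent_intervals hr3 hr4
      have e3 := ha2 x hx
      have e4 := ha2 ε ⟨hε0.le, hε1.le⟩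
      rw [← intervalIntegral.integral_add_adjacent_intervals hI1 hI3, e1,
        hint1 ε ⟨hε0.le, le_rfl⟩, hsε, hrhat0, (hge x h).1]
      have e5 := (hrcz s hs).2
      rw [e5] at hrcε
      linarith
  have hsplit : Ioo (0:ℝ) 1 = Ioo 0 ε ∪ Ico ε 1 := (Ioo_union_Ico_eq_Ioo hε0 hε1.le).symm
  -- bounding function
  set g : ℝ → ℝ := fun S => S ^ 2 * Φ 0 (rc' S) (rc S / S) (rc S / S) with hg
  set h : ℝ → ℝ := fun S => S ^ 2 * Φt (rc' S) (rc S / S) (rc S / S) with hh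
  have hgI : IntervalIntegrable g volume 0 s := by
    rw [intervalIntegrable_iff_integrableOn_Ioo_of_le hs.le]; exact (hrcE s hs).2
  have hhI : IntervalIntegrable h volume 0 s := by
    rw [intervalIntegrable_iff_integrableOn_Ioo_of_le hs.le]; exact (hrcE s hs).1
  have hBI : IntervalIntegrable (fun R => δ ^ 2 * (g (R / δ) + C * ε * h (R / δ))) volume 0 ε := by
    have := h_scale (fun S => δ ^ 2 * (g S + C * ε * h S)) δ s hδ
      ((hgI.add (hhI.const_mul (C * ε))).const_mul (δ ^ 2))
    rwa [hε] at this
  have hBint : ∫ R in (0:ℝ)..ε, δ ^ 2 * (g (R / δ) + C * ε * h (R / δ)) =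
      δ ^ 3 * ((∫ S in (0:ℝ)..s, g S) + C * ε * ∫ S in (0:ℝ)..s, h S) := by
    rw [intervalIntegral.integral_comp_div (fun S => δ ^ 2 * (g S + C * ε * h S)) hδ.ne',
      intervalIntegral.integral_const_mul, zero_div, hsε,
      intervalIntegral.integral_add hgI (hhI.const_mul (C * ε)),
      intervalIntegral.integral_const_mul, smul_eq_mul]
    ring
  rw [intervalIntegrable_iff_integrableOn_Ioo_of_le hε0.le] at hBI
  rw [intervalIntegral.integral_of_le hε0.le, integral_Ioc_eq_integral_Ioo] at hBint
  have hpt : ∀ᵐ R ∂volume.restrict (Ioo 0 ε),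
      0 ≤ Φ R (rhat' R) (rhat R / R) (rhat R / R) * R ^ 2 ∧
      Φ R (rhat' R) (rhat R / R) (rhat R / R) * R ^ 2 ≤
        δ ^ 2 * (g (R / δ) + C * ε * h (R / δ)) := by
    filter_upwards [hposδ, ae_restrict_mem measurableSet_Ioo] with R hp hR
    have hR0 := hR.1
    have hRI : R ∈ Icc (0:ℝ) 1 := ⟨hR.1.le, (hR.2.trans hε1).le⟩
    have hq : 0 < rc (R / δ) / (R / δ) :=
      div_pos (hrcpos _ (div_pos hR.1 hδ)) (div_pos hR.1 hδ)
    rw [hlt' R hR.2, hlt2 R hR]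
    have n1 := hΦnn R hRI _ hp _ hq _ hq
    have n2 := hΦtnn _ hp _ hq _ hq
    have n3 := h_mvt Φ ΦR Φt hΦRd C hΦRbdd R hRI _ _ _ hp hq hq
    refine ⟨by positivity, ?_⟩
    have e : δ ^ 2 * (g (R / δ) + C * ε * h (R / δ)) =
      (Φ 0 (rc' (R / δ)) (rc (R / δ) / (R / δ)) (rc (R / δ) / (R / δ)) +
        C * Φt (rc' (R / δ)) (rc (R / δ) / (R / δ)) (rc (R / δ) / (R / δ)) * ε) * R ^ 2 := by
      have : R ^ 2 = δ ^ 2 * (R / δ) ^ 2 := by field_simp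
      rw [this]
      simp only [hg, hh]; ring
    rw [e]
    gcongr
    refine n3.trans ?_
    gcongr
    exact hR.2.le
  have hrhatc : ContinuousOn rhat (Icc 0 1) := by
    have := intervalIntegral.continuousOn_primitive_interval' (hI1.trans hI2) left_mem_uIcc
    rw [uIcc_of_le zero_le_one] at this
    exact (continuousOn_const.add this).congr hrhateq
  have hM1 : IntegrableOn (fun R => Φ R (rhat' R) (rhat R / R) (rhat R / R) * R ^ 2)
      (Ioo 0 ε) := by
    have hsub : Ioo 0 ε ⊆ Icc (0:ℝ) 1 := fun x hx => ⟨hx.1.le, (hx.2.trans hε1).le⟩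
    have m2 : AEMeasurable rhat (volume.restrict (Ioo 0 ε)) :=
      (hrhatc.mono hsub).aemeasurable measurableSet_Ioo
    have m1 : AEMeasurable rhat' (volume.restrict (Ioo 0 ε)) := by
      have := (intervalIntegrable_iff_integrableOn_Ioo_of_le hε0.le).1 hI1
      exact this.aestronglyMeasurable.aemeasurable
    have m3 := h_meas Φ hΦcont (Ioo 0 ε) measurableSet_Ioo hsub rhat' (fun R => rhat R / R)
      m1 (by fun_prop) (by
        filter_upwards [hposδ, ae_restrict_mem measurableSet_Ioo] with R hp hR
        rwa [hlt' R hR.2]) (by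
        filter_upwards [ae_restrict_mem measurableSet_Ioo] with R hR
        rw [hlt2 R hR]
        exact div_pos (hrcpos _ (div_pos hR.1 hδ)) (div_pos hR.1 hδ))
    refine Integrable.mono' hBI (m3.mul (by fun_prop)) ?_
    filter_upwards [hpt] with R hR
    rw [Real.norm_eq_abs, abs_of_nonneg hR.1]
    exact hR.2
  refine ⟨rhat, rhat', ⟨hI1.trans hI2, hrhateq, ?_, ?_, ?_, ?_⟩, hge, ?_, ?_⟩
  · rw [hsplit, ae_restrict_union_iff]
    constructor
    · filter_upwards [hposδ, ae_restrict_mem measurableSet_Ioo] with R hp hR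
      rwa [hlt' R hR.2]
    · have := ae_restrict_of_ae_restrict_of_subset
        (show Ico ε 1 ⊆ Ioo 0 1 from hsplit ▸ subset_union_right) ha3
      filter_upwards [this, ae_restrict_mem measurableSet_Ico] with R hp hR
      rwa [(hge R hR.1).2]
  · rw [(hge 1 hε1.le).1, ha4]
  · rw [hrhat0]; positivity
  · rw [hsplit]
    refine hM1.union ?_
    have := ha6.mono_set (show Ico ε 1 ⊆ Ioo 0 1 from hsplit ▸ subset_union_right)
    refine this.congr_fun (fun R hR => ?_) measurableSet_Ico
    simp only [(hge R hR.1).1, (hge R hR.1).2]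
  · intro R hR
    have h1 : 0 < R / δ := div_pos hR.1 hδ
    have h2 : R / δ < s := by rw [← hsε]; exact div_lt_div_of_pos_right hR.2 hδ
    have h3 := hratiodec (mem_Ioi.2 h1) (mem_Ioi.2 hs) h2
    simp only at h3
    rw [← hlt2 R hR, hmatch] at h3
    rw [lt_div_iff₀ hR.1] at h3
    exact h3.le
  · rw [← hBint]
    refine integral_mono_ae hM1 hBI ?_
    filter_upwards [hpt] with R hR using hR.2

theorem stmt14 (ρ0 : ℝ → ℝ) (k0 k1 : ℝ) (hk0 : 0 < k0) (hρmeas : Measurable ρ0)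
    (hρ : ∀ R ∈ Icc (0:ℝ) 1, k0 ≤ ρ0 R ∧ ρ0 R ≤ k1)
    (Φ ΦR : ℝ → ℝ → ℝ → ℝ → ℝ) (Φt : ℝ → ℝ → ℝ → ℝ)
    (hΦnn : ∀ R ∈ Icc (0:ℝ) 1, ∀ v1 ∈ Ioi (0:ℝ), ∀ v2 ∈ Ioi (0:ℝ), ∀ v3 ∈ Ioi (0:ℝ),
      0 ≤ Φ R v1 v2 v3)
    (hΦsym : ∀ R ∈ Icc (0:ℝ) 1, ∀ v1 ∈ Ioi (0:ℝ), ∀ v2 ∈ Ioi (0:ℝ), ∀ v3 ∈ Ioi (0:ℝ),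
      Φ R v1 v2 v3 = Φ R v2 v1 v3 ∧ Φ R v1 v2 v3 = Φ R v1 v3 v2)
    (hΦcont : ContinuousOn (fun p : ℝ × ℝ × ℝ × ℝ => Φ p.1 p.2.1 p.2.2.1 p.2.2.2)
      (Icc 0 1 ×ˢ Ioi 0 ×ˢ Ioi 0 ×ˢ Ioi 0))
    -- `Φ` is continuously differentiable in `R`, with derivative `ΦR`
    (hΦRd : ∀ R ∈ Icc (0:ℝ) 1, ∀ v1 ∈ Ioi (0:ℝ), ∀ v2 ∈ Ioi (0:ℝ), ∀ v3 ∈ Ioi (0:ℝ),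
      HasDerivWithinAt (fun t => Φ t v1 v2 v3) (ΦR R v1 v2 v3) (Icc (0:ℝ) 1) R)
    (hΦRcont : ContinuousOn (fun p : ℝ × ℝ × ℝ × ℝ => ΦR p.1 p.2.1 p.2.2.1 p.2.2.2)
      (Icc 0 1 ×ˢ Ioi 0 ×ˢ Ioi 0 ×ˢ Ioi 0))
    (hΦtcont : ContinuousOn (fun p : ℝ × ℝ × ℝ => Φt p.1 p.2.1 p.2.2)
      (Ioi 0 ×ˢ Ioi 0 ×ˢ Ioi 0))
    (hΦtnn : ∀ v1 ∈ Ioi (0:ℝ), ∀ v2 ∈ Ioi (0:ℝ), ∀ v3 ∈ Ioi (0:ℝ), 0 ≤ Φt v1 v2 v3)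
    -- the bound `|∂Φ/∂R| ≤ C Φ̃`
    (C : ℝ) (hC : 0 < C)
    (hΦRbdd : ∀ R ∈ Icc (0:ℝ) 1, ∀ v1 ∈ Ioi (0:ℝ), ∀ v2 ∈ Ioi (0:ℝ), ∀ v3 ∈ Ioi (0:ℝ),
      |ΦR R v1 v2 v3| ≤ C * Φt v1 v2 v3)
    -- `r ∈ A_λ`, `r(0) = 0`, `r ∈ C¹((0,1])`, with strains extending continuously and
    -- strictly positively to `[0,1]` with common limit `ℓ` at the origin
    (lam : ℝ) (hlam : 0 < lam)
    (r r' : ℝ → ℝ) (hadm : Adm Φ lam r r') (hr0 : r 0 = 0)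
    (hrC1 : ∀ R ∈ Ioc (0:ℝ) 1, HasDerivAt r (r' R) R)
    (hr'cont : ContinuousOn r' (Ioc (0:ℝ) 1))
    (hr'pos : ∀ R ∈ Ioc (0:ℝ) 1, 0 < r' R)
    (ℓ : ℝ) (hℓ : 0 < ℓ)
    (hr'lim : Tendsto r' (nhdsWithin 0 (Ioi 0)) (nhds ℓ))
    (hstrainlim : Tendsto (fun R => r R / R) (nhdsWithin 0 (Ioi 0)) (nhds ℓ))
    -- the cavitating comparison map `r_c`, locally absolutely continuous on `(0,∞)`
    (μ : ℝ) (hμ : 0 < μ) (rc rc' : ℝ → ℝ)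
    (hrcAC : ∀ a : ℝ, 0 < a → ∀ b : ℝ, a ≤ b →
      IntervalIntegrable rc' volume a b ∧
      ∀ x ∈ Icc a b, rc x = rc a + ∫ t in a..x, rc' t)
    (hrc'pos : ∀ᵐ S ∂volume.restrict (Ioi (0:ℝ)), 0 < rc' S)
    (hcav : ∃ c > (0:ℝ), Tendsto rc (nhdsWithin 0 (Ioi 0)) (nhds c))
    (hratiocont : ContinuousOn (fun S => rc S / S) (Ioi (0:ℝ)))
    (hratiodec : StrictAntiOn (fun S => rc S / S) (Ioi (0:ℝ)))
    (hratioinf : Tendsto (fun S => rc S / S) (nhdsWithin 0 (Ioi 0)) atTop)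
    (hμℓ : rc μ / μ = ℓ) (hμ' : ∃ μ' > μ, rc μ' / μ' < ℓ)
    -- finite energies of `r_c`
    (hrcE : ∀ b > (0:ℝ),
      IntegrableOn (fun S => S ^ 2 * Φt (rc' S) (rc S / S) (rc S / S)) (Ioo 0 b) ∧
      IntegrableOn (fun S => S ^ 2 * Φ 0 (rc' S) (rc S / S) (rc S / S)) (Ioo 0 b))
    -- the strict energy inequality (supercriticality of `ℓ`)
    (hstrict : (∫ U in Ioo (0:ℝ) 1,
        U ^ 2 * Φ 0 (rc' (μ * U)) (rc (μ * U) / (μ * U)) (rc (μ * U) / (μ * U))) <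
      ∫ U in Ioo (0:ℝ) 1, U ^ 2 * Φ 0 ℓ ℓ ℓ) :
    ∃ rhat rhat' : ℝ → ℝ, Adm Φ lam rhat rhat' ∧
      Ifun Φ ρ0 rhat rhat' < Ifun Φ ρ0 r r' := by
  obtain ⟨c, hc, hcav⟩ := hcav
  have hrcz := fun b hb => h_cav rc rc' hrcAC hrc'pos c hcav b hb
  obtain ⟨ha1, ha2, ha3, ha4, ha5, ha6⟩ := id hadm
  have hrcont : ContinuousOn r (Icc 0 1) := by
    have := intervalIntegral.continuousOn_primitive_interval' ha1 left_mem_uIcc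
    rw [uIcc_of_le zero_le_one] at this
    exact (continuousOn_const.add this).congr ha2
  -- global lower bound for the hoop strain
  obtain ⟨m, hm, hmr⟩ : ∃ m > (0:ℝ), ∀ R ∈ Ioo (0:ℝ) 1, m * R ≤ r R := by
    have h1 : ∀ᶠ R in nhdsWithin (0:ℝ) (Ioi 0), ℓ / 2 < r R / R :=
      hstrainlim.eventually (lt_mem_nhds (by linarith))
    obtain ⟨e, he, hsub⟩ := mem_nhdsGT_iff_exists_Ioo_subset.1 h1
    have he : 0 < e := he
    have hb : ∀ R ∈ Ioo 0 e, ℓ / 2 * R < r R := by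
      intro R hR
      have := hsub hR
      rw [mem_setOf_eq, lt_div_iff₀ hR.1] at this
      exact this
    set e1 := min (e / 2) 1 with he1
    have he1p : 0 < e1 := by positivity
    have he1e : e1 < e := (min_le_left _ _).trans_lt (by linarith)
    have hre1 : 0 < r e1 := lt_trans (by positivity) (hb e1 ⟨he1p, he1e⟩)
    have hmono : MonotoneOn r (Icc e1 1) := by
      have hsub2 : Icc e1 1 ⊆ Ioc (0:ℝ) 1 := fun x hx => ⟨he1p.trans_le hx.1, hx.2⟩
      apply monotoneOn_of_deriv_nonneg (convex_Icc e1 1)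
      · exact fun x hx => (hrC1 x (hsub2 hx)).continuousAt.continuousWithinAt
      · exact fun x hx => (hrC1 x (hsub2 (interior_subset hx))).differentiableAt.differentiableWithinAt
      · intro x hx
        have hx' := hsub2 (interior_subset hx)
        rw [(hrC1 x hx').deriv]
        exact (hr'pos x hx').le
    refine ⟨min (ℓ / 2) (r e1), by positivity, fun R hR => ?_⟩
    rcases lt_or_ge R e1 with h | h
    · refine le_trans ?_ (hb R ⟨hR.1, h.trans he1e⟩).le
      have := hR.1
      gcongr
      exact min_le_left _ _
    · have h2 := hmono ⟨le_rfl, min_le_right _ _⟩ ⟨h, hR.2.le⟩ h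
      have h3 : min (ℓ / 2) (r e1) ≤ r e1 := min_le_right _ _
      have h4 : 0 < min (ℓ / 2) (r e1) := by positivity
      nlinarith [hR.1, hR.2]
  set g : ℝ → ℝ := fun S => S ^ 2 * Φ 0 (rc' S) (rc S / S) (rc S / S) with hg
  set h : ℝ → ℝ := fun S => S ^ 2 * Φt (rc' S) (rc S / S) (rc S / S) with hh
  have hprim : ∀ f : ℝ → ℝ, (∀ b > (0:ℝ), IntegrableOn f (Ioo 0 b)) →
      ContinuousAt (fun x => ∫ t in (0:ℝ)..x, f t) μ := by
    intro f hf
    have hi : IntervalIntegrable f volume 0 (μ + 1) := by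
      rw [intervalIntegrable_iff_integrableOn_Ioo_of_le (by linarith)]
      exact hf _ (by linarith)
    have := intervalIntegral.continuousOn_primitive_interval' hi left_mem_uIcc
    rw [uIcc_of_le (by linarith)] at this
    exact this.continuousAt (Icc_mem_nhds hμ (by linarith))
  have hGc := hprim g (fun b hb => (hrcE b hb).2)
  have hHc := hprim h (fun b hb => (hrcE b hb).1)
  set K : ℝ := k1 * (4 * π * k1) / m with hK
  set Gi : ℝ → ℝ := fun x => ∫ t in (0:ℝ)..x, g t with hGi
  set Hi : ℝ → ℝ := fun x => ∫ t in (0:ℝ)..x, h t with hHi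
  have hstrict2 : Gi μ / μ ^ 3 < Φ 0 ℓ ℓ ℓ / 3 := by
    have e1 : (∫ U in Ioo (0:ℝ) 1,
        U ^ 2 * Φ 0 (rc' (μ * U)) (rc (μ * U) / (μ * U)) (rc (μ * U) / (μ * U))) =
        Gi μ / μ ^ 3 := by
      rw [← integral_Ioc_eq_integral_Ioo, ← intervalIntegral.integral_of_le zero_le_one]
      have : ∀ U : ℝ, U ^ 2 * Φ 0 (rc' (μ * U)) (rc (μ * U) / (μ * U)) (rc (μ * U) / (μ * U)) =
          (μ ^ 2)⁻¹ * g (μ * U) := by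
        intro U
        simp only [hg]; field_simp
      simp_rw [this]
      rw [intervalIntegral.integral_const_mul, intervalIntegral.integral_comp_mul_left _ hμ.ne']
      simp only [mul_zero, mul_one, smul_eq_mul, hGi]
      field_simp
    have e2 : (∫ U in Ioo (0:ℝ) 1, U ^ 2 * Φ 0 ℓ ℓ ℓ) = Φ 0 ℓ ℓ ℓ / 3 := by
      rw [← integral_Ioc_eq_integral_Ioo, ← intervalIntegral.integral_of_le zero_le_one,
        intervalIntegral.integral_mul_const, integral_pow]
      norm_num; ring
    rwa [e1, e2] at hstrict
  obtain ⟨L, hL1, hL2⟩ := exists_between hstrict2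
  set F : ℝ × ℝ → ℝ := fun p => (Gi p.1 + C * p.2 * Hi p.1) / p.1 ^ 3 + K * p.2 ^ 2 with hF
  have hFc : ContinuousAt F (μ, 0) := by
    have c1 : ContinuousAt (fun p : ℝ × ℝ => Gi p.1) (μ, 0) :=
      ContinuousAt.comp (f := Prod.fst) (x := ((μ, 0) : ℝ × ℝ)) hGc continuousAt_fst
    have c2 : ContinuousAt (fun p : ℝ × ℝ => Hi p.1) (μ, 0) :=
      ContinuousAt.comp (f := Prod.fst) (x := ((μ, 0) : ℝ × ℝ)) hHc continuousAt_fst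
    have c3 : ContinuousAt (fun p : ℝ × ℝ => p.1 ^ 3) (μ, 0) := by fun_prop
    have c4 : ContinuousAt (fun p : ℝ × ℝ => C * p.2) (μ, 0) := by fun_prop
    have c5 : ContinuousAt (fun p : ℝ × ℝ => K * p.2 ^ 2) (μ, 0) := by fun_prop
    exact ((c1.add (c4.mul c2)).div c3 (by positivity)).add c5
  have hFev : ∀ᶠ p in nhds ((μ, 0) : ℝ × ℝ), F p < L := by
    apply hFc.eventually (gt_mem_nhds _)
    simpa [hF] using hL1
  rw [nhds_prod_eq, eventually_prod_iff] at hFev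
  obtain ⟨pa, hpa, pb, hpb, hpab⟩ := hFev
  obtain ⟨l, u, hlu, hluI⟩ := mem_nhds_iff_exists_Ioo_subset.1 hpa
  set a := (max l 0 + μ) / 2 with ha
  set b := (u + μ) / 2 with hb
  have hmaxl : max l 0 < μ := max_lt hlu.1 hμ
  have hl_le : l ≤ max l 0 := le_max_left _ _
  have h0_le : 0 ≤ max l 0 := le_max_right _ _
  have hau : a < μ := by simp only [ha]; linarith
  have ha0 : 0 < a := by simp only [ha]; linarith
  have hla : l < a := by simp only [ha]; linarith
  have hub : b < u := by simp only [hb]; linarith [hlu.2]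
  have hμb : μ < b := by simp only [hb]; linarith [hlu.2]
  have hqa : ℓ < rc a / a := by
    have := hratiodec (mem_Ioi.2 ha0) (mem_Ioi.2 hμ) hau
    simpa [hμℓ] using this
  have hqb : rc b / b < ℓ := by
    have := hratiodec (mem_Ioi.2 hμ) (mem_Ioi.2 (hμ.trans hμb)) hμb
    simpa [hμℓ] using this
  -- behaviour of the integrand of `r` near the origin
  have hΦlim : Tendsto (fun R => Φ R (r' R) (r R / R) (r R / R)) (nhdsWithin 0 (Ioi 0))
      (nhds (Φ 0 ℓ ℓ ℓ)) := by
    have h1 := hΦcont (0, ℓ, ℓ, ℓ) ⟨by simp, hℓ, hℓ, hℓ⟩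
    have h2 : Tendsto (fun R : ℝ => (R, r' R, r R / R, r R / R)) (nhdsWithin 0 (Ioi 0))
        (nhdsWithin (0, ℓ, ℓ, ℓ) (Icc 0 1 ×ˢ Ioi 0 ×ˢ Ioi 0 ×ˢ Ioi 0)) := by
      refine tendsto_nhdsWithin_iff.2 ⟨?_, ?_⟩
      · exact (tendsto_id.mono_left nhdsWithin_le_nhds).prodMk_nhds
          (hr'lim.prodMk_nhds (hstrainlim.prodMk_nhds hstrainlim))
      · filter_upwards [hr'lim.eventually (lt_mem_nhds hℓ),
          hstrainlim.eventually (lt_mem_nhds hℓ), self_mem_nhdsWithin,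
          mem_nhdsWithin_of_mem_nhds (gt_mem_nhds (zero_lt_one (α := ℝ)))] with R q1 q2 q3 q4
        have q3 : 0 < R := q3
        exact ⟨⟨q3.le, le_of_lt q4⟩, q1, q2, q2⟩
    exact h1.tendsto.comp h2
  have hev : ∀ᶠ R in nhdsWithin (0:ℝ) (Ioi 0),
      3 * L < Φ R (r' R) (r R / R) (r R / R) ∧ rc b / b < r R / R ∧ r R / R < rc a / a ∧
      pb R ∧ R < 1 := by
    filter_upwards [hΦlim.eventually (lt_mem_nhds (show 3 * L < _ by linarith)),
      hstrainlim.eventually (lt_mem_nhds hqb), hstrainlim.eventually (gt_mem_nhds hqa),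
      hpb.filter_mono nhdsWithin_le_nhds,
      mem_nhdsWithin_of_mem_nhds (gt_mem_nhds (zero_lt_one (α := ℝ)))] with R q1 q2 q3 q4 q5
    exact ⟨q1, q2, q3, q4, q5⟩
  obtain ⟨e, he, hesub⟩ := mem_nhdsGT_iff_exists_Ioo_subset.1 hev
  have he : 0 < e := he
  set ε := e / 2 with hεdef
  have hε0 : 0 < ε := by positivity
  have hεe : ε < e := by simp only [hεdef]; linarith
  obtain ⟨_, q2, q3, q4, hε1⟩ := hesub ⟨hε0, hεe⟩
  obtain ⟨s, hsI, hseq⟩ := intermediate_value_Icc' (hau.trans hμb).le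
    (hratiocont.mono (fun x hx => ha0.trans_le hx.1)) ⟨q2.le, q3.le⟩
  simp only at hseq
  have hs0 : 0 < s := ha0.trans_le hsI.1
  have hps : pa s := hluI ⟨hla.trans_le hsI.1, hsI.2.trans_lt hub⟩
  have hFs : F (s, ε) < L := hpab hps q4
  have hδ : 0 < ε / s := by positivity
  obtain ⟨rhat, rhat', hA, hge, hlow, hE⟩ := h_con Φ ΦR Φt hΦnn hΦcont hΦRd hΦtnn C hC hΦRbdd
    lam r r' hadm rc rc' hrc'pos c hc hrcz hratiodec hrcE (ε / s) s ε hδ hs0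
    (by field_simp) hε1 hseq
  refine ⟨rhat, rhat', hA, ?_⟩
  have hsplit : Ioo (0:ℝ) 1 = Ioo 0 ε ∪ Ico ε 1 := (Ioo_union_Ico_eq_Ioo hε0 hε1.le).symm
  have hs1 : Ioo 0 ε ⊆ Ioo (0:ℝ) 1 := hsplit ▸ subset_union_left
  have hs2 : Ico ε 1 ⊆ Ioo (0:ℝ) 1 := hsplit ▸ subset_union_right
  have hdisj : Disjoint (Ioo 0 ε) (Ico ε 1) := by
    rw [Set.disjoint_left]
    intro x hx hx2
    exact absurd hx.2 (not_lt.2 hx2.1)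
  have hsp : ∀ f : ℝ → ℝ, IntegrableOn f (Ioo (0:ℝ) 1) →
      ∫ x in Ioo (0:ℝ) 1, f x = (∫ x in Ioo 0 ε, f x) + ∫ x in Ico ε 1, f x := by
    intro f hf
    rw [hsplit]
    exact setIntegral_union hdisj measurableSet_Ico (hf.mono_set hs1) (hf.mono_set hs2)
  have hrhatc : ContinuousOn rhat (Icc 0 1) := by
    have := intervalIntegral.continuousOn_primitive_interval' hA.1 left_mem_uIcc
    rw [uIcc_of_le zero_le_one] at this
    exact (continuousOn_const.add this).congr hA.2.1
  have hmrhat : ∀ R ∈ Ioo (0:ℝ) 1, m * R ≤ rhat R := by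
    intro R hR
    rcases lt_or_ge R ε with h1 | h1
    · refine le_trans ?_ (hlow R ⟨hR.1, h1⟩)
      have := hmr ε ⟨hε0, hε1⟩
      have h3 : m ≤ r ε / ε := by rwa [le_div_iff₀ hε0]
      exact mul_le_mul_of_nonneg_right h3 hR.1.le
    · rw [(hge R h1).1]; exact hmr R hR
  obtain ⟨P1, P2⟩ := h_pot ρ0 k0 k1 hk0 hρmeas hρ r hrcont m hm hmr
  obtain ⟨P3, P4⟩ := h_pot ρ0 k0 k1 hk0 hρmeas hρ rhat hrhatc m hm hmrhat
  have hA6 := hA.2.2.2.2.2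
  unfold Ifun Imec Ipot
  rw [hsp _ hA6, hsp _ ha6, hsp _ P2, hsp _ P4]
  have E1 : ∫ x in Ico ε 1, Φ x (rhat' x) (rhat x / x) (rhat x / x) * x ^ 2 =
      ∫ x in Ico ε 1, Φ x (r' x) (r x / x) (r x / x) * x ^ 2 := by
    apply setIntegral_congr_fun measurableSet_Ico
    intro x hx
    simp only [(hge x hx.1).1, (hge x hx.1).2]
  have E2 : ∫ x in Ico ε 1, ρ0 x * Mfun ρ0 x * (rhat x)⁻¹ * x ^ 2 =
      ∫ x in Ico ε 1, ρ0 x * Mfun ρ0 x * (r x)⁻¹ * x ^ 2 := by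
    apply setIntegral_congr_fun measurableSet_Ico
    intro x hx
    simp only [(hge x hx.1).1]
  have E3 : 0 ≤ ∫ x in Ioo 0 ε, ρ0 x * Mfun ρ0 x * (rhat x)⁻¹ * x ^ 2 :=
    setIntegral_nonneg measurableSet_Ioo (fun x hx => (P3 x (hs1 hx)).1)
  have hpw : ∀ (A : ℝ) (n : ℕ), IntegrableOn (fun x : ℝ => A * x ^ n) (Ioo 0 ε) := by
    intro A n
    exact ((by fun_prop : Continuous (fun x : ℝ => A * x ^ n)).continuousOn.integrableOn_Icc
      (a := 0) (b := ε)).mono_set Ioo_subset_Icc_self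
  have hpi : ∀ (A : ℝ) (n : ℕ), ∫ x in Ioo 0 ε, A * x ^ n = A * (ε ^ (n + 1) / (n + 1)) := by
    intro A n
    rw [← integral_Ioc_eq_integral_Ioo, ← intervalIntegral.integral_of_le hε0.le,
      intervalIntegral.integral_const_mul, integral_pow]
    simp
  have hK0 : 0 ≤ K := by
    rw [hK]
    have := (P1 ε ⟨hε0, hε1⟩)
    have h2 : 0 ≤ K * ε ^ 4 := this.1.trans this.2
    by_contra hcon
    have : K * ε ^ 4 < 0 := mul_neg_of_neg_of_pos (not_le.1 hcon) (by positivity)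
    linarith
  have E4 : ∫ x in Ioo 0 ε, ρ0 x * Mfun ρ0 x * (r x)⁻¹ * x ^ 2 ≤ K * ε ^ 5 := by
    have := setIntegral_mono_on (P2.mono_set hs1) (hpw K 4) measurableSet_Ioo
      (fun x hx => (P1 x (hs1 hx)).2)
    refine this.trans ?_
    rw [hpi]
    have h5 : 0 ≤ K * ε ^ 5 := by positivity
    push_cast
    norm_num
    linarith
  have E5 : L * ε ^ 3 ≤ ∫ x in Ioo 0 ε, Φ x (r' x) (r x / x) (r x / x) * x ^ 2 := by
    have := setIntegral_mono_on (hpw (3 * L) 2) (ha6.mono_set hs1) measurableSet_Ioo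
      (fun x hx => mul_le_mul_of_nonneg_right (hesub ⟨hx.1, hx.2.trans hεe⟩).1.le (sq_nonneg x))
    rw [hpi] at this
    push_cast at this
    norm_num at this
    linarith
  have E6 : (ε / s) ^ 3 * (Gi s + C * ε * Hi s) + K * ε ^ 5 = ε ^ 3 * F (s, ε) := by
    simp only [hF]
    field_simp
  have E7 : ε ^ 3 * F (s, ε) < ε ^ 3 * L := by gcongr
  have E8 : ∫ R in Ioo 0 ε, Φ R (rhat' R) (rhat R / R) (rhat R / R) * R ^ 2 ≤
      (ε / s) ^ 3 * (Gi s + C * ε * Hi s) := hE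
  rw [E1, E2]
  linarith
end
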